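/- arXiv:math/0604519 — 2 statements merged into one kernel-verified Lean document; each statement's English description precedes it below -/
import Mathlib

section
/- Theorem 1.1 (main theorem, pointwise form over $\mathbb{C}$): The family $(T_x)_{x\in W_+}$ is a basis of $A_{u+}$ as a complex vector space if and only if for every 3-element subset $\Delta=\{i,j,p\}\subseteq I$, the family $(T^{\Delta}_x)_{x\in (W_\Delta)_+}$ is a basis of the algebra $A^{\Delta}_{u+}$, where $W_\Delta$ is the parabolic subgroup of $W$ generated by $s_i,s_j,s_p$, and $A^{\Delta}_{u+}$ and $T^{\Delta}_x$ are constructed by the same recipe from the restricted Coxeter matrix $(m_{ij})_{i,j\in\Delta}$ and the restricted parameters $(t_{ij,k})_{i,j\in\Delta}$, using reduced expressions in $W_\Delta$. (By the main result of [ER], the condition for $\Delta$ with $W_\Delta$ infinite holds automatically, so the intersection may be taken over those $\Delta$ with $W_\Delta$ finite.) -/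
/-!
Theorem 1.1 (main theorem, pointwise over `ℂ`). Let `M` be a Coxeter matrix on a finite set
`I` (Mathlib convention: `M i j = 0` encodes `m_{ij} = ∞`), `cs : CoxeterSystem M W`. Given
nonzero parameters `t i j k` (`i ≠ j`, `m_{ij} < ∞`, `k` mod `m_{ij}`) with
`t j i k = (t i j (-k))⁻¹`, the algebra `A_{u+}` is the quotient of the free `ℂ`-algebra on
generators `a_{ij}` (`i ≠ j`) by the relations `a_{ij}a_{ji} = 1`, `a_{ij}a_{jp}a_{pi} = 1`
and `∏_{k mod m_{ij}} (a_{ij} - t_{ij,k}) = 0` (`m_{ij} < ∞`). Choosing a reduced expression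
for each `x ∈ W₊` gives elements `T_x = a_{i₁i₂} a_{i₃i₄} ⋯`. Then `(T_x)_{x ∈ W₊}` is a
basis of `A_{u+}` iff for every 3-element subset `Δ = {i,j,p} ⊆ I` the analogous family
(built from the restricted Coxeter matrix, the restricted parameters and reduced expressions
in the Coxeter group of the restricted matrix) is a basis of the rank-3 algebra `A_{u+}^Δ`.
-/

/-!
Write the elements of `A_{u+}` as combinations of words of even length, the word
`i₁ i₂ i₃ i₄ …` standing for `a_{i₁i₂} a_{i₃i₄} ⋯`. With `a_{ii} = 1`, the first two families of
relations say exactly that a double letter may be cancelled anywhere in a word. So a linear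
functional on `A_{u+}` is the same as a function on words of even length that is invariant under
such cancellations and satisfies, inside any word, the polynomial relation for each pair `i, j`
(with `i` and `j` interchanged at odd positions). After multiplication by the inverse of a braid
word, this relation connects the two alternating words of length `m_{ij}`, with nonzero
coefficients, and shorter alternating words. Functions with these properties are called solutions
(`Sol`), and are considered on words of all lengths up to a bound `n`.

*Rigidity.* By the exchange condition and the solution of the word problem, a solution is
determined by its values on one reduced word for each element (`Sol.vanish`, `Sol.eq_zero`). Hence
the `T_x` always span (`span_pairProd`), and they are a basis iff solutions with arbitrary
values on the chosen reduced words of the even elements exist (`isFlatAt_iff`). Translation by a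
letter allows odd elements and odd positions (`presc_of_prescEven`, `Presc.shift`).

*From rank three to arbitrary rank.* Solutions are extended from words of length `n` to words of
length `n + 1`. At an element `x` of length `n + 1` one fixes a left descent `i₀`, prescribes the
values on words of `x` starting with `i₀`, and defines the values on words starting with another
descent `j` by the relation for `i₀, j`. The relation for two further descents `j, k` is then a
consequence (`braidSum_third`): write `x = u d` with `u` in the parabolic subgroup `W_Δ`,
`Δ = {i₀, j, k}`, with lengths adding up and `j, k, i₀` descents of `u`. By hypothesis there is a
solution for `W_Δ` with the given values on words starting with `i₀`; by rigidity it agrees with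
the function at hand on words starting with `j` or `k`, so the function satisfies the relation for
`j, k` as well (`exists_local`). The local extensions at the elements `x` do not interfere and glue
(`ext_step`), because all relations of length `n + 1` follow from those between reduced words
(`PreSol.mem_succ`). The limit over `n` is the required solution.

*From arbitrary rank to rank three.* Reduced words in `W_Δ` are reduced in `W`, and distinct
elements stay distinct (`parabolic_isReduced_map`, `parabolic_wordProd_injective`), so solutions
with prescribed values for `W` restrict to such solutions for `W_Δ` (`prescEven_parabolic`). The
reducedness of alternating words of length at most `m_{ij}` rests on the order of `sᵢ sⱼ` being
`m_{ij}`, which is read off from the geometric representation (`simple_mul_simple_pow_ne_one`).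
-/

noncomputable section

namespace Stmt0

open Polynomial

variable {I : Type*} [DecidableEq I]

/-- Index type for the generators `a_{ij}`, `i ≠ j`. -/
abbrev Gens (I : Type*) := {p : I × I // p.1 ≠ p.2}

/-- The generator `a_{ij}` of the free algebra. -/
def gen (i j : I) (h : i ≠ j) : FreeAlgebra ℂ (Gens I) := FreeAlgebra.ι ℂ ⟨(i, j), h⟩

/-- The defining relations of `A_{u+}`. -/
inductive Rel (M : CoxeterMatrix I) (t : I → I → ℕ → ℂ) :
    FreeAlgebra ℂ (Gens I) → FreeAlgebra ℂ (Gens I) → Prop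
  | inv (i j : I) (h : i ≠ j) : Rel M t (gen i j h * gen j i h.symm) 1
  | triangle (i j p : I) (hij : i ≠ j) (hjp : j ≠ p) (hpi : p ≠ i) :
      Rel M t (gen i j hij * gen j p hjp * gen p i hpi) 1
  | poly (i j : I) (h : i ≠ j) (hm : M i j ≠ 0) :
      Rel M t
        (aeval (gen i j h) (∏ k ∈ Finset.range (M i j), (X - C (t i j k)))) 0

/-- The algebra `A_{u+}`. -/
abbrev Alg (M : CoxeterMatrix I) (t : I → I → ℕ → ℂ) : Type _ := RingQuot (Rel M t)

/-- The quotient map. -/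
def mk (M : CoxeterMatrix I) (t : I → I → ℕ → ℂ) :
    FreeAlgebra ℂ (Gens I) →ₐ[ℂ] Alg M t :=
  RingQuot.mkAlgHom ℂ _

/-- The product `a_{i₁i₂} a_{i₃i₄} ⋯` over consecutive pairs of a list `[i₁, i₂, i₃, i₄, …]`
(junk value on lists of odd length, which does not occur for reduced words of even elements;
the `dite` is always in its `true` branch since consecutive letters of a reduced word are
distinct). -/
def pairProd (M : CoxeterMatrix I) (t : I → I → ℕ → ℂ) : List I → Alg M t
  | [] => 1
  | [_] => 0
  | i :: j :: rest =>
      (if h : i ≠ j then mk M t (gen i j h) else 0) * pairProd M t rest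

/-- The statement that the family `(T_x)_{x ∈ W₊}`, built from a choice `w` of reduced
expressions, is a basis of `A_{u+}` as a complex vector space. -/
def IsFlatAt {W : Type*} [Group W] (M : CoxeterMatrix I) (cs : CoxeterSystem M W)
    (t : I → I → ℕ → ℂ) (w : W → List I) : Prop :=
  LinearIndependent ℂ
      (fun x : {x : W // Even (cs.length x)} => pairProd M t (w x)) ∧
    Submodule.span ℂ
      (Set.range fun x : {x : W // Even (cs.length x)} => pairProd M t (w x)) = ⊤

/-- Restriction of a Coxeter matrix to a subset of the index set. -/
def restrict (M : CoxeterMatrix I) (S : Set I) : CoxeterMatrix S where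
  M := fun a b => M a b
  isSymm := Matrix.IsSymm.ext fun a b => M.isSymm.apply a b
  diagonal := fun a => M.diagonal a
  off_diagonal := fun a b h => M.off_diagonal a b fun hab => h (Subtype.ext hab)

end Stmt0

/-! ### The exchange condition and the order of a product of two simple reflections -/

namespace CoxAlg

section Exchange
variable {B W : Type*} [Group W] {M : CoxeterMatrix B} (cs : CoxeterSystem M W)

open Classical in
/-- The involution `(t, e) ↦ (sᵢ t sᵢ, e + [t = sᵢ])` of `W × ℤ/2`. -/
def signedConj (i : B) : Function.End (W × ZMod 2) := fun p =>
  (cs.simple i * p.1 * cs.simple i, p.2 + if p.1 = cs.simple i then 1 else 0)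

open Classical in
theorem signedConj_pow (i j : B) (p : ℕ) (t : W) (e : ZMod 2) :
    ((signedConj cs i * signedConj cs j) ^ p) (t, e) =
      ((cs.simple i * cs.simple j) ^ p * t * ((cs.simple i * cs.simple j) ^ p)⁻¹,
        e + ∑ q ∈ Finset.range (2 * p),
          if t = cs.simple j * (cs.simple i * cs.simple j) ^ q then 1 else 0) := by
  induction p with
  | zero => simp; rfl
  | succ p ih =>
    rw [pow_succ']
    change (signedConj cs i * signedConj cs j)
      (((signedConj cs i * signedConj cs j) ^ p) (t, e)) = _
    rw [ih]
    change signedConj cs i (signedConj cs j _) = _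
    set a := cs.simple i * cs.simple j with ha
    have hja : ∀ q : ℕ, cs.simple j * a ^ q = (a ^ q)⁻¹ * cs.simple j := by
      intro q
      have h1 : cs.simple j * a * cs.simple j = a⁻¹ := by simp [ha, mul_assoc]
      have h2 : cs.simple j * a * (cs.simple j)⁻¹ = a⁻¹ := by simpa using h1
      have h3 := congrArg (· ^ q) h2
      simp only [conj_pow] at h3
      rw [← inv_pow, ← h3]; simp [mul_assoc]
    have e1 : a ^ p * t * (a ^ p)⁻¹ = cs.simple j ↔ t = cs.simple j * a ^ (2 * p) := by
      have h4 : (a ^ p)⁻¹ * ((a ^ p)⁻¹ * cs.simple j) = cs.simple j * a ^ (2 * p) := by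
        rw [← hja, ← mul_assoc, ← hja, mul_assoc, ← pow_add, two_mul]
      rw [mul_inv_eq_iff_eq_mul, hja, ← eq_inv_mul_iff_mul_eq, h4]
    have e2 : cs.simple j * (a ^ p * t * (a ^ p)⁻¹) * cs.simple j = cs.simple i ↔
        t = cs.simple j * a ^ (2 * p + 1) := by
      have : cs.simple i = a * cs.simple j := by simp [ha]
      rw [this, mul_left_inj, ← eq_inv_mul_iff_mul_eq, mul_inv_eq_iff_eq_mul,
        ← eq_inv_mul_iff_mul_eq, cs.inv_simple]
      have h4 : (a ^ p)⁻¹ * (cs.simple j * a * a ^ p) = cs.simple j * a ^ (2 * p + 1) := by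
        rw [mul_assoc (cs.simple j), ← pow_succ', ← mul_assoc, ← hja, mul_assoc, ← pow_add]
        congr 2; ring
      rw [h4]
    simp only [signedConj]
    rw [show 2 * (p + 1) = 2 * p + 1 + 1 by ring, Finset.sum_range_succ, Finset.sum_range_succ]
    simp only [e1, e2]
    refine Prod.ext ?_ ?_
    · simp only
      rw [pow_succ']
      simp [ha, mul_assoc]
    · simp only; ring

open Classical in
theorem signedConj_liftable : M.IsLiftable (signedConj cs) := by
  intro i j
  funext ⟨t, e⟩
  rw [signedConj_pow, two_mul, Finset.sum_range_add]
  simp only [pow_add, cs.simple_mul_simple_pow, one_mul, CharTwo.add_self_eq_zero]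
  simp
  rfl

/-- The action of `W` on `W × ℤ/2` by signed conjugation, which counts reflections along words. -/
def signedAction : W →* Function.End (W × ZMod 2) :=
  cs.lift ⟨signedConj cs, signedConj_liftable cs⟩

open Classical in
theorem signedAction_wordProd (ω : List B) (t : W) (e : ZMod 2) :
    signedAction cs (cs.wordProd ω) (t, e) =
      (cs.wordProd ω * t * (cs.wordProd ω)⁻¹, e + ((cs.rightInvSeq ω).count t : ℕ)) := by
  induction ω with
  | nil => simp [CoxeterSystem.rightInvSeq]; rfl
  | cons i ω ih =>
    rw [cs.wordProd_cons, map_mul]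
    change signedAction cs (cs.simple i) (signedAction cs (cs.wordProd ω) (t, e)) = _
    rw [ih]
    have : signedAction cs (cs.simple i) = signedConj cs i :=
      cs.lift_apply_simple (signedConj_liftable cs) i
    rw [this]
    simp only [signedConj, CoxeterSystem.rightInvSeq, List.count_cons]
    refine Prod.ext ?_ ?_
    · simp [mul_assoc]
    · have : (cs.wordProd ω * t * (cs.wordProd ω)⁻¹ = cs.simple i) ↔
          (cs.wordProd ω)⁻¹ * cs.simple i * cs.wordProd ω = t := by
        constructor
        · intro h; rw [← h]; group
        · intro h; rw [← h]; group
      simp only [this, beq_iff_eq]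
      push_cast
      split_ifs <;> simp [add_assoc]

theorem exchange_right (ω : List B) (i : B) (h : cs.IsRightDescent (cs.wordProd ω) i) :
    ∃ k < ω.length, cs.wordProd ω * cs.simple i = cs.wordProd (ω.eraseIdx k) := by
  classical
  obtain ⟨ω', hω', hw⟩ := cs.exists_isReduced (cs.wordProd ω * cs.simple i)
  have hprod : cs.wordProd (ω'.concat i) = cs.wordProd ω := by
    rw [cs.wordProd_concat, ← hw]; simp
  have hred : cs.IsReduced (ω'.concat i) := by
    unfold CoxeterSystem.IsReduced
    rw [hprod]
    have := cs.isRightDescent_iff.1 h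
    rw [hw, hω'.eq] at this
    simp [← this]
  have hcount : (cs.rightInvSeq (ω'.concat i)).count (cs.simple i) = 1 := by
    apply List.count_eq_one_of_mem hred.nodup_rightInvSeq
    rw [cs.rightInvSeq_concat]; simp
  have h1 := signedAction_wordProd cs (ω'.concat i) (cs.simple i) 0
  have h2 := signedAction_wordProd cs ω (cs.simple i) 0
  rw [hprod, h2, hcount] at h1
  have h3 := congrArg Prod.snd h1
  simp only [zero_add] at h3
  have hmem : cs.simple i ∈ cs.rightInvSeq ω := by
    by_contra hn
    rw [List.count_eq_zero_of_not_mem hn] at h3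
    simp at h3
  obtain ⟨k, hk, hk'⟩ := List.getElem_of_mem hmem
  refine ⟨k, by simpa using hk, ?_⟩
  rw [← cs.wordProd_mul_getD_rightInvSeq, List.getD_eq_getElem _ _ hk, hk']

/-- The exchange condition. -/
theorem exchange (ω : List B) (i : B) (h : cs.IsLeftDescent (cs.wordProd ω) i) :
    ∃ k < ω.length, cs.simple i * cs.wordProd ω = cs.wordProd (ω.eraseIdx k) := by
  have h' : cs.IsRightDescent (cs.wordProd ω.reverse) i := by
    rw [cs.wordProd_reverse, ← cs.isLeftDescent_inv_iff, inv_inv]; exact h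
  obtain ⟨k, hk, hk'⟩ := exchange_right cs ω.reverse i h'
  rw [List.length_reverse] at hk
  have := congrArg (·⁻¹) hk'
  simp only [cs.wordProd_reverse, mul_inv_rev, inv_inv, cs.inv_simple] at this
  refine ⟨ω.length - 1 - k, by omega, ?_⟩
  rw [this, ← cs.wordProd_reverse]
  congr 1
  rw [List.eraseIdx_eq_take_drop_succ, List.eraseIdx_eq_take_drop_succ, List.reverse_append,
    List.drop_reverse, List.take_reverse, List.reverse_reverse, List.reverse_reverse]
  congr 2 <;> omega

end Exchange

section Order
open Real Polynomial.Chebyshev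
variable {B : Type*} (M : CoxeterMatrix B)

/-- The `i`-th coroot of the geometric representation on `B →₀ ℝ`: its pairing with the `j`-th
simple root is `-2 cos (π / m_{ij})`. For `m_{ij} = ∞`, encoded as `0`, division by zero
yields the required value `-2`. -/
def coroot (i : B) : Module.Dual ℝ (B →₀ ℝ) :=
  Finsupp.linearCombination ℝ (fun j => -2 * cos (π / M i j))

theorem coroot_single (i j : B) :
    coroot M i (Finsupp.single j 1) = -2 * cos (π / M i j) := by
  simp [coroot]

theorem coroot_self (i : B) : coroot M i (Finsupp.single i 1) = 2 := by
  rw [coroot_single]; simp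

/-- The simple reflections of the geometric representation. -/
def geomRefl (i : B) : (B →₀ ℝ) ≃ₗ[ℝ] (B →₀ ℝ) := Module.reflection (coroot_self M i)

theorem coroot_mul_coroot (i j : B) :
    2 * cos (2 * π / M i j) = coroot M i (Finsupp.single j 1) * coroot M j (Finsupp.single i 1) - 2 := by
  rw [coroot_single, coroot_single, M.symmetric j i,
    show 2 * π / (M i j : ℝ) = 2 * (π / M i j) by ring, cos_two_mul]
  ring

theorem geomRefl_liftable : M.IsLiftable (geomRefl M) := by
  intro i j
  rcases eq_or_ne i j with rfl | hij
  · simp only [M.diagonal, pow_one]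
    ext1 v
    exact Module.involutive_reflection (coroot_self M i) v
  have hm1 : M i j ≠ 1 := M.off_diagonal i j hij
  rcases Nat.eq_zero_or_pos (M i j) with h0 | hpos
  · rw [h0, pow_zero]
  apply LinearEquiv.ext
  intro z
  rcases eq_or_ne (M i j) 2 with h2 | h2
  · have c1 : coroot M i (Finsupp.single j 1) = 0 := by simp [coroot_single, h2]
    have c2 : coroot M j (Finsupp.single i 1) = 0 := by
      simp [coroot_single, M.symmetric j i, h2]
    rw [h2, pow_two]
    simp only [geomRefl, LinearEquiv.mul_apply, Module.reflection_apply, map_sub, map_smul,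
      coroot_self, c1, c2, LinearEquiv.coe_one, id_eq]
    match_scalars <;> simp <;> ring
  have hsin : sin (2 * π / M i j) ≠ 0 := by
    apply ne_of_gt
    have hm3 : (3 : ℝ) ≤ M i j := by exact_mod_cast (show 3 ≤ M i j by omega)
    apply sin_pos_of_pos_of_lt_pi
    · positivity
    · rw [div_lt_iff₀ (by positivity)]; nlinarith [pi_pos]
  have key := Module.reflection_mul_reflection_pow_apply (coroot_self M i) (coroot_self M j)
    (M i j) z (2 * cos (2 * π / M i j)) (coroot_mul_coroot M i j)
  have hS := fun n : ℤ => S_two_mul_real_cos (2 * π / M i j) n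
  have hmR : (M i j : ℝ) ≠ 0 := by positivity
  rcases Nat.even_or_odd' (M i j) with ⟨r, hr | hr⟩
  · have e1 : ((M i j : ℤ) - 2) / 2 = r - 1 := by rw [hr]; push_cast; omega
    have e2 : ((M i j : ℤ) - 1) / 2 = r - 1 := by rw [hr]; push_cast; omega
    have z1 : (S ℝ (r - 1)).eval (2 * cos (2 * π / M i j)) = 0 := by
      have h := hS (r - 1)
      have : (((r - 1 : ℤ) : ℝ) + 1) * (2 * π / M i j) = π := by
        rw [hr]; push_cast
        have : (r : ℝ) ≠ 0 := by intro h; rw [hr] at hmR; simp [h] at hmR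
        field_simp; ring
      rw [this, sin_pi] at h
      exact (mul_eq_zero.1 h).resolve_right hsin
    rw [e1, e2, z1] at key
    simpa [geomRefl] using key
  · have e1 : ((M i j : ℤ) - 2) / 2 = r - 1 := by rw [hr]; push_cast; omega
    have e2 : ((M i j : ℤ) - 1) / 2 = r := by rw [hr]; push_cast; omega
    have e3 : ((M i j : ℤ) - 3) / 2 = r - 1 := by rw [hr]; push_cast; omega
    have e4 : ((M i j : ℤ)) / 2 = r := by rw [hr]; push_cast; omega
    have z1 : (S ℝ r).eval (2 * cos (2 * π / M i j)) +
        (S ℝ (r - 1)).eval (2 * cos (2 * π / M i j)) = 0 := by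
      have h1 := hS r
      have h2 := hS (r - 1)
      have h3 : (((r - 1 : ℤ) : ℝ) + 1) * (2 * π / M i j) =
          2 * π - (((r : ℤ) : ℝ) + 1) * (2 * π / M i j) := by
        rw [hr] at hmR ⊢; push_cast at hmR ⊢; field_simp; ring
      rw [h3, sin_two_pi_sub] at h2
      have : ((S ℝ r).eval (2 * cos (2 * π / M i j)) +
        (S ℝ (r - 1)).eval (2 * cos (2 * π / M i j))) * sin (2 * π / M i j) = 0 := by
        rw [add_mul, h1, h2]; ring
      exact (mul_eq_zero.1 this).resolve_right hsin
    rw [e1, e2, e3, e4, z1] at key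
    simpa [geomRefl] using key

/-- The product of two distinct simple reflections has order `m_{ij}` (infinite if
`m_{ij} = ∞`), as seen in the geometric representation. -/
theorem simple_mul_simple_pow_ne_one {W : Type*} [Group W] {M : CoxeterMatrix B}
    (cs : CoxeterSystem M W) {i j : B} (hij : i ≠ j) {k : ℕ} (hk : 0 < k)
    (hkm : M i j = 0 ∨ k < M i j) : (cs.simple i * cs.simple j) ^ k ≠ 1 := by
  intro h
  have h1 := congrArg (cs.lift ⟨geomRefl M, geomRefl_liftable M⟩) h
  rw [map_pow, map_mul, cs.lift_apply_simple, cs.lift_apply_simple, map_one] at h1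
  have h2 := congrArg (fun F => F (Finsupp.single i (1 : ℝ))) h1
  have key := Module.reflection_mul_reflection_pow_apply_self (coroot_self M i)
    (coroot_self M j) k (2 * cos (2 * π / M i j)) (coroot_mul_coroot M i j)
  have h3 := key.symm.trans h2
  have hi := congrArg (fun F => F i) h3
  have hj := congrArg (fun F => F j) h3
  simp [hij, hij.symm, coroot_single] at hi hj
  rcases hkm with h0 | hlt
  · have hMji : M j i = 0 := by rw [M.symmetric]; exact h0
    simp [h0, hMji, S_eval_two] at hj
    omega
  have hmR : (0 : ℝ) < M i j := by exact_mod_cast (by omega : 0 < M i j)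
  have hm1 : M i j ≠ 1 := M.off_diagonal i j hij
  have hm2 : 2 ≤ M i j := by omega
  rcases eq_or_ne (M i j) 2 with hm | hm
  · have : k = 1 := by omega
    subst this
    rw [hm] at hi
    norm_num at hi
  have hm3 : (3 : ℝ) ≤ M i j := by exact_mod_cast (show 3 ≤ M i j by omega)
  have hsin : sin (2 * π / M i j) ≠ 0 := by
    apply ne_of_gt
    apply sin_pos_of_pos_of_lt_pi
    · positivity
    · rw [div_lt_iff₀ (by positivity)]; nlinarith [pi_pos]
  have hcos : cos (π / M j i) ≠ 0 := by
    rw [M.symmetric j i]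
    apply ne_of_gt
    apply cos_pos_of_mem_Ioo
    constructor
    · have : 0 < π / M i j := by positivity
      linarith [pi_pos]
    · apply div_lt_div_of_pos_left pi_pos <;> linarith
  have hS := fun n : ℤ => S_two_mul_real_cos (2 * π / M i j) n
  have hz : (S ℝ ((k : ℤ) - 1)).eval (2 * cos (2 * π / M i j)) = 0 := by
    rcases hj with h | h
    · exact h
    · exact absurd h hcos
  rw [hz, add_zero] at hi
  have s1 := hS (k - 1)
  have s2 := hS k
  rw [hz, zero_mul] at s1
  rw [hi, one_mul] at s2
  push_cast at s1 s2
  rw [sub_add_cancel] at s1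
  -- `sin (kθ) = 0` and `sin ((k+1)θ) = sin θ` force `cos (kθ) = 1`, where `θ = 2π/m`.
  rw [add_mul, one_mul, sin_add, ← s1, zero_mul, zero_add] at s2
  have hc : cos (k * (2 * π / M i j)) = 1 := by
    have : (1 - cos (k * (2 * π / M i j))) * sin (2 * π / M i j) = 0 := by linarith
    have := (mul_eq_zero.1 this).resolve_right hsin
    linarith
  obtain ⟨n, hn⟩ := (cos_eq_one_iff _).1 hc
  have hn' : (n : ℝ) * M i j = k := by
    have hp := pi_pos
    field_simp at hn
    have : (2 * π) * ((n : ℝ) * M i j) = (2 * π) * k := by nlinarith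
    exact mul_left_cancel₀ (by positivity) this
  have hn2 : n * (M i j : ℤ) = k := by exact_mod_cast hn'
  have hn0 : 0 < n := by
    by_contra hneg
    have : n * (M i j : ℤ) ≤ 0 := mul_nonpos_of_nonpos_of_nonneg (by omega) (by omega)
    omega
  have : (M i j : ℤ) ≤ n * M i j := by nlinarith
  omega

end Order
end CoxAlg

/-! ### Alternating words and dihedral subgroups -/

namespace CoxAlg

/-- The alternating word `i j i j …` of length `n` that starts with `i`. -/
def altL {B : Type*} : B → B → ℕ → List B
  | _, _, 0 => []
  | i, j, n + 1 => i :: altL j i n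

section AltL
variable {B : Type*}

@[simp] theorem altL_zero (i j : B) : altL i j 0 = [] := rfl

theorem altL_succ (i j : B) (n : ℕ) : altL i j (n + 1) = i :: altL j i n := rfl

@[simp] theorem length_altL (i j : B) (n : ℕ) : (altL i j n).length = n := by
  induction n generalizing i j with
  | zero => rfl
  | succ n ih => simp [altL_succ, ih]

theorem altL_append_singleton (i j : B) (n : ℕ) :
    altL i j n ++ [if Even n then i else j] = altL i j (n + 1) := by
  induction n generalizing i j with
  | zero => simp [altL]
  | succ n ih =>
    rw [altL_succ, altL_succ, ← ih j i]
    simp only [List.cons_append, Nat.even_add_one]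
    split_ifs <;> simp_all

theorem altL_eq_alternatingWord (i j : B) (n : ℕ) :
    altL i j n = if Even n then CoxeterSystem.alternatingWord i j n
      else CoxeterSystem.alternatingWord j i n := by
  induction n generalizing i j with
  | zero => simp [CoxeterSystem.alternatingWord]
  | succ n ih =>
    rw [altL_succ, ih, CoxeterSystem.alternatingWord_succ', CoxeterSystem.alternatingWord_succ']
    simp only [Nat.even_add_one]
    split_ifs <;> simp_all

theorem mem_altL {i j x : B} {n : ℕ} (h : x ∈ altL i j n) : x = i ∨ x = j := by
  induction n generalizing i j with
  | zero => simp at h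
  | succ n ih =>
    rw [altL_succ, List.mem_cons] at h
    rcases h with h | h
    · exact Or.inl h
    · exact (ih h).symm

theorem map_altL {C : Type*} (φ : B → C) (i j : B) (n : ℕ) :
    (altL i j n).map φ = altL (φ i) (φ j) n := by
  induction n generalizing i j with
  | zero => rfl
  | succ n ih => simp [altL_succ, ih]

end AltL

section Words
variable {B W : Type*} [Group W] {M : CoxeterMatrix B} (cs : CoxeterSystem M W)

variable {cs} in
theorem isReduced_of_eq {l l' : List B} (h : cs.IsReduced l') (hp : cs.wordProd l = cs.wordProd l')
    (hl : l.length ≤ l'.length) : cs.IsReduced l := by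
  have := cs.length_wordProd_le l
  unfold CoxeterSystem.IsReduced at *
  rw [hp] at *
  omega

variable {cs} in
theorem length_eq_of_isReduced {l l' : List B} (h : cs.IsReduced l) (h' : cs.IsReduced l')
    (hp : cs.wordProd l = cs.wordProd l') : l.length = l'.length := by
  rw [← h.eq, ← h'.eq, hp]

theorem isReduced_nil : cs.IsReduced [] := by simp [CoxeterSystem.IsReduced]

theorem isReduced_cons_iff {i : B} {l : List B} :
    cs.IsReduced (i :: l) ↔ cs.IsReduced l ∧ ¬ cs.IsLeftDescent (cs.wordProd l) i := by
  constructor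
  · intro h
    have h1 : cs.IsReduced l := by simpa using h.drop 1
    refine ⟨h1, ?_⟩
    rw [cs.not_isLeftDescent_iff, ← cs.wordProd_cons, h.eq, h1.eq]; simp
  · rintro ⟨h1, h2⟩
    rw [cs.not_isLeftDescent_iff, ← cs.wordProd_cons, h1.eq] at h2
    simpa [CoxeterSystem.IsReduced] using h2

variable {cs} in
theorem IsReduced.append_left {l l' : List B} (h : cs.IsReduced (l ++ l')) : cs.IsReduced l := by
  simpa using h.take l.length

variable {cs} in
theorem IsReduced.append_right {l l' : List B} (h : cs.IsReduced (l ++ l')) :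
    cs.IsReduced l' := by
  simpa using h.drop l.length

variable {cs} in
theorem isLeftDescent_of_cons {i : B} {l : List B} (h : cs.IsReduced (i :: l)) :
    cs.IsLeftDescent (cs.wordProd (i :: l)) i := by
  rw [cs.isLeftDescent_iff, h.eq, cs.wordProd_cons, cs.simple_mul_simple_cancel_left,
    ((isReduced_cons_iff cs).1 h).1.eq]
  simp

theorem exists_cons_of_isLeftDescent {i : B} {w : W} (h : cs.IsLeftDescent w i) :
    ∃ l, cs.IsReduced (i :: l) ∧ cs.wordProd (i :: l) = w := by
  obtain ⟨l, hl, hw⟩ := cs.exists_isReduced (cs.simple i * w)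
  have hp : cs.wordProd (i :: l) = w := by
    rw [cs.wordProd_cons, ← hw, cs.simple_mul_simple_cancel_left]
  refine ⟨l, ?_, hp⟩
  rw [CoxeterSystem.IsReduced, hp, ← cs.isLeftDescent_iff.1 h, hw, hl.eq]; simp

theorem length_parity_eq {l l' : List B} (hp : cs.wordProd l = cs.wordProd l') :
    l.length % 2 = l'.length % 2 := by
  have key : ∀ l : List B, cs.length (cs.wordProd l) % 2 = l.length % 2 := by
    intro l
    induction l with
    | nil => simp
    | cons i l ih =>
      rw [cs.wordProd_cons, cs.length_mul_mod_two, cs.length_simple, Nat.add_mod, ih]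
      simp [Nat.add_comm]
  rw [← key, ← key, hp]

theorem wordProd_altL_braid (i j : B) :
    cs.wordProd (altL i j (M i j)) = cs.wordProd (altL j i (M i j)) := by
  have h := cs.wordProd_braidWord_eq i j
  unfold CoxeterSystem.braidWord at h
  rw [M.symmetric j i] at h
  rw [altL_eq_alternatingWord, altL_eq_alternatingWord]
  split_ifs
  · exact h
  · exact h.symm

theorem not_isReduced_altL {i j : B} {n : ℕ} (hM : M i j ≠ 0) (hn : M i j < n) :
    ¬ cs.IsReduced (altL i j n) := by
  rw [altL_eq_alternatingWord]
  split_ifs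
  · exact cs.not_isReduced_alternatingWord i j hM hn
  · refine cs.not_isReduced_alternatingWord j i ?_ ?_ <;> rw [M.symmetric j i] <;> assumption

theorem wordProd_altL_odd (i j : B) (k : ℕ) :
    cs.wordProd (altL i j (2 * k + 1)) = (cs.simple i * cs.simple j) ^ k * cs.simple i := by
  induction k with
  | zero => simp [altL]
  | succ k ih =>
    rw [show 2 * (k + 1) + 1 = (2 * k + 1) + 1 + 1 by ring, altL_succ, altL_succ,
      cs.wordProd_cons, cs.wordProd_cons, ih, pow_succ']
    simp [mul_assoc]

theorem take_altL (i j : B) (k n : ℕ) (h : k ≤ n) : (altL i j n).take k = altL i j k := by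
  induction n generalizing i j k with
  | zero => obtain rfl : k = 0 := by omega
            rfl
  | succ n ih =>
    cases k with
    | zero => rfl
    | succ k => rw [altL_succ, altL_succ, List.take_succ_cons, ih _ _ _ (by omega)]

/-- Alternating words not longer than `m_{ij}` are reduced: a shortening by the exchange condition
would give a relation `(s_j s_i) ^ k = 1` with `0 < k < m_{ij}`. -/
theorem isReduced_altL {i j : B} (hij : i ≠ j) {n : ℕ} (hn : M i j = 0 ∨ n ≤ M i j) :
    cs.IsReduced (altL i j n) := by
  induction n generalizing i j with
  | zero => exact isReduced_nil cs
  | succ n ih =>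
    have ihn : cs.IsReduced (altL j i n) := ih hij.symm (by rw [M.symmetric j i]; omega)
    rw [altL_succ, isReduced_cons_iff]
    refine ⟨ihn, fun hd => ?_⟩
    obtain ⟨k, hk, h⟩ := exchange cs _ _ hd
    rw [length_altL] at hk
    rw [List.eraseIdx_eq_take_drop_succ, cs.wordProd_append] at h
    have h1 : altL j i n = altL j i (k + 1) ++ (altL j i n).drop (k + 1) := by
      rw [← take_altL j i (k + 1) n (by omega), List.take_append_drop]
    have h2 : cs.simple i * cs.wordProd (altL j i (k + 1)) =
        cs.wordProd (altL j i k) := by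
      rw [take_altL j i k n (by omega)] at h
      apply mul_right_cancel (b := cs.wordProd ((altL j i n).drop (k + 1)))
      rw [mul_assoc, ← cs.wordProd_append, ← h1, h]
    -- the word `(j i … ) ++ reverse` of the last equation is an alternating word of odd length
    have h3 : ∀ k (i j : B), cs.wordProd (altL j i (k + 1)) * (cs.wordProd (altL j i k))⁻¹ =
        cs.wordProd (altL j i (2 * k + 1)) := by
      intro k
      induction k with
      | zero => intro i j; simp
      | succ k ih =>
        intro i j
        rw [altL_succ j i (k + 1), altL_succ j i k, cs.wordProd_cons, cs.wordProd_cons, mul_inv_rev,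
          mul_assoc, ← mul_assoc (cs.wordProd (altL i j (k + 1))), ih, wordProd_altL_odd,
          wordProd_altL_odd, cs.inv_simple, pow_succ', mul_assoc, mul_assoc]
        have comm : ∀ k : ℕ, cs.simple j * (cs.simple i * cs.simple j) ^ k =
            (cs.simple j * cs.simple i) ^ k * cs.simple j := by
          intro k
          induction k with
          | zero => simp
          | succ k ih => rw [pow_succ, ← mul_assoc, ih, pow_succ]; simp [mul_assoc]
        have := comm (k + 1)
        rw [pow_succ, pow_succ'] at this
        simpa [mul_assoc] using this
    have h4 := h3 k i j
    rw [wordProd_altL_odd] at h4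
    have h5 : (cs.simple i * cs.simple j) ^ (k + 1) = 1 := by
      have : (cs.simple j * cs.simple i) ^ (k + 1) = 1 := by
        rw [pow_succ, ← mul_assoc, ← h4, ← h2]; simp
      rw [← inv_inj, ← inv_pow, mul_inv_rev, cs.inv_simple, cs.inv_simple, this, inv_one]
    refine simple_mul_simple_pow_ne_one cs hij (Nat.succ_pos k) ?_ h5
    omega

theorem dihedral_step {w : W} {i j : B} (hij : i ≠ j) (hi : cs.IsLeftDescent w i)
    (hj : cs.IsLeftDescent w j) {l : List B} (hw : cs.wordProd l = w) (n : ℕ)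
    (hn : M i j = 0 ∨ n ≤ M i j) :
    ∃ e, e.Sublist l ∧ n + e.length = l.length ∧
      (cs.wordProd (altL i j n ++ e) = w ∨ cs.wordProd (altL j i n ++ e) = w) := by
  induction n with
  | zero => exact ⟨l, List.Sublist.refl l, by simp, Or.inl hw⟩
  | succ n ih =>
    obtain ⟨e, he, hlen, hor⟩ := ih (by omega)
    have key : ∀ x y : B, x ≠ y → cs.IsLeftDescent w y → (M y x = 0 ∨ n + 1 ≤ M y x) →
        cs.wordProd (altL x y n ++ e) = w →
        ∃ e', e'.Sublist l ∧ n + 1 + e'.length = l.length ∧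
          cs.wordProd (altL y x (n + 1) ++ e') = w := by
      intro x y hxy hy hm hp
      rw [← hp] at hy
      obtain ⟨k, hk, h⟩ := exchange cs _ _ hy
      rw [List.length_append, length_altL] at hk
      rcases lt_or_ge k n with hkn | hkn
      · exfalso
        rw [List.eraseIdx_append_of_lt_length (by simpa using hkn), cs.wordProd_append,
          cs.wordProd_append, ← mul_assoc, mul_left_inj] at h
        have hred := isReduced_altL cs hxy.symm hm
        rw [altL_succ, isReduced_cons_iff] at hred
        have := hred.1.eq
        apply hred.2
        rw [CoxeterSystem.IsLeftDescent, h, this]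
        refine lt_of_le_of_lt (cs.length_wordProd_le _) ?_
        rw [List.length_eraseIdx_of_lt (by simpa using hkn)]
        simp; omega
      · rw [List.eraseIdx_append_of_length_le (by simpa using hkn), length_altL] at h
        refine ⟨e.eraseIdx (k - n), (List.eraseIdx_sublist _ _).trans he, ?_, ?_⟩
        · rw [List.length_eraseIdx_of_lt (by omega)]; omega
        · rw [altL_succ, List.cons_append, cs.wordProd_cons, ← h,
            cs.simple_mul_simple_cancel_left, hp]
    rcases hor with h | h
    · obtain ⟨e', h1, h2, h3⟩ := key i j hij hj (by rw [M.symmetric j i]; omega) h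
      exact ⟨e', h1, h2, Or.inr h3⟩
    · obtain ⟨e', h1, h2, h3⟩ := key j i hij.symm hi (by omega) h
      exact ⟨e', h1, h2, Or.inl h3⟩

/-- If `i ≠ j` are left descents of `w`, then `m_{ij}` is finite and `w` has a reduced word
starting with the alternating word of length `m_{ij}` in `i, j`, whose remaining part can be
taken to be a subword of any prescribed reduced word of `w`. -/
theorem dihedral_prefix {w : W} {i j : B} (hij : i ≠ j) (hi : cs.IsLeftDescent w i)
    (hj : cs.IsLeftDescent w j) {l : List B} (hw : cs.wordProd l = w) :
    M i j ≠ 0 ∧ ∃ e, e.Sublist l ∧ M i j + e.length = l.length ∧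
      cs.wordProd (altL i j (M i j) ++ e) = w ∧ cs.wordProd (altL j i (M i j) ++ e) = w := by
  have h0 : M i j ≠ 0 := by
    intro h0
    obtain ⟨e, -, h, -⟩ := dihedral_step cs hij hi hj hw (l.length + 1) (Or.inl h0)
    omega
  refine ⟨h0, ?_⟩
  obtain ⟨e, h1, h2, h3⟩ := dihedral_step cs hij hi hj hw (M i j) (Or.inr le_rfl)
  refine ⟨e, h1, h2, ?_⟩
  rw [cs.wordProd_append, cs.wordProd_append, ← wordProd_altL_braid] at *
  tauto

/-- If prefixing the alternating word of length `m_{ij}` to a reduced word is not reduced, then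
`i` or `j` is already a left descent. -/
theorem descent_of_not_isReduced {i j : B} (hij : i ≠ j) {v : List B}
    (hv : cs.IsReduced v) (h : ¬ cs.IsReduced (altL i j (M i j) ++ v)) :
    cs.IsLeftDescent (cs.wordProd v) i ∨ cs.IsLeftDescent (cs.wordProd v) j := by
  by_contra! hcon
  apply h
  -- the alternating prefixes stay reduced, by induction on their length
  have key : ∀ n, n ≤ M i j → ∀ x y : B, (x = i ∧ y = j ∨ x = j ∧ y = i) →
      cs.IsReduced (altL x y n ++ v) := by
    intro n
    induction n with
    | zero => intro _ x y _; simpa using hv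
    | succ n ih =>
      intro hn x y hxy
      have hxy' : x ≠ y := by rcases hxy with ⟨rfl, rfl⟩ | ⟨rfl, rfl⟩ <;> tauto
      have hM : M x y = M i j := by
        rcases hxy with ⟨rfl, rfl⟩ | ⟨rfl, rfl⟩
        · rfl
        · exact M.symmetric _ _
      have hr := ih (by omega) y x (by tauto)
      rw [altL_succ, List.cons_append, isReduced_cons_iff]
      refine ⟨hr, fun hd => ?_⟩
      cases n with
      | zero =>
        rw [altL_zero, List.nil_append] at hd
        rcases hxy with ⟨rfl, rfl⟩ | ⟨rfl, rfl⟩ <;> tauto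
      | succ n =>
        have hdy : cs.IsLeftDescent (cs.wordProd (altL y x (n + 1) ++ v)) y := by
          rw [altL_succ, List.cons_append] at hr ⊢
          exact isLeftDescent_of_cons hr
        -- both `x` and `y` are descents; cancelling the prefix exhibits a descent of `v`
        obtain ⟨-, e, -, he, -, hc⟩ := dihedral_prefix cs hxy' hd hdy rfl
        rw [List.length_append, length_altL] at he
        have hsplit : altL y x (M x y) = altL y x (n + 1) ++ (altL y x (M x y)).drop (n + 1) := by
          rw [← take_altL y x (n + 1) (M x y) (by omega), List.take_append_drop]
        have hlen : ((altL y x (M x y)).drop (n + 1)).length = M x y - (n + 1) := by simp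
        have hmem : ∀ q ∈ (altL y x (M x y)).drop (n + 1), q = y ∨ q = x :=
          fun q hq => mem_altL (List.mem_of_mem_drop hq)
        generalize (altL y x (M x y)).drop (n + 1) = d at hsplit hlen hmem
        rw [hsplit, List.append_assoc, cs.wordProd_append, cs.wordProd_append _ v,
          mul_right_inj] at hc
        cases d with
        | nil => simp at hlen; omega
        | cons q d =>
          have hred : cs.IsReduced (q :: d ++ e) :=
            isReduced_of_eq hv hc (by simp at hlen ⊢; omega)
          have hq := isLeftDescent_of_cons (by simpa using hred)
          rw [← List.cons_append, hc] at hq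
          have := hmem q (by simp)
          rcases hxy with ⟨rfl, rfl⟩ | ⟨rfl, rfl⟩ <;> rcases this with rfl | rfl <;> tauto
  exact key _ le_rfl i j (Or.inl ⟨rfl, rfl⟩)
end Words
end CoxAlg

/-! ### Standard parabolic subgroups -/

namespace CoxAlg

section Parabolic
variable {B W : Type*} [Group W] {M : CoxeterMatrix B} (cs : CoxeterSystem M W)
  {J W' : Type*} [Group W'] {M' : CoxeterMatrix J} (cs' : CoxeterSystem M' W')
  {φ : J → B} (hφ : Function.Injective φ) (hM : ∀ a b, M' a b = M (φ a) (φ b))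

include hM in
theorem parabolic_wordProd_eq {l l' : List J} (h : cs'.wordProd l = cs'.wordProd l') :
    cs.wordProd (l.map φ) = cs.wordProd (l'.map φ) := by
  have hlift : M'.IsLiftable (fun a => cs.simple (φ a)) := by
    intro a b; rw [hM]; exact cs.simple_mul_simple_pow _ _
  have key : ∀ l : List J, cs.wordProd (l.map φ) = cs'.lift ⟨_, hlift⟩ (cs'.wordProd l) := by
    intro l
    induction l with
    | nil => simp
    | cons a l ih =>
      rw [List.map_cons, cs.wordProd_cons, cs'.wordProd_cons, map_mul, ih, cs'.lift_apply_simple]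
  rw [key, key, h]

include hM in
theorem parabolic_isReduced_of_map {l : List J} (h : cs.IsReduced (l.map φ)) :
    cs'.IsReduced l := by
  obtain ⟨l', hl', hp⟩ := cs'.exists_isReduced (cs'.wordProd l)
  have h1 := parabolic_wordProd_eq cs cs' hM hp
  have h2 := cs.length_wordProd_le (l'.map φ)
  rw [← h1, h.eq, List.length_map, List.length_map] at h2
  have h3 := cs'.length_wordProd_le l
  rw [hp, hl'.eq] at h3
  rw [CoxeterSystem.IsReduced, hp, hl'.eq]
  omega

include hφ hM in
theorem parabolic_wordProd_inj (n : ℕ) : ∀ {l l' : List J}, l.length = n → l'.length = n →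
    cs.IsReduced (l.map φ) → cs.IsReduced (l'.map φ) →
    cs.wordProd (l.map φ) = cs.wordProd (l'.map φ) → cs'.wordProd l = cs'.wordProd l' := by
  induction n with
  | zero =>
    intro l l' h h' _ _ _
    rw [List.length_eq_zero_iff] at h h'
    rw [h, h']
  | succ n ih =>
    -- two words with the same first letter
    have same : ∀ (a : J) (u u' : List J), u.length = n → u'.length = n →
        cs.IsReduced ((a :: u).map φ) → cs.IsReduced ((a :: u').map φ) →
        cs.wordProd ((a :: u).map φ) = cs.wordProd ((a :: u').map φ) →
        cs'.wordProd (a :: u) = cs'.wordProd (a :: u') := by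
      intro a u u' hu hu' hr hr' hp
      rw [List.map_cons, isReduced_cons_iff] at hr hr'
      rw [List.map_cons, List.map_cons, cs.wordProd_cons, cs.wordProd_cons, mul_right_inj] at hp
      rw [cs'.wordProd_cons, cs'.wordProd_cons, ih hu hu' hr.1 hr'.1 hp]
    rintro (_ | ⟨a, u⟩) (_ | ⟨b, u'⟩) hl hl' hr hr' hp
    · rfl
    · simp at hl
    · simp at hl'
    simp only [List.length_cons, add_left_inj] at hl hl'
    rcases eq_or_ne a b with rfl | hab
    · exact same a u u' hl hl' hr hr' hp
    have ha := isLeftDescent_of_cons hr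
    have hb := isLeftDescent_of_cons hr'
    rw [← List.map_cons, ← hp] at hb
    rw [← List.map_cons] at ha
    obtain ⟨h0, e, he, hlen, h1, h2⟩ := dihedral_prefix cs (hφ.ne hab) ha hb rfl
    obtain ⟨e', -, rfl⟩ := List.sublist_map_iff.1 he
    rw [← hM] at h0 hlen h1 h2
    obtain ⟨m, hm⟩ := Nat.exists_eq_succ_of_ne_zero h0
    simp only [List.length_map, List.length_cons] at hlen
    have hlen1 : (altL b a m ++ e').length = n := by simp; omega
    have hlen2 : (altL a b m ++ e').length = n := by simp; omega
    rw [← map_altL, ← List.map_append] at h1 h2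
    have e1 : cs'.wordProd (a :: u) = cs'.wordProd (altL a b (M' a b) ++ e') := by
      have hw : altL a b (M' a b) ++ e' = a :: (altL b a m ++ e') := by rw [hm]; rfl
      rw [hw] at h1 ⊢
      exact same a _ _ hl hlen1 hr (isReduced_of_eq hr h1 (by simp [← hlen1] at hl ⊢; omega))
        h1.symm
    have e2 : cs'.wordProd (b :: u') = cs'.wordProd (altL b a (M' a b) ++ e') := by
      have hw : altL b a (M' a b) ++ e' = b :: (altL a b m ++ e') := by rw [hm]; rfl
      rw [hw] at h2 ⊢
      exact same b _ _ hl' hlen2 hr' (isReduced_of_eq hr h2 (by simp [← hlen2] at hl ⊢; omega))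
        (hp.symm.trans h2.symm)
    rw [e1, e2, cs'.wordProd_append, cs'.wordProd_append, wordProd_altL_braid]

include hφ hM in
/-- Words that are reduced in a standard parabolic subgroup stay reduced in the whole group. -/
theorem parabolic_isReduced_map {l : List J} (h : cs'.IsReduced l) : cs.IsReduced (l.map φ) := by
  induction l with
  | nil => exact isReduced_nil cs
  | cons a u ih =>
    rw [isReduced_cons_iff] at h
    rw [List.map_cons, isReduced_cons_iff]
    refine ⟨ih h.1, fun hd => h.2 ?_⟩
    obtain ⟨k, hk, hex⟩ := exchange cs _ _ hd
    rw [List.length_map] at hk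
    rw [List.eraseIdx_map] at hex
    have hp : cs.wordProd ((a :: u.eraseIdx k).map φ) = cs.wordProd (u.map φ) := by
      rw [List.map_cons, cs.wordProd_cons, ← hex, cs.simple_mul_simple_cancel_left]
    have hlen : (a :: u.eraseIdx k).length = u.length := by
      rw [List.length_cons, List.length_eraseIdx_of_lt hk]; omega
    have := parabolic_wordProd_inj cs cs' hφ hM u.length rfl hlen (ih h.1)
      (isReduced_of_eq (ih h.1) hp (by rw [List.length_map, List.length_map, hlen])) hp.symm
    have hle := cs'.length_wordProd_le (u.eraseIdx k)
    rw [List.length_eraseIdx_of_lt hk] at hle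
    rw [CoxeterSystem.IsLeftDescent, h.1.eq, this, cs'.wordProd_cons,
      cs'.simple_mul_simple_cancel_left]
    omega

include hφ hM in
theorem parabolic_wordProd_injective {l l' : List J} (h : cs'.IsReduced l) (h' : cs'.IsReduced l')
    (hp : cs.wordProd (l.map φ) = cs.wordProd (l'.map φ)) : cs'.wordProd l = cs'.wordProd l' := by
  have hr := parabolic_isReduced_map cs cs' hφ hM h
  have hr' := parabolic_isReduced_map cs cs' hφ hM h'
  have := length_eq_of_isReduced hr hr' hp
  simp only [List.length_map] at this
  exact parabolic_wordProd_inj cs cs' hφ hM _ this rfl hr hr' hp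

include hφ hM in
/-- Every element factors as `u d`, with lengths adding up, `u` in the parabolic subgroup and `u`
having all the left descents of the element that lie in the parabolic subgroup. -/
theorem parabolic_decomp (w : W) : ∃ (u : List J) (d : List B), cs.IsReduced (u.map φ ++ d) ∧
    cs.wordProd (u.map φ ++ d) = w ∧
    ∀ a, cs.IsLeftDescent w (φ a) → cs'.IsLeftDescent (cs'.wordProd u) a := by
  by_contra! hcon
  have key : ∀ n : ℕ, ∃ (u : List J) (d : List B), cs.IsReduced (u.map φ ++ d) ∧
      cs.wordProd (u.map φ ++ d) = w ∧ u.length = n := by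
    intro n
    induction n with
    | zero =>
      obtain ⟨d, hd, hw⟩ := cs.exists_isReduced w
      exact ⟨[], d, by simpa using hd, by simpa using hw.symm, rfl⟩
    | succ n ih =>
      obtain ⟨u, d, hr, hw, hn⟩ := ih
      obtain ⟨a, hda, hna⟩ := hcon u d hr hw
      rw [← hw] at hda
      obtain ⟨k, hk, hex⟩ := exchange cs _ _ hda
      have hru := IsReduced.append_left hr
      rcases lt_or_ge k (u.map φ).length with hku | hku
      · exfalso
        rw [List.eraseIdx_append_of_lt_length hku, cs.wordProd_append, cs.wordProd_append,
          ← mul_assoc, mul_left_inj] at hex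
        have h1 : cs.IsLeftDescent (cs.wordProd (u.map φ)) (φ a) := by
          rw [CoxeterSystem.IsLeftDescent, hex, hru.eq]
          refine lt_of_le_of_lt (cs.length_wordProd_le _) ?_
          rw [List.length_eraseIdx_of_lt hku]; omega
        have h2 : cs'.IsReduced (a :: u) := by
          rw [isReduced_cons_iff]
          exact ⟨parabolic_isReduced_of_map cs cs' hM hru, hna⟩
        have h3 := parabolic_isReduced_map cs cs' hφ hM h2
        rw [List.map_cons, isReduced_cons_iff] at h3
        exact h3.2 h1
      · rw [List.eraseIdx_append_of_length_le hku] at hex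
        have hp : cs.wordProd ((a :: u).map φ ++ d.eraseIdx (k - (u.map φ).length)) =
            cs.wordProd (u.map φ ++ d) := by
          rw [List.map_cons, List.cons_append, cs.wordProd_cons, ← hex,
            cs.simple_mul_simple_cancel_left]
        refine ⟨a :: u, _, isReduced_of_eq hr hp ?_, hp.trans hw, by simp [hn]⟩
        simp only [List.length_append, List.length_map] at hk hku ⊢
        rw [List.length_eraseIdx_of_lt (by omega), List.length_cons]; omega
  obtain ⟨u, d, hr, hw, hn⟩ := key (cs.length w + 1)
  have := hr.eq
  rw [hw, List.length_append, List.length_map] at this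
  omega

end Parabolic
end CoxAlg

/-! ### Solutions: functions on words satisfying the relations -/

namespace CoxAlg

section SolDef
variable {B : Type*} (M : CoxeterMatrix B)

/-- The words `w_r`, `0 ≤ r ≤ m = m_{ij}`, that enter the polynomial relation for `i, j`: up to
cancellation of double letters, `w_r` is `(i j) ^ r` followed by the inverse of the alternating
word `i j …` of length `m`. -/
def dw (i j : B) (r : ℕ) : List B :=
  if M i j ≤ 2 * r then altL i j (2 * r - M i j) else altL j i (M i j - 2 * r)

theorem dw_swap (i j : B) {r : ℕ} (hr : r ≤ M i j) : dw M j i (M i j - r) = dw M i j r := by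
  unfold dw
  rw [M.symmetric j i]
  split_ifs with h1 h2 h2
  · rw [show 2 * (M i j - r) - M i j = 0 by omega, show 2 * r - M i j = 0 by omega]; rfl
  · congr 1; omega
  · congr 1; omega
  · omega

theorem dw_last (i j : B) : dw M i j (M i j) = altL i j (M i j) := by
  unfold dw; rw [if_pos (by omega)]; congr 1; omega

theorem dw_zero (i j : B) : dw M i j 0 = altL j i (M i j) := by
  unfold dw
  split_ifs with h
  · rw [show M i j = 0 by omega]; rfl
  · rfl

theorem length_dw_le (i j : B) {r : ℕ} (hr : r ≤ M i j) : (dw M i j r).length ≤ M i j := by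
  unfold dw
  split_ifs
  · simp; omega
  · simp

theorem length_dw_lt (i j : B) {r : ℕ} (h0 : r ≠ 0) (hr : r < M i j) :
    (dw M i j r).length < M i j := by
  unfold dw; split_ifs <;> simp <;> omega

theorem length_dw_mod_two (i j : B) (r : ℕ) :
    (dw M i j r).length % 2 = M i j % 2 := by
  unfold dw; split_ifs <;> simp <;> omega

/-- The properties of a family of coefficients `c o i j r` (`o` only matters modulo `2`) of
polynomial relations that make the theory work: both extreme coefficients are nonzero, and
interchanging `i` and `j` reverses the polynomial up to a scalar. -/
structure IsCoeff (c : ℕ → B → B → ℕ → ℂ) : Prop where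
  shift : ∀ o i j r, c (o + 1) i j r = c o j i r
  last : ∀ o i j, i ≠ j → M i j ≠ 0 → c o i j (M i j) ≠ 0
  zero : ∀ o i j, i ≠ j → M i j ≠ 0 → c o i j 0 ≠ 0
  swap : ∀ o i j, i ≠ j → M i j ≠ 0 →
    ∃ a : ℂ, ∀ r ≤ M i j, c o j i r = a * c o i j (M i j - r)

variable {M} in
theorem IsCoeff.congr_mod {c : ℕ → B → B → ℕ → ℂ} (hc : IsCoeff M c) {o o' : ℕ}
    (h : o % 2 = o' % 2) : c o = c o' := by
  have h2 : ∀ o k, c (o + 2 * k) = c o := by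
    intro o k
    induction k with
    | zero => rfl
    | succ k ih =>
      rw [← ih]; funext i j r
      rw [show o + 2 * (k + 1) = o + 2 * k + 1 + 1 by ring, hc.shift, hc.shift]
  rw [← Nat.mod_add_div o 2, ← Nat.mod_add_div o' 2, h2, h2, h]

variable {M} in
theorem IsCoeff.add {c : ℕ → B → B → ℕ → ℂ} (hc : IsCoeff M c) (k : ℕ) :
    IsCoeff M (fun o => c (o + k)) where
  shift o i j r := by rw [show o + 1 + k = o + k + 1 by ring, hc.shift]
  last o := hc.last _
  zero o := hc.zero _
  swap o := hc.swap _

variable (c : ℕ → B → B → ℕ → ℂ)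

/-- The defect of a function on words with respect to the polynomial relation for `i, j` applied
at the beginning of words ending in `v`. -/
def braidSum (g : List B → ℂ) (i j : B) (v : List B) : ℂ :=
  ∑ r ∈ Finset.range (M i j + 1), c (M i j + v.length) i j r * g (dw M i j r ++ v)

/-- The functions on words which, as far as words of length at most `n` are concerned, are
invariant under cancellation of double letters and satisfy the polynomial relations. -/
def Sol (n : ℕ) : Submodule ℂ (List B → ℂ) where
  carrier := {f | (∀ u i v, u.length + v.length + 2 ≤ n → f (u ++ i :: i :: v) = f (u ++ v)) ∧
    ∀ u i j v, i ≠ j → M i j ≠ 0 → u.length + M i j + v.length ≤ n →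
      braidSum M c (fun l => f (u ++ l)) i j v = 0}
  add_mem' := by
    rintro f g ⟨hf1, hf2⟩ ⟨hg1, hg2⟩
    refine ⟨fun u i v h => by simp [hf1 u i v h, hg1 u i v h], fun u i j v hij hm h => ?_⟩
    have h1 := hf2 u i j v hij hm h
    have h2 := hg2 u i j v hij hm h
    simp only [braidSum, Pi.add_apply, mul_add, Finset.sum_add_distrib] at *
    rw [h1, h2, add_zero]
  zero_mem' := ⟨fun _ _ _ _ => rfl, fun u i j v _ _ _ => by simp [braidSum]⟩
  smul_mem' := by
    rintro a f ⟨hf1, hf2⟩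
    refine ⟨fun u i v h => by simp [hf1 u i v h], fun u i j v hij hm h => ?_⟩
    have h1 := hf2 u i j v hij hm h
    simp only [braidSum, Pi.smul_apply, smul_eq_mul] at *
    simp only [mul_left_comm _ a, ← Finset.mul_sum, h1, mul_zero]

variable {M c}

theorem Sol.nil {n : ℕ} {f : List B → ℂ} (hf : f ∈ Sol M c n) (u : List B) (i : B) (v : List B)
    (h : u.length + v.length + 2 ≤ n) : f (u ++ i :: i :: v) = f (u ++ v) := hf.1 u i v h

theorem Sol.braid {n : ℕ} {f : List B → ℂ} (hf : f ∈ Sol M c n) (u : List B) {i j : B}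
    (v : List B) (hij : i ≠ j) (hm : M i j ≠ 0) (h : u.length + M i j + v.length ≤ n) :
    braidSum M c (fun l => f (u ++ l)) i j v = 0 := hf.2 u i j v hij hm h

theorem Sol.mono {n k : ℕ} {f : List B → ℂ} (hf : f ∈ Sol M c n) (h : k ≤ n) : f ∈ Sol M c k :=
  ⟨fun u i v hl => hf.1 u i v (hl.trans h), fun u i j v hij hm hl => hf.2 u i j v hij hm (hl.trans h)⟩

theorem braidSum_congr {f g : List B → ℂ} {i j : B} {v : List B}
    (h : ∀ r ≤ M i j, f (dw M i j r ++ v) = g (dw M i j r ++ v)) :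
    braidSum M c f i j v = braidSum M c g i j v := by
  refine Finset.sum_congr rfl fun r hr => ?_
  rw [h r (by simpa [Nat.lt_succ_iff] using hr)]

theorem Sol.congr {n : ℕ} {f g : List B → ℂ} (hf : f ∈ Sol M c n)
    (h : ∀ l, l.length ≤ n → g l = f l) : g ∈ Sol M c n := by
  refine ⟨fun u i v hl => ?_, fun u i j v hij hm hl => ?_⟩
  · rw [h, h, hf.1 u i v hl] <;> simp <;> omega
  · rw [← hf.2 u i j v hij hm hl]
    refine braidSum_congr fun r hr => h _ ?_
    have := length_dw_le M i j hr
    simp; omega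

theorem Sol.prefix {n k : ℕ} {f : List B → ℂ} (hf : f ∈ Sol M c n) (p : List B)
    (h : p.length + k ≤ n) : (fun l => f (p ++ l)) ∈ Sol M c k := by
  refine ⟨fun u i v hl => ?_, fun u i j v hij hm hl => ?_⟩
  · have := hf.1 (p ++ u) i v (by simp; omega)
    simpa using this
  · have := hf.2 (p ++ u) i j v hij hm (by simp; omega)
    simpa using this

theorem Sol.cons {n k : ℕ} {f : List B → ℂ} (hf : f ∈ Sol M c n) (i : B) (h : k + 1 ≤ n) :
    (fun l => f (i :: l)) ∈ Sol M c k := Sol.prefix hf [i] (by simp; omega)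

theorem braidSum_swap (hc : IsCoeff M c) {i j : B} (hij : i ≠ j) (hm : M i j ≠ 0)
    {g : List B → ℂ} {v : List B} (h : braidSum M c g i j v = 0) : braidSum M c g j i v = 0 := by
  obtain ⟨a, ha⟩ := hc.swap (M i j + v.length) i j hij hm
  rw [← mul_zero a, ← h, braidSum, braidSum, M.symmetric j i, Finset.mul_sum,
    ← Finset.sum_range_reflect]
  refine Finset.sum_congr rfl fun r hr => ?_
  have hr' : r ≤ M i j := by simpa [Nat.lt_succ_iff] using hr
  rw [show M i j + 1 - 1 - r = M i j - r by omega, dw_swap M i j hr', ha _ (by omega),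
    show M i j - (M i j - r) = r by omega, mul_assoc]

/-- The braid sum only involves its two extreme terms when the function vanishes on shorter
words. -/
theorem braidSum_eq_of_vanish {g : List B → ℂ} {i j : B} {v : List B} (hm : M i j ≠ 0)
    (h : ∀ l, l.length < M i j + v.length → g l = 0) :
    braidSum M c g i j v = c (M i j + v.length) i j 0 * g (altL j i (M i j) ++ v) +
      c (M i j + v.length) i j (M i j) * g (altL i j (M i j) ++ v) := by
  rw [braidSum, Finset.sum_range_succ, dw_last]
  obtain ⟨m, hm'⟩ := Nat.exists_eq_succ_of_ne_zero hm
  congr 1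
  rw [Finset.sum_eq_single 0]
  · rw [dw_zero]
  · intro r hr h0
    have := length_dw_lt M i j h0 (by simpa using hr)
    rw [h _ (by simp; omega), mul_zero]
  · simp [hm]

end SolDef

section Rigidity
variable {B W : Type*} [Group W] {M : CoxeterMatrix B} (cs : CoxeterSystem M W)
  {c : ℕ → B → B → ℕ → ℂ} (hc : IsCoeff M c)

include hc in
/-- The rigidity of solutions. If a solution vanishes on all words shorter than `k`, then on words
of length `k` it vanishes at non-reduced words, and its vanishing at a reduced word depends only
on the element: by the polynomial relation, its values at two words related by a braid move are
nonzero multiples of each other. -/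
theorem Sol.vanish (k : ℕ) : ∀ {n : ℕ} {f : List B → ℂ}, f ∈ Sol M c n → k ≤ n →
    (∀ l, l.length < k → f l = 0) →
    (∀ l, l.length = k → ¬ cs.IsReduced l → f l = 0) ∧
    (∀ l l', l.length = k → l'.length = k → cs.IsReduced l → cs.IsReduced l' →
      cs.wordProd l = cs.wordProd l' → f l = 0 → f l' = 0) := by
  induction k with
  | zero =>
    intro n f _ _ _
    refine ⟨fun l hl h => ?_, fun l l' hl hl' _ _ _ h => ?_⟩
    · rw [List.length_eq_zero_iff] at hl; subst hl; exact absurd (isReduced_nil cs) h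
    · rw [List.length_eq_zero_iff] at hl hl'; rw [hl', ← hl, h]
  | succ k ih =>
    intro n f hf hk hz
    have ihi := fun i => ih (Sol.cons hf i (k := n - 1) (by omega)) (by omega)
      (fun l hl => hz _ (by simp; omega))
    refine ⟨fun l hl h => ?_, fun l l' hl hl' hr hr' hp h => ?_⟩
    · obtain _ | ⟨a, u⟩ := l
      · simp at hl
      simp only [List.length_cons, add_left_inj] at hl
      by_cases hu : cs.IsReduced u
      · rw [isReduced_cons_iff] at h
        have hd : cs.IsLeftDescent (cs.wordProd u) a := by tauto
        obtain ⟨u', hr, hp⟩ := exists_cons_of_isLeftDescent cs hd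
        have hlen := length_eq_of_isReduced hr hu hp
        simp only [List.length_cons] at hlen
        refine (ihi a).2 (a :: u') u (by simp; omega) hl hr hu hp ?_
        have := Sol.nil hf [] a u' (by simp; omega)
        simp only [List.nil_append] at this
        rw [this, hz _ (by omega)]
      · exact (ihi a).1 u hl hu
    · have same : ∀ (a : B) (u u' : List B), u.length = k → u'.length = k →
          cs.IsReduced (a :: u) → cs.IsReduced (a :: u') →
          cs.wordProd (a :: u) = cs.wordProd (a :: u') → f (a :: u) = 0 → f (a :: u') = 0 := by
        intro a u u' hu hu' hr hr' hp h
        rw [cs.wordProd_cons, cs.wordProd_cons, mul_right_inj] at hp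
        exact (ihi a).2 u u' hu hu' ((isReduced_cons_iff cs).1 hr).1
          ((isReduced_cons_iff cs).1 hr').1 hp h
      obtain _ | ⟨a, u⟩ := l
      · simp at hl
      obtain _ | ⟨b, u'⟩ := l'
      · simp at hl'
      simp only [List.length_cons, add_left_inj] at hl hl'
      rcases eq_or_ne a b with rfl | hab
      · exact same a u u' hl hl' hr hr' hp h
      have ha := isLeftDescent_of_cons hr
      have hb := isLeftDescent_of_cons hr'
      rw [← hp] at hb
      obtain ⟨h0, e, -, hlen, h1, h2⟩ := dihedral_prefix cs hab ha hb rfl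
      have hbr := Sol.braid hf [] e hab h0 (by simp at hlen ⊢; omega)
      simp only [List.nil_append] at hbr
      rw [braidSum_eq_of_vanish h0 (fun l hl => hz l (by simp at hlen; omega))] at hbr
      obtain ⟨m, hm⟩ := Nat.exists_eq_succ_of_ne_zero h0
      have r1 := isReduced_of_eq hr h1 (by simp at hlen ⊢; omega)
      have r2 := isReduced_of_eq hr h2 (by simp at hlen ⊢; omega)
      have hl0 := hc.zero (M a b + e.length) a b hab h0
      rw [List.length_cons] at hlen
      generalize c (M a b + e.length) a b 0 = c0 at *
      generalize c (M a b + e.length) a b (M a b) = c1 at *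
      rw [hm] at hlen r1 r2 hbr h1 h2
      have s1 : f (altL a b m.succ ++ e) = 0 :=
        same a u (altL b a m ++ e) hl (by simp; omega) hr r1 h1.symm h
      rw [s1, mul_zero, add_zero] at hbr
      exact same b (altL a b m ++ e) u' (by simp; omega) hl' r2 hr' (h2.trans hp)
        ((mul_eq_zero.1 hbr).resolve_left hl0)

include hc in
/-- A solution is determined, on words of length at most `k`, by its values on one reduced word
for each element of length at most `k`. -/
theorem Sol.eq_zero {n k : ℕ} {f : List B → ℂ} (hf : f ∈ Sol M c n) (hk : k ≤ n)
    (h : ∀ w, cs.length w ≤ k → ∃ l, cs.IsReduced l ∧ cs.wordProd l = w ∧ f l = 0) :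
    ∀ l, l.length ≤ k → f l = 0 := by
  induction k with
  | zero =>
    intro l hl
    obtain ⟨l', hr, hp, hz⟩ := h (cs.wordProd l) ((cs.length_wordProd_le l).trans hl)
    have h1 : l = [] := by simpa using hl
    subst h1
    have : l' = [] := by
      have := hr.eq
      rw [hp] at this
      simpa [eq_comm] using this
    rwa [this] at hz
  | succ k ih =>
    have ih' := ih (by omega) fun w hw => h w (by omega)
    intro l hl
    rcases Nat.lt_or_ge l.length (k + 1) with hlt | hge
    · exact ih' l (by omega)
    have hlk : l.length = k + 1 := by omega
    have hv := Sol.vanish cs hc (k + 1) hf hk fun l hl => ih' l (by omega)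
    by_cases hr : cs.IsReduced l
    · obtain ⟨l', hr', hp, hz⟩ := h (cs.wordProd l) (by rw [hr.eq]; omega)
      have := length_eq_of_isReduced hr' hr hp
      exact hv.2 l' l (by omega) hlk hr' hr hp hz
    · exact hv.1 l hlk hr

include hc in
theorem Sol.eq_of_eq {n k : ℕ} {f g : List B → ℂ} (hf : f ∈ Sol M c n) (hg : g ∈ Sol M c n)
    (hk : k ≤ n)
    (h : ∀ w, cs.length w ≤ k → ∃ l, cs.IsReduced l ∧ cs.wordProd l = w ∧ f l = g l) :
    ∀ l, l.length ≤ k → f l = g l := by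
  intro l hl
  refine sub_eq_zero.1 (Sol.eq_zero cs hc (sub_mem hf hg) hk (fun w hw => ?_) l hl)
  obtain ⟨l, h1, h2, h3⟩ := h w hw
  exact ⟨l, h1, h2, sub_eq_zero.2 h3⟩

include hc in
theorem Sol.eq_at {n : ℕ} {f g : List B → ℂ} (hf : f ∈ Sol M c n) (hg : g ∈ Sol M c n)
    (h : ∀ l, l.length < n → f l = g l) {l l' : List B} (hl : l.length = n)
    (hr : cs.IsReduced l) (hr' : cs.IsReduced l') (hp : cs.wordProd l = cs.wordProd l')
    (he : f l = g l) : f l' = g l' := by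
  have hlen := length_eq_of_isReduced hr hr' hp
  refine sub_eq_zero.1 ((Sol.vanish cs hc n (sub_mem hf hg) le_rfl
    fun l hl => sub_eq_zero.2 (h l hl)).2 l l' hl (by omega) hr hr' hp (sub_eq_zero.2 he))

end Rigidity
end CoxAlg

/-! ### The polynomial relations between words of length one more -/

namespace CoxAlg

section PreSolSec
variable {B : Type*} (M : CoxeterMatrix B) (c : ℕ → B → B → ℕ → ℂ)

/-- Functions on words satisfying all the conditions for words of length at most `n`, and those
conditions for words of length `n + 1` which do not touch the first letter. -/
def PreSol (n : ℕ) (g : List B → ℂ) : Prop :=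
  g ∈ Sol M c n ∧ ∀ i, (fun l => g (i :: l)) ∈ Sol M c n

variable {M c}

theorem PreSol.nil {n : ℕ} {g : List B → ℂ} (hg : PreSol M c n g) (u : List B) (i : B)
    (v : List B) (h : u.length + v.length + 2 ≤ n + 1) (h' : u = [] → v.length + 2 ≤ n) :
    g (u ++ i :: i :: v) = g (u ++ v) := by
  obtain _ | ⟨a, u⟩ := u
  · exact Sol.nil hg.1 [] i v (by simpa using h' rfl)
  · exact Sol.nil (hg.2 a) u i v (by simp at h; omega)

theorem PreSol.braid {n : ℕ} {g : List B → ℂ} (hg : PreSol M c n g) (u : List B) {i j : B}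
    (v : List B) (hij : i ≠ j) (hm : M i j ≠ 0) (h : u.length + M i j + v.length ≤ n + 1)
    (h' : u = [] → M i j + v.length ≤ n) :
    braidSum M c (fun l => g (u ++ l)) i j v = 0 := by
  obtain _ | ⟨a, u⟩ := u
  · exact Sol.braid hg.1 [] v hij hm (by simpa using h' rfl)
  · exact Sol.braid (hg.2 a) u v hij hm (by simp at h; omega)

theorem two_le_of_ne {i j : B} (hij : i ≠ j) (hm : M i j ≠ 0) : 2 ≤ M i j := by
  have := M.off_diagonal i j hij
  omega

theorem braidSum_vanish {n k : ℕ} {g : List B → ℂ} (hg : g ∈ Sol M c n) {i j : B} (hij : i ≠ j)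
    (hm : M i j ≠ 0) (hk : M i j + k = n + 1) (v : List B) (hv : v.length < k) :
    braidSum M c g i j v = 0 :=
  Sol.braid hg [] v hij hm (by simp; omega)

/-- The braid defect of a function in `PreSol` is itself a solution. -/
theorem braidSum_mem (hc : IsCoeff M c) {n k : ℕ} {g : List B → ℂ} (hg : PreSol M c n g)
    {i j : B} (hij : i ≠ j) (hm : M i j ≠ 0) (hk : M i j + k = n + 1) :
    (fun v => braidSum M c g i j v) ∈ Sol M c k := by
  have hm2 := two_le_of_ne hij hm
  refine ⟨fun u a v h => ?_, fun u a b v hab hab0 h => ?_⟩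
  · refine Finset.sum_congr rfl fun r hr => ?_
    have hr' := length_dw_le M i j (r := r) (by simpa [Nat.lt_succ_iff] using hr)
    rw [hc.congr_mod (o := M i j + (u ++ a :: a :: v).length) (o' := M i j + (u ++ v).length)
      (by simp; omega)]
    have := PreSol.nil hg (dw M i j r ++ u) a v (by simp; omega) (by intro _; omega)
    simp only [List.append_assoc] at this
    rw [this]
  · simp only [braidSum, Finset.mul_sum]
    rw [Finset.sum_comm]
    refine Finset.sum_eq_zero fun r hr => ?_
    have hr' := length_dw_le M i j (r := r) (by simpa [Nat.lt_succ_iff] using hr)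
    have := PreSol.braid hg (dw M i j r ++ u) v hab hab0 (by simp; omega) (by intro _; omega)
    rw [← mul_zero (c (M i j + u.length + M a b + v.length) i j r), ← this, braidSum,
      Finset.mul_sum]
    refine Finset.sum_congr rfl fun s hs => ?_
    rw [hc.congr_mod (o := M i j + (u ++ (dw M a b s ++ v)).length)
      (o' := M i j + u.length + M a b + v.length)
      (by have := length_dw_mod_two M a b s; simp; omega), List.append_assoc]
    ring

/-- Appending the letter `i` to `w_r` gives, up to cancellation, the word `w_r` for the pair
`(j, i)` preceded by a letter that depends on the parity of `m_{ij}` only. -/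
theorem dw_append_singleton (i j : B) (r : ℕ) :
    dw M i j r ++ [i] = (if Even (M i j) then i else j) :: dw M j i r ∨
    ∃ p, dw M i j r = p ++ [i] ∧ dw M j i r = (if Even (M i j) then i else j) :: p := by
  unfold dw
  rw [M.symmetric j i]
  generalize M i j = m
  by_cases hr : m ≤ 2 * r
  · rw [if_pos hr, if_pos hr]
    have hpar : Even (2 * r - m) ↔ Even m := by
      rw [Nat.even_sub hr]; simp
    simp only [← hpar]
    generalize 2 * r - m = p
    rcases Nat.even_or_odd p with he | ho
    · left
      rw [if_pos he, ← altL_succ, ← altL_append_singleton, if_pos he]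
    · right
      obtain ⟨p, rfl⟩ : ∃ p', p = p' + 1 := ⟨p - 1, by have := ho.pos; omega⟩
      have hn : ¬ Even (p + 1) := Nat.not_even_iff_odd.2 ho
      rw [if_neg hn]
      refine ⟨altL i j p, ?_, altL_succ _ _ _⟩
      rw [← altL_append_singleton, if_pos (by simpa [Nat.even_add_one] using hn)]
  · rw [if_neg hr, if_neg hr]
    have hpar : Even (m - 2 * r) ↔ Even m := by
      rw [Nat.even_sub (by omega)]; simp
    have hpos : 0 < m - 2 * r := by omega
    simp only [← hpar]
    generalize m - 2 * r = p at *
    rcases Nat.even_or_odd p with he | ho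
    · right
      obtain ⟨p, rfl⟩ : ∃ p', p = p' + 1 := ⟨p - 1, by omega⟩
      rw [if_pos he]
      refine ⟨altL j i p, ?_, altL_succ _ _ _⟩
      rw [← altL_append_singleton, if_neg (by simpa [Nat.even_add_one] using he)]
    · left
      have hn : ¬ Even p := Nat.not_even_iff_odd.2 ho
      rw [if_neg hn, ← altL_succ, ← altL_append_singleton, if_neg hn]

/-- The polynomial relation for `i, j` holds automatically in front of a word that starts
with `i`. -/
theorem braidSum_cons (hc : IsCoeff M c) {n : ℕ} {g : List B → ℂ} (hg : PreSol M c n g)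
    (hnil : ∀ i v, v.length + 2 ≤ n + 1 → g (i :: i :: v) = g v)
    {i j : B} (hij : i ≠ j) (hm : M i j ≠ 0) {v : List B} (hv : M i j + v.length + 1 = n + 1) :
    braidSum M c g i j (i :: v) = 0 := by
  have hm2 := two_le_of_ne hij hm
  have hnil' : ∀ u a v, u.length + v.length + 2 ≤ n + 1 → g (u ++ a :: a :: v) = g (u ++ v) := by
    rintro (_ | ⟨b, u⟩) a v h
    · exact hnil a v (by simpa using h)
    · exact PreSol.nil hg _ a v h (by simp)
  set q := if Even (M i j) then i else j with hq
  rw [← PreSol.braid hg [q] v hij.symm (by rwa [M.symmetric]) (by rw [M.symmetric j i]; simp; omega)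
    (by simp), braidSum, braidSum, M.symmetric j i]
  refine Finset.sum_congr rfl fun r hr => ?_
  have hr' := length_dw_le M i j (r := r) (by simpa [Nat.lt_succ_iff] using hr)
  rw [List.length_cons, ← add_assoc, hc.shift]
  congr 1
  rcases dw_append_singleton (M := M) i j r with h | ⟨p, h1, h2⟩
  · rw [← List.singleton_append, ← List.append_assoc, h]; rfl
  · rw [h1, h2, ← hq]
    have hlen : p.length + 1 ≤ M i j := by rw [h1] at hr'; simpa using hr'
    have e1 := hnil' p i v (by omega)
    have e2 := hnil' [] q (p ++ v) (by simp; omega)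
    simp only [List.append_assoc, List.nil_append, List.cons_append] at *
    rw [e1, e2]

end PreSolSec

section Ext
variable {B W : Type*} [Group W] {M : CoxeterMatrix B} (cs : CoxeterSystem M W)
  (c : ℕ → B → B → ℕ → ℂ)

/-- A choice of reduced words. -/
def IsChoice (r : W → List B) : Prop := ∀ w, cs.IsReduced (r w) ∧ cs.wordProd (r w) = w

theorem exists_isChoice : ∃ r, IsChoice cs r := by
  choose r hr using fun w => cs.exists_isReduced w
  exact ⟨r, fun w => ⟨(hr w).1, (hr w).2.symm⟩⟩

variable {cs} in
theorem IsChoice.length {r : W → List B} (hr : IsChoice cs r) (w : W) :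
    (r w).length = cs.length w := by rw [← (hr w).1.eq, (hr w).2]

open Classical in
theorem exists_isChoice_at {l : List B} (hl : cs.IsReduced l) :
    ∃ r, IsChoice cs r ∧ r (cs.wordProd l) = l := by
  obtain ⟨r, hr⟩ := exists_isChoice cs
  refine ⟨Function.update r (cs.wordProd l) l, fun w => ?_, by simp⟩
  rcases eq_or_ne w (cs.wordProd l) with rfl | h
  · simpa using hl
  · simpa [h] using hr w

/-- Solutions up to length `n` exist with arbitrary values on chosen reduced words. -/
def Presc (n : ℕ) : Prop := ∀ r : W → List B, IsChoice cs r → ∀ y : W → ℂ,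
  ∃ f ∈ Sol M c n, ∀ w, cs.length w ≤ n → f (r w) = y w

variable {cs c} (hc : IsCoeff M c)

theorem Presc.zero : Presc cs c 0 := by
  intro r hr y
  refine ⟨fun _ => y 1, ⟨fun _ _ _ _ => rfl, fun u i j v hij hm h => by omega⟩, fun w hw => ?_⟩
  rw [cs.length_eq_zero_iff.1 (by omega : cs.length w = 0)]

include hc in
/-- A solution given on words shorter than `n` has an extension to words of length `n` with
prescribed values on chosen reduced words of length `n`. -/
theorem Presc.fill {n : ℕ} (hP : Presc cs c n) {g : List B → ℂ}
    (hg : ∀ k, k + 1 = n → g ∈ Sol M c k) {r : W → List B} (hr : IsChoice cs r) (y : W → ℂ) :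
    ∃ F ∈ Sol M c n, (∀ l, l.length < n → F l = g l) ∧
      ∀ w, cs.length w = n → F (r w) = y w := by
  classical
  obtain ⟨F, hF, hv⟩ := hP r hr (fun w => if cs.length w < n then g (r w) else y w)
  refine ⟨F, hF, fun l hl => ?_, fun w hw => ?_⟩
  · obtain ⟨k, rfl⟩ := Nat.exists_eq_succ_of_ne_zero (by omega : n ≠ 0)
    refine Sol.eq_of_eq cs hc (k := k) (Sol.mono hF (Nat.le_succ k)) (hg k rfl) le_rfl
      (fun w hw => ⟨r w, (hr w).1, (hr w).2, ?_⟩) l (by omega)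
    rw [hv w (by omega), if_pos (by omega)]
  · rw [hv w (by omega), if_neg (by omega)]

include hc in
/-- Whether the defect of the relation for `i, j` vanishes in front of a reduced word depends only
on the element represented by that word. -/
theorem braidSum_transfer {n : ℕ} {g : List B → ℂ} (hg : PreSol M c n g) {i j : B}
    (hij : i ≠ j) (hm : M i j ≠ 0) {v v' : List B} (hlen : M i j + v.length = n + 1)
    (hv : cs.IsReduced v) (hv' : cs.IsReduced v') (hp : cs.wordProd v = cs.wordProd v')
    (h : braidSum M c g i j v = 0) : braidSum M c g i j v' = 0 := by
  have := length_eq_of_isReduced hv hv' hp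
  exact (Sol.vanish cs hc v.length (braidSum_mem hc hg hij hm hlen) le_rfl
    (braidSum_vanish hg.1 hij hm hlen)).2 v v' rfl this.symm hv hv' hp h

include hc in
/-- All polynomial relations of length `n + 1` follow from those whose leading words are
reduced. -/
theorem PreSol.mem_succ {n : ℕ} {g : List B → ℂ} (hg : PreSol M c n g)
    (hnil : ∀ i v, v.length + 2 ≤ n + 1 → g (i :: i :: v) = g v)
    (hbr : ∀ i j v, i ≠ j → M i j ≠ 0 → M i j + v.length = n + 1 →
      cs.IsReduced (altL i j (M i j) ++ v) → braidSum M c g i j v = 0) : g ∈ Sol M c (n + 1) := by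
  refine ⟨?_, ?_⟩
  · rintro (_ | ⟨a, u⟩) i v h
    · exact hnil i v (by simpa using h)
    · exact PreSol.nil hg _ i v h (by simp)
  · intro u i j v hij hm h
    by_cases hu : u = [] → M i j + v.length ≤ n
    · exact PreSol.braid hg u v hij hm h hu
    push Not at hu
    obtain ⟨rfl, hu⟩ := hu
    have hlen : M i j + v.length = n + 1 := by simp at h; omega
    simp only [List.nil_append]
    change braidSum M c g i j v = 0
    have hmem := braidSum_mem hc hg hij hm hlen
    have hV := Sol.vanish cs hc v.length hmem le_rfl (braidSum_vanish hg.1 hij hm hlen)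
    by_cases hv : cs.IsReduced v
    swap
    · exact hV.1 v rfl hv
    by_cases hred : cs.IsReduced (altL i j (M i j) ++ v)
    · exact hbr i j v hij hm hlen hred
    rcases descent_of_not_isReduced cs hij hv hred with hd | hd
    · obtain ⟨v', hr, hp⟩ := exists_cons_of_isLeftDescent cs hd
      have hl := length_eq_of_isReduced hr hv hp
      refine hV.2 (i :: v') v hl rfl hr hv hp ?_
      exact braidSum_cons hc hg hnil hij hm (by simp at hl; omega)
    · obtain ⟨v', hr, hp⟩ := exists_cons_of_isLeftDescent cs hd
      have hl := length_eq_of_isReduced hr hv hp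
      refine hV.2 (j :: v') v hl rfl hr hv hp ?_
      have hm' : M j i ≠ 0 := by rwa [M.symmetric]
      have hs := M.symmetric j i
      refine braidSum_swap hc hij.symm hm' ?_
      exact braidSum_cons hc hg hnil hij.symm hm' (by simp at hl; omega)

end Ext
end CoxAlg

/-! ### Local extension of a solution at one element -/

namespace CoxAlg

section Pullback
variable {B W : Type*} [Group W] {M : CoxeterMatrix B} (cs : CoxeterSystem M W)
  {c : ℕ → B → B → ℕ → ℂ} (hc : IsCoeff M c)
  {J W' : Type*} [Group W'] {M' : CoxeterMatrix J} (cs' : CoxeterSystem M' W')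
  {φ : J → B} (hφ : Function.Injective φ) (hM : ∀ a b, M' a b = M (φ a) (φ b))

include hc hφ hM in
theorem IsCoeff.comap : IsCoeff M' (fun o a b r => c o (φ a) (φ b) r) where
  shift _ _ _ _ := hc.shift _ _ _ _
  last o i j hij hm := by rw [hM] at *; exact hc.last _ _ _ (hφ.ne hij) hm
  zero o i j hij hm := by rw [hM] at *; exact hc.zero _ _ _ (hφ.ne hij) hm
  swap o i j hij hm := by rw [hM] at *; exact hc.swap _ _ _ (hφ.ne hij) hm

include hM in
theorem map_dw (a b : J) (r : ℕ) : (dw M' a b r).map φ = dw M (φ a) (φ b) r := by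
  unfold dw
  rw [hM]
  split_ifs <;> rw [map_altL]

include hM in
theorem braidSum_pullback (g : List B → ℂ) (p : List B) (d : List B) (a b : J) (v : List J) :
    braidSum M' (fun o a b r => c (o + d.length) (φ a) (φ b) r)
      (fun l => g (p ++ (l.map φ ++ d))) a b v =
    braidSum M c (fun l => g (p ++ l)) (φ a) (φ b) (v.map φ ++ d) := by
  unfold braidSum
  rw [hM]
  refine Finset.sum_congr rfl fun r _ => ?_
  simp only [List.map_append, map_dw hM, List.length_append, List.length_map, List.append_assoc,
    add_assoc]

include hφ hM in
theorem Sol.pullback {n k : ℕ} {g : List B → ℂ} (hg : g ∈ Sol M c n) (d : List B)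
    (h : k + d.length ≤ n) : (fun l : List J => g (l.map φ ++ d)) ∈
      Sol M' (fun o a b r => c (o + d.length) (φ a) (φ b) r) k := by
  refine ⟨fun u i v hl => ?_, fun u i j v hij hm hl => ?_⟩
  · have := Sol.nil hg (u.map φ) (φ i) (v.map φ ++ d) (by simp; omega)
    simpa using this
  · have := braidSum_pullback (c := c) hM g (u.map φ) d i j v
    simp only [List.map_append, List.append_assoc]
    rw [this]
    rw [hM] at hm hl
    exact Sol.braid hg _ _ (hφ.ne hij) hm (by simp; omega)

include hc hφ hM in
/-- At an element with descents `i, j, k`, the relation for `j, k` follows from those for `i, j`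
and `i, k`, as soon as solutions can be prescribed in the parabolic subgroup generated by
`i, j, k`: compare with the solution of the parabolic subgroup having the given values on words
starting with `i`. -/
theorem braidSum_third
    (hP : ∀ o n, Presc cs' (fun o' a b r => c (o' + o) (φ a) (φ b) r) n)
    {n : ℕ} {g : List B → ℂ} (hg : PreSol M c n g) {x : W} (hx : cs.length x = n + 1)
    {a₀ a b : J} (ha : a₀ ≠ a) (hb : a₀ ≠ b) (hab : a ≠ b)
    (hd₀ : cs.IsLeftDescent x (φ a₀)) (hda : cs.IsLeftDescent x (φ a))
    (hdb : cs.IsLeftDescent x (φ b))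
    (hA : ∀ p, p = a ∨ p = b → ∀ v, cs.IsReduced (altL (φ a₀) (φ p) (M (φ a₀) (φ p)) ++ v) →
      cs.wordProd (altL (φ a₀) (φ p) (M (φ a₀) (φ p)) ++ v) = x →
      braidSum M c g (φ a₀) (φ p) v = 0)
    {v : List B} (hv : cs.IsReduced (altL (φ a) (φ b) (M (φ a) (φ b)) ++ v))
    (hvx : cs.wordProd (altL (φ a) (φ b) (M (φ a) (φ b)) ++ v) = x) :
    braidSum M c g (φ a) (φ b) v = 0 := by
  obtain ⟨u, d, hr, hw, hdesc⟩ := parabolic_decomp cs cs' hφ hM x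
  have hu' : cs'.IsReduced u := parabolic_isReduced_of_map cs cs' hM (IsReduced.append_left hr)
  have hlen : u.length + d.length = n + 1 := by
    rw [← hx, ← hw, hr.eq]; simp
  -- a word for `u` in the parabolic subgroup gives a reduced word of `x`
  have hext : ∀ l, l.length ≤ u.length → cs'.wordProd l = cs'.wordProd u →
      cs.IsReduced (l.map φ ++ d) ∧ cs.wordProd (l.map φ ++ d) = x := by
    intro l hl hp
    have hp' : cs.wordProd (l.map φ ++ d) = cs.wordProd (u.map φ ++ d) := by
      rw [cs.wordProd_append, cs.wordProd_append, parabolic_wordProd_eq cs cs' hM hp]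
    exact ⟨isReduced_of_eq hr hp' (by simpa using hl), hp'.trans hw⟩
  have h₀ := hdesc a₀ hd₀
  obtain ⟨τ, hτ, hτu⟩ := exists_cons_of_isLeftDescent cs' h₀
  have hτl := length_eq_of_isReduced hτ hu' hτu
  obtain ⟨N, hN⟩ : ∃ N, u.length = N + 1 := ⟨τ.length, by rw [← hτl]; rfl⟩
  have hτN : τ.length = N := by rw [hN] at hτl; simpa using hτl
  obtain ⟨ρ, hρ, hρu⟩ := exists_isChoice_at cs' hτ
  have hc' := (hc.add d.length).comap hφ hM
  set c' : ℕ → J → J → ℕ → ℂ := fun o a b r => c (o + d.length) (φ a) (φ b) r with hc'def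
  set gd : List J → ℂ := fun l => g (l.map φ ++ d) with hgd
  obtain ⟨G, hG, hGv⟩ := hP d.length (N + 1) ρ hρ (fun w => gd (ρ w))
  have hgd1 : gd ∈ Sol M' c' N := Sol.pullback hφ hM hg.1 d (by omega)
  have hgd2 : ∀ p : J, (fun l => gd (p :: l)) ∈ Sol M' c' N := fun p =>
    Sol.pullback hφ hM (hg.2 (φ p)) d (by omega)
  have hlow : ∀ l, l.length ≤ N → G l = gd l :=
    Sol.eq_of_eq cs' hc' (Sol.mono hG (Nat.le_succ N)) hgd1 le_rfl
      fun w hw => ⟨ρ w, (hρ w).1, (hρ w).2, hGv w (by omega)⟩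
  -- agreement of `G` and `gd` at one word starting with `p` propagates
  have hprop : ∀ p l, cs'.IsReduced (p :: l) → cs'.wordProd (p :: l) = cs'.wordProd u →
      G (p :: l) = gd (p :: l) → ∀ l', cs'.IsReduced (p :: l') →
      cs'.wordProd (p :: l') = cs'.wordProd u → G (p :: l') = gd (p :: l') := by
    intro p l hl hlu he l' hl' hlu'
    have hll := length_eq_of_isReduced hl hu' hlu
    refine Sol.eq_at cs' hc' (Sol.cons hG p le_rfl) (hgd2 p)
      (fun l hl => hlow _ (by simp; omega)) (l := l) (by simp at hll; omega)
      ((isReduced_cons_iff cs').1 hl).1 ((isReduced_cons_iff cs').1 hl').1 ?_ he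
    rw [← hlu', cs'.wordProd_cons, cs'.wordProd_cons, mul_right_inj] at hlu
    exact hlu
  have hE₀ : ∀ l', cs'.IsReduced (a₀ :: l') → cs'.wordProd (a₀ :: l') = cs'.wordProd u →
      G (a₀ :: l') = gd (a₀ :: l') := by
    refine hprop a₀ τ hτ hτu ?_
    have := hGv (cs'.wordProd (a₀ :: τ)) (by rw [hτ.eq, hτl, hN])
    rwa [hρu] at this
  have hE : ∀ p, a₀ ≠ p → (p = a ∨ p = b) → cs.IsLeftDescent x (φ p) → ∀ l',
      cs'.IsReduced (p :: l') → cs'.wordProd (p :: l') = cs'.wordProd u →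
      G (p :: l') = gd (p :: l') := by
    intro p hp hpab hdp
    obtain ⟨hm, e, -, hel, h1, h2⟩ := dihedral_prefix cs' hp h₀ (hdesc p hdp) rfl
    have b1 : braidSum M' c' G a₀ p e = 0 := Sol.braid hG [] e hp hm (by simp; omega)
    have b2 : braidSum M' c' gd a₀ p e = 0 := by
      have h3 := hext _ (by simp; omega) h1
      have := braidSum_pullback (c := c) hM g [] d a₀ p e
      simp only [List.nil_append] at this
      rw [hgd, hc'def, this]
      rw [List.map_append, map_altL, hM, List.append_assoc] at h3
      exact hA p hpab _ h3.1 h3.2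
    have b3 : braidSum M' c' (fun l => G l - gd l) a₀ p e = 0 := by
      simp only [braidSum, mul_sub, Finset.sum_sub_distrib] at b1 b2 ⊢
      rw [b1, b2, sub_zero]
    rw [braidSum_eq_of_vanish hm fun l hl => sub_eq_zero.2 (hlow l (by omega))] at b3
    have r1 := isReduced_of_eq hu' h1 (by simp; omega)
    have r2 := isReduced_of_eq hu' h2 (by simp; omega)
    have hl0 := hc'.zero (M' a₀ p + e.length) a₀ p hp hm
    generalize c' (M' a₀ p + e.length) a₀ p 0 = c0 at *
    generalize c' (M' a₀ p + e.length) a₀ p (M' a₀ p) = c1 at *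
    obtain ⟨m, hm'⟩ := Nat.exists_eq_succ_of_ne_zero hm
    rw [hm'] at r1 r2 h1 h2 b3
    have s1 : G (altL a₀ p m.succ ++ e) - gd (altL a₀ p m.succ ++ e) = 0 :=
      sub_eq_zero.2 (hE₀ _ r1 h1)
    rw [s1, mul_zero, add_zero] at b3
    exact hprop p _ r2 h2 (sub_eq_zero.1 ((mul_eq_zero.1 b3).resolve_left hl0))
  obtain ⟨hm, e, -, hel, h1, h2⟩ := dihedral_prefix cs' hab (hdesc a hda) (hdesc b hdb) rfl
  have r1 := isReduced_of_eq hu' h1 (by simp; omega)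
  have r2 := isReduced_of_eq hu' h2 (by simp; omega)
  have b1 : braidSum M' c' G a b e = 0 := Sol.braid hG [] e hab hm (by simp; omega)
  have b2 : braidSum M' c' G a b e = braidSum M' c' gd a b e := by
    refine braidSum_congr fun r hr => ?_
    obtain ⟨m, hm'⟩ := Nat.exists_eq_succ_of_ne_zero hm
    rcases Nat.eq_zero_or_pos r with rfl | hr0
    · rw [dw_zero]
      rw [hm'] at r2 h2 ⊢
      exact hE b hb (Or.inr rfl) hdb _ r2 h2
    rcases hr.eq_or_lt with rfl | hlt
    · rw [dw_last]
      rw [hm'] at r1 h1 ⊢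
      exact hE a ha (Or.inl rfl) hda _ r1 h1
    · have := length_dw_lt M' a b hr0.ne' hlt
      exact hlow _ (by simp; omega)
  have b3 := braidSum_pullback (c := c) hM g [] d a b e
  simp only [List.nil_append] at b3
  rw [b2, hgd, hc'def, b3] at b1
  have h3 := hext _ (by simp; omega) h1
  rw [List.map_append, map_altL, hM, List.append_assoc] at h3
  refine braidSum_transfer hc hg (hφ.ne hab) (by rwa [← hM]) ?_ (IsReduced.append_right h3.1)
    (IsReduced.append_right hv) ?_ b1
  · rw [← hM]; simp; omega
  · have := h3.2.trans hvx.symm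
    rwa [cs.wordProd_append, cs.wordProd_append _ v, mul_right_inj] at this

end Pullback

section Local
variable {B W : Type*} [Group W] {M : CoxeterMatrix B} (cs : CoxeterSystem M W)
  {c : ℕ → B → B → ℕ → ℂ} (hc : IsCoeff M c)

include hc in
/-- Extension of a solution by one step near one element `x`: the values at words of `x` starting
with one fixed letter `i` are prescribed, those at words starting with another letter `j` are
forced by the relation for `i, j`. -/
theorem exists_local
    (hJ : ∀ i j k : B, i ≠ j → i ≠ k → j ≠ k → ∀ o n,
      Presc (Stmt0.restrict M ({i, j, k} : Set B)).toCoxeterSystem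
        (fun o' a b r => c (o' + o) a b r) n)
    {n : ℕ} (hP : Presc cs c n) {f : List B → ℂ} (hf : f ∈ Sol M c n) {l₀ : List B}
    (hl₀ : cs.IsReduced l₀) (hlen : l₀.length = n + 1) (y : ℂ) :
    ∃ g, PreSol M c n g ∧ (∀ l, l.length ≤ n → g l = f l) ∧ g l₀ = y ∧
      ∀ i j v, i ≠ j → M i j ≠ 0 → cs.IsReduced (altL i j (M i j) ++ v) →
        cs.wordProd (altL i j (M i j) ++ v) = cs.wordProd l₀ → braidSum M c g i j v = 0 := by
  classical
  obtain _ | ⟨i₀, τ⟩ := l₀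
  · simp at hlen
  have hτ : cs.IsReduced τ := ((isReduced_cons_iff cs).1 hl₀).1
  have hτl : τ.length = n := by simpa using hlen
  set x := cs.wordProd (i₀ :: τ) with hx
  have hfill : ∀ (j : B) (τ : List B), cs.IsReduced τ → τ.length = n → ∀ β : ℂ,
      ∃ F ∈ Sol M c n, (∀ l, l.length < n → F l = f (j :: l)) ∧ F τ = β := by
    intro j τ hτ hτl β
    obtain ⟨ρ, hρ, hρτ⟩ := exists_isChoice_at cs hτ
    obtain ⟨F, hF, h1, h2⟩ := Presc.fill hc hP (g := fun l => f (j :: l))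
      (fun k hk => Sol.cons hf j hk.le) hρ (fun _ => β)
    refine ⟨F, hF, h1, ?_⟩
    rw [← hρτ]
    exact h2 _ (by rw [hτ.eq, hτl])
  have hd₀ : cs.IsLeftDescent x i₀ := isLeftDescent_of_cons hl₀
  obtain ⟨F₀, hF₀, hF₀l, hF₀τ⟩ := hfill i₀ τ hτ hτl y
  -- the values on words starting with `i₀` or `j` only
  let glue : (List B → ℂ) → List B → ℂ := fun F l => if l.length ≤ n then f l else
    match l with
    | [] => 0
    | i :: v => if i = i₀ then F₀ v else F v
  have hstep : ∀ j : B, ∃ F ∈ Sol M c n, (∀ l, l.length < n → F l = f (j :: l)) ∧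
      (j = i₀ → F = F₀) ∧ (j ≠ i₀ → cs.IsLeftDescent x j → ∃ e,
        cs.IsReduced (altL i₀ j (M i₀ j) ++ e) ∧ cs.wordProd (altL i₀ j (M i₀ j) ++ e) = x ∧
        braidSum M c (glue F) i₀ j e = 0) := by
    intro j
    rcases eq_or_ne j i₀ with rfl | hj
    · exact ⟨F₀, hF₀, hF₀l, fun _ => rfl, fun h => absurd rfl h⟩
    by_cases hdj : cs.IsLeftDescent x j
    swap
    · obtain ⟨F, hF, h1, -⟩ := hfill j τ hτ hτl 0
      exact ⟨F, hF, h1, fun h => absurd h hj, fun _ h => absurd h hdj⟩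
    obtain ⟨hm, e, -, hel, h1, h2⟩ := dihedral_prefix cs hj.symm hd₀ hdj hx.symm
    rw [hlen] at hel
    obtain ⟨m, hm'⟩ := Nat.exists_eq_succ_of_ne_zero hm
    have r1 := isReduced_of_eq hl₀ h1 (by rw [List.length_append, length_altL]; omega)
    have r2 := isReduced_of_eq hl₀ h2 (by rw [List.length_append, length_altL]; omega)
    have hl0 := hc.zero (M i₀ j + e.length) i₀ j hj.symm hm
    have r2' : cs.IsReduced (altL i₀ j m ++ e) := by
      rw [hm'] at r2
      exact ((isReduced_cons_iff cs).1 r2).1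
    obtain ⟨F, hF, hF1, hF2⟩ := hfill j (altL i₀ j m ++ e) r2' (by simp; omega)
      (-(c (M i₀ j + e.length) i₀ j 0)⁻¹ * ∑ r ∈ Finset.range (M i₀ j),
        c (M i₀ j + e.length) i₀ j (r + 1) * glue 0 (dw M i₀ j (r + 1) ++ e))
    refine ⟨F, hF, hF1, fun h => absurd h hj, fun _ _ => ⟨e, r1, h1, ?_⟩⟩
    have g0 : glue F (dw M i₀ j 0 ++ e) = F (altL i₀ j m ++ e) := by
      rw [dw_zero, hm', altL_succ]
      simp only [glue]
      rw [if_neg (by simp; omega), List.cons_append]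
      simp only
      rw [if_neg hj]
    have g1 : ∀ r < M i₀ j, glue F (dw M i₀ j (r + 1) ++ e) =
        glue 0 (dw M i₀ j (r + 1) ++ e) := by
      intro r hr
      rcases (show r + 1 ≤ M i₀ j from hr).eq_or_lt with heq | hlt
      · rw [heq, dw_last, hm', altL_succ, List.cons_append]
        simp only [glue, if_true]
      · have := length_dw_lt M i₀ j (Nat.succ_ne_zero r) hlt
        have hle : (dw M i₀ j (r + 1) ++ e).length ≤ n := by simp at this ⊢; omega
        simp only [glue]
        rw [if_pos hle, if_pos hle]
    rw [braidSum, Finset.sum_range_succ', g0, hF2,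
      Finset.sum_congr rfl fun r hr => by rw [g1 r (Finset.mem_range.1 hr)]]
    field_simp
    ring
  choose F hF hFl hF₀' hFr using hstep
  let g : List B → ℂ := fun l => match l with
    | [] => f []
    | i :: v => F i v
  have hgf : ∀ l, l.length ≤ n → g l = f l := by
    rintro (_ | ⟨i, v⟩) h
    · rfl
    · exact hFl i v (by simpa using h)
  have hg : PreSol M c n g := ⟨Sol.congr hf hgf, fun i => hF i⟩
  have hx1 : cs.length x = n + 1 := by rw [hx, hl₀.eq, hlen]
  -- the relations involving `i₀`
  have hrel₀ : ∀ j v, i₀ ≠ j → M i₀ j ≠ 0 → cs.IsLeftDescent x j →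
      cs.IsReduced (altL i₀ j (M i₀ j) ++ v) → cs.wordProd (altL i₀ j (M i₀ j) ++ v) = x →
      braidSum M c g i₀ j v = 0 := by
    intro j v hj hm hdj hv hvx
    obtain ⟨e, he, hex, hz⟩ := hFr j hj.symm hdj
    have hel : M i₀ j + e.length = n + 1 := by
      rw [← hx1, ← hex, he.eq, List.length_append, length_altL]
    refine braidSum_transfer hc hg hj hm hel (IsReduced.append_right he)
      (IsReduced.append_right hv) ?_ ?_
    · have := hex.trans hvx.symm
      rwa [cs.wordProd_append, cs.wordProd_append _ v, mul_right_inj] at this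
    · rw [← hz]
      refine braidSum_congr fun r hr => ?_
      by_cases hle : (dw M i₀ j r ++ e).length ≤ n
      · rw [hgf _ hle]
        simp only [glue]
        rw [if_pos hle]
      · obtain ⟨m, hm'⟩ := Nat.exists_eq_succ_of_ne_zero hm
        simp only [glue]
        rw [if_neg hle]
        rcases Nat.eq_zero_or_pos r with rfl | hr0
        · rw [dw_zero, hm', altL_succ, List.cons_append]
          simp only [g]
          rw [if_neg hj.symm]
        rcases hr.eq_or_lt with rfl | hlt
        · rw [dw_last, hm', altL_succ, List.cons_append]
          simp only [g, if_true]
          rw [hF₀' i₀ rfl]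
        · have := length_dw_lt M i₀ j hr0.ne' hlt
          simp at hle; omega
  refine ⟨g, hg, hgf, ?_, ?_⟩
  · change F i₀ τ = y
    rw [hF₀' i₀ rfl, hF₀τ]
  · intro i j v hij hm hv hvx
    have hm2 : M j i ≠ 0 := by rwa [M.symmetric]
    have hvx' : cs.wordProd (altL j i (M j i) ++ v) = x := by
      rw [← hvx, cs.wordProd_append, cs.wordProd_append, M.symmetric j i, wordProd_altL_braid]
    have hv' : cs.IsReduced (altL j i (M j i) ++ v) :=
      isReduced_of_eq hv (hvx'.trans hvx.symm) (by simp [M.symmetric j i])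
    have hdesc : ∀ i j, M i j ≠ 0 → cs.IsReduced (altL i j (M i j) ++ v) →
        cs.wordProd (altL i j (M i j) ++ v) = x → cs.IsLeftDescent x i := by
      intro i j hm hv hvx
      obtain ⟨m, hm'⟩ := Nat.exists_eq_succ_of_ne_zero hm
      rw [hm', altL_succ, List.cons_append] at hv hvx
      rw [← hvx]; exact isLeftDescent_of_cons hv
    have hdi := hdesc i j hm hv hvx
    have hdj := hdesc j i hm2 hv' hvx'
    rcases eq_or_ne i₀ i with rfl | hi
    · exact hrel₀ j v hij hm hdj hv hvx
    rcases eq_or_ne i₀ j with rfl | hj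
    · exact braidSum_swap hc hij.symm hm2 (hrel₀ i v hij.symm hm2 hdi hv' hvx')
    refine braidSum_third cs hc (J := ({i₀, i, j} : Set B))
      (Stmt0.restrict M ({i₀, i, j} : Set B)).toCoxeterSystem (φ := Subtype.val)
      Subtype.val_injective (fun _ _ => rfl) (hJ i₀ i j hi hj hij) hg hx1
      (a₀ := ⟨i₀, by simp⟩) (a := ⟨i, by simp⟩) (b := ⟨j, by simp⟩)
      (by simpa using hi) (by simpa using hj) (by simpa using hij) hd₀ hdi hdj ?_ hv hvx
    rintro p hp v hv hvx
    rcases hp with rfl | rfl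
    · obtain ⟨hm, -⟩ := dihedral_prefix cs hi hd₀ hdi rfl
      exact hrel₀ i v hi hm hdi hv hvx
    · obtain ⟨hm, -⟩ := dihedral_prefix cs hj hd₀ hdj rfl
      exact hrel₀ j v hj hm hdj hv hvx

end Local
end CoxAlg

/-! ### Gluing local extensions -/

namespace CoxAlg

section Extension
variable {B W : Type*} [Group W] {M : CoxeterMatrix B} (cs : CoxeterSystem M W)
  {c : ℕ → B → B → ℕ → ℂ} (hc : IsCoeff M c)

open Classical in
/-- Modify a choice of reduced words so that it selects a word starting with `i` whenever this
is possible. -/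
def startWith (i : B) (r : W → List B) (w : W) : List B :=
  if cs.IsLeftDescent w i then i :: r (cs.simple i * w) else r w

theorem not_isLeftDescent_simple_mul {w : W} {i : B} (h : cs.IsLeftDescent w i) :
    ¬ cs.IsLeftDescent (cs.simple i * w) i := by
  intro h'
  have h1 := cs.isLeftDescent_iff.1 h
  have h2 := cs.isLeftDescent_iff.1 h'
  rw [cs.simple_mul_simple_cancel_left] at h2
  omega

theorem isLeftDescent_simple_mul {w : W} {i : B} (h : ¬ cs.IsLeftDescent w i) :
    cs.IsLeftDescent (cs.simple i * w) i := by
  have h1 := cs.not_isLeftDescent_iff.1 h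
  rw [cs.isLeftDescent_iff, cs.simple_mul_simple_cancel_left, h1]

theorem startWith_isChoice (i : B) {r : W → List B} (hr : IsChoice cs r) :
    IsChoice cs (startWith cs i r) := by
  intro w
  unfold startWith
  split_ifs with h
  · have hp : cs.wordProd (i :: r (cs.simple i * w)) = w := by
      rw [cs.wordProd_cons, (hr _).2, cs.simple_mul_simple_cancel_left]
    refine ⟨?_, hp⟩
    rw [CoxeterSystem.IsReduced, hp, List.length_cons, hr.length, cs.isLeftDescent_iff.1 h]
  · exact hr w

include hc in
/-- Local extensions at the elements of length `n + 1` glue to a solution up to length `n + 1`. -/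
theorem ext_step
    (hJ : ∀ i j k : B, i ≠ j → i ≠ k → j ≠ k → ∀ o n,
      Presc (Stmt0.restrict M ({i, j, k} : Set B)).toCoxeterSystem
        (fun o' a b r => c (o' + o) a b r) n)
    {n : ℕ} (hP : Presc cs c n) {f : List B → ℂ} (hf : f ∈ Sol M c n) {r : W → List B}
    (hr : IsChoice cs r) (y : W → ℂ) :
    ∃ f' ∈ Sol M c (n + 1), (∀ l, l.length ≤ n → f' l = f l) ∧
      ∀ w, cs.length w = n + 1 → f' (r w) = y w := by
  classical
  have hG : ∀ x, ∃ g, cs.length x = n + 1 → PreSol M c n g ∧ (∀ l, l.length ≤ n → g l = f l) ∧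
      g (r x) = y x ∧
      ∀ i j v, i ≠ j → M i j ≠ 0 → cs.IsReduced (altL i j (M i j) ++ v) →
        cs.wordProd (altL i j (M i j) ++ v) = x → braidSum M c g i j v = 0 := by
    intro x
    by_cases hx : cs.length x = n + 1
    · obtain ⟨g, h1, h2, h3, h4⟩ := exists_local cs hc hJ hP hf (hr x).1
        (by rw [hr.length, hx]) (y x)
      rw [(hr x).2] at h4
      exact ⟨g, fun _ => ⟨h1, h2, h3, h4⟩⟩
    · exact ⟨0, fun h => absurd h hx⟩
  choose G hG using hG
  let val : B → W → ℂ := fun i w => if cs.IsLeftDescent w i then f (r (cs.simple i * w)) else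
    if cs.length w < n then f (i :: r w) else G (cs.simple i * w) (i :: r w)
  have hval : ∀ i w, val i w = if cs.IsLeftDescent w i then f (r (cs.simple i * w)) else
    if cs.length w < n then f (i :: r w) else G (cs.simple i * w) (i :: r w) := fun _ _ => rfl
  clear_value val
  choose F hF hFv using fun i => hP _ (startWith_isChoice cs i hr) (val i)
  -- values of `F i` on the chosen words
  have hFd : ∀ i w, ¬ cs.IsLeftDescent w i → cs.length w + 1 ≤ n →
      F i (i :: r w) = f (r w) := by
    intro i w hd hw
    have h1 := isLeftDescent_simple_mul cs hd
    have h2 := cs.not_isLeftDescent_iff.1 hd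
    have := hFv i (cs.simple i * w) (by omega)
    rwa [startWith, if_pos h1, hval, if_pos h1, cs.simple_mul_simple_cancel_left] at this
  have hFn : ∀ i w, ¬ cs.IsLeftDescent w i → cs.length w < n → F i (r w) = f (i :: r w) := by
    intro i w hd hw
    have := hFv i w hw.le
    rwa [startWith, if_neg hd, hval, if_neg hd, if_pos hw] at this
  have hFx : ∀ i w, ¬ cs.IsLeftDescent w i → cs.length w = n →
      F i (r w) = G (cs.simple i * w) (i :: r w) := by
    intro i w hd hw
    have := hFv i w hw.le
    rwa [startWith, if_neg hd, hval, if_neg hd, if_neg (by omega)] at this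
  have A1 : ∀ i l, l.length < n → F i l = f (i :: l) := by
    intro i l hl
    obtain ⟨k, rfl⟩ := Nat.exists_eq_succ_of_ne_zero (by omega : n ≠ 0)
    refine Sol.eq_of_eq cs hc (k := k) (Sol.mono (hF i) (Nat.le_succ k))
      (Sol.cons hf i le_rfl) le_rfl (fun w hw => ?_) l (by omega)
    refine ⟨_, (startWith_isChoice cs i hr w).1, (startWith_isChoice cs i hr w).2, ?_⟩
    rw [hFv i w (by omega), startWith, hval]
    split_ifs with h1 h2
    · refine (Sol.nil hf [] i _ ?_).symm
      have := cs.isLeftDescent_iff.1 h1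
      rw [List.length_nil, hr.length]; omega
    · rfl
    · omega
  set f' : List B → ℂ := fun l => match l with
    | [] => f []
    | i :: v => F i v with hf'
  have A2 : ∀ l, l.length ≤ n → f' l = f l := by
    rintro (_ | ⟨i, v⟩) hl
    · rfl
    · exact A1 i v (by simpa using hl)
  have hpre : PreSol M c n f' := ⟨Sol.congr hf A2, hF⟩
  have A3 : ∀ i v, v.length + 2 ≤ n + 1 → f' (i :: i :: v) = f' v := by
    intro i v hv
    rw [A2 v (by omega)]
    change F i (i :: v) = f v
    obtain ⟨k, rfl⟩ := Nat.exists_eq_succ_of_ne_zero (by omega : n ≠ 0)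
    refine Sol.eq_of_eq cs hc (k := k) (Sol.cons (hF i) i le_rfl) (Sol.mono hf (Nat.le_succ k))
      le_rfl (fun w hw => ?_) v (by omega)
    refine ⟨_, (startWith_isChoice cs i hr w).1, (startWith_isChoice cs i hr w).2, ?_⟩
    rw [startWith]
    split_ifs with h
    · have := cs.isLeftDescent_iff.1 h
      rw [← hFn i _ (not_isLeftDescent_simple_mul cs h) (by omega)]
      refine Sol.nil (hF i) [] i _ ?_
      rw [List.length_nil, hr.length]; omega
    · exact hFd i w h (by omega)
  have A4 : ∀ x, cs.length x = n + 1 → ∀ l, cs.IsReduced l → cs.wordProd l = x →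
      f' l = G x l := by
    rintro x hx (_ | ⟨i, v⟩) hl hlx
    · have := hl.eq
      rw [hlx, hx] at this; simp at this
    have hv := ((isReduced_cons_iff cs).1 hl).1
    have hlen : v.length = n := by
      have := hl.eq
      rw [hlx, hx] at this; simpa using this.symm
    have hx' : cs.simple i * cs.wordProd v = x := by rw [← hlx, cs.wordProd_cons]
    have hvl : cs.length (cs.wordProd v) = n := by rw [hv.eq, hlen]
    have hd : ¬ cs.IsLeftDescent (cs.wordProd v) i := by
      rw [cs.not_isLeftDescent_iff, hx', hx, hvl]
    obtain ⟨hG1, hG2, -, -⟩ := hG x hx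
    refine Sol.eq_at cs hc (hF i) (hG1.2 i) (fun l hl => ?_)
      (l := r (cs.wordProd v)) (by rw [hr.length, hvl]) (hr _).1 hv (hr _).2 ?_
    · rw [A1 i l hl, hG2 _ (by simpa using hl)]
    · rw [hFx i _ hd hvl, hx']
  refine ⟨f', PreSol.mem_succ (cs := cs) hc hpre A3 (fun i j v hij hm hlen hred => ?_), A2, fun w hw => ?_⟩
  · set x := cs.wordProd (altL i j (M i j) ++ v) with hxdef
    have hx : cs.length x = n + 1 := by rw [hxdef, hred.eq]; simpa using hlen
    obtain ⟨hG1, hG2, hG3, hG4⟩ := hG x hx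
    rw [← hG4 i j v hij hm hred rfl]
    refine braidSum_congr fun s hs => ?_
    rcases eq_or_ne s 0 with rfl | hs0
    · rw [dw_zero]
      have hp : cs.wordProd (altL j i (M i j) ++ v) = x := by
        rw [hxdef, cs.wordProd_append, cs.wordProd_append, wordProd_altL_braid cs i j]
      exact A4 x hx _ (isReduced_of_eq hred hp (by simp)) hp
    rcases eq_or_ne s (M i j) with rfl | hsm
    · rw [dw_last]
      exact A4 x hx _ hred rfl
    · have := length_dw_lt (M := M) i j hs0 (by omega)
      have hl : (dw M i j s ++ v).length ≤ n := by simp; omega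
      rw [A2 _ hl, hG2 _ hl]
  · rw [A4 w hw _ (hr w).1 (hr w).2, (hG w hw).2.2.1]

include hc in
theorem presc_of_rank_three
    (hJ : ∀ i j k : B, i ≠ j → i ≠ k → j ≠ k → ∀ o n,
      Presc (Stmt0.restrict M ({i, j, k} : Set B)).toCoxeterSystem
        (fun o' a b r => c (o' + o) a b r) n) (n : ℕ) : Presc cs c n := by
  induction n with
  | zero => exact Presc.zero
  | succ n ih =>
    intro r hr y
    obtain ⟨f, hf, hfv⟩ := ih r hr y
    obtain ⟨f', h1, h2, h3⟩ := ext_step cs hc hJ ih hf hr y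
    refine ⟨f', h1, fun w hw => ?_⟩
    rcases Nat.lt_or_ge n (cs.length w) with h | h
    · exact h3 w (by omega)
    · rw [h2 _ (by rwa [hr.length]), hfv w h]

include hc in
/-- Solutions without any bound on the length, as limits of solutions up to length `n`. -/
theorem exists_sol_of_rank_three
    (hJ : ∀ i j k : B, i ≠ j → i ≠ k → j ≠ k → ∀ o n,
      Presc (Stmt0.restrict M ({i, j, k} : Set B)).toCoxeterSystem
        (fun o' a b r => c (o' + o) a b r) n) {r : W → List B} (hr : IsChoice cs r)
    (y : W → ℂ) : ∃ f, (∀ n, f ∈ Sol M c n) ∧ ∀ w, f (r w) = y w := by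
  -- solutions up to length `n`, each extending the preceding one
  have hstep : ∀ n (f : {f // f ∈ Sol M c n}), ∃ f' : {f // f ∈ Sol M c (n + 1)},
      (∀ l, l.length ≤ n → f'.1 l = f.1 l) ∧ ∀ w, cs.length w = n + 1 → f'.1 (r w) = y w := by
    rintro n ⟨f, hf⟩
    obtain ⟨f', h1, h2, h3⟩ := ext_step cs hc hJ (presc_of_rank_three cs hc hJ n) hf hr y
    exact ⟨⟨f', h1⟩, h2, h3⟩
  choose e he1 he2 using hstep
  obtain ⟨f₀, hf₀, hv₀⟩ := Presc.zero (cs := cs) (c := c) r hr y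
  let g : ∀ n, {f // f ∈ Sol M c n} := fun n => Nat.rec ⟨f₀, hf₀⟩ (fun n f => e n f) n
  have hg : ∀ n m (l : List B), l.length ≤ n → (g (n + m)).1 l = (g n).1 l := by
    intro n m l hl
    induction m with
    | zero => rfl
    | succ m ih => rw [← ih]; exact he1 (n + m) (g (n + m)) l (by omega)
  have hg' : ∀ n (l : List B), l.length ≤ n → (g l.length).1 l = (g n).1 l := by
    intro n l hl
    have := hg l.length (n - l.length) l le_rfl
    rwa [Nat.add_sub_cancel' hl, eq_comm] at this
  refine ⟨fun l => (g l.length).1 l, fun n => Sol.congr (g n).2 (hg' n), fun w => ?_⟩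
  change (g (r w).length).1 (r w) = _
  rw [hr.length]
  rcases h : cs.length w with _ | n
  · exact hv₀ w h.le
  · exact he2 n (g n) w h

end Extension
end CoxAlg

/-! ### Coefficients of the polynomial relations, and cancellation in words -/

namespace CoxAlg

section Coeffs
open Polynomial

theorem reverse_prod {ι : Type*} (s : Finset ι) (p : ι → ℂ[X]) :
    (∏ k ∈ s, p k).reverse = ∏ k ∈ s, (p k).reverse := by
  classical
  induction s using Finset.induction_on with
  | empty => simpa using reverse_C (1 : ℂ)
  | insert a s ha ih => rw [Finset.prod_insert ha, Finset.prod_insert ha, reverse_mul_of_domain, ih]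

theorem reverse_X_sub_C {u : ℂ} (hu : u ≠ 0) :
    (X - C u : ℂ[X]).reverse = C (-u) * (X - C u⁻¹) := by
  ext n
  rw [coeff_reverse, natDegree_X_sub_C, coeff_C_mul]
  rcases n with _ | _ | n
  · rw [revAt_le (by omega)]; simp [hu]
  · rw [revAt_le (by omega)]; simp
  · rw [revAt_eq_self_of_lt (by omega)]
    simp [coeff_X]

/-- The polynomial with inverse roots has the coefficients in the reverse order, up to a scalar. -/
theorem coeff_prod_inv {m : ℕ} {u : ℕ → ℂ} (hu : ∀ k < m, u k ≠ 0) :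
    ∃ a : ℂ, ∀ r ≤ m, (∏ k ∈ Finset.range m, (X - C (u k)⁻¹)).coeff r =
      a * (∏ k ∈ Finset.range m, (X - C (u k))).coeff (m - r) := by
  have hP : ∏ k ∈ Finset.range m, -u k ≠ 0 :=
    Finset.prod_ne_zero_iff.2 fun k hk => neg_ne_zero.2 (hu k (Finset.mem_range.1 hk))
  refine ⟨(∏ k ∈ Finset.range m, -u k)⁻¹, fun r hr => ?_⟩
  have h1 : (∏ k ∈ Finset.range m, (X - C (u k))).reverse =
      C (∏ k ∈ Finset.range m, -u k) * ∏ k ∈ Finset.range m, (X - C (u k)⁻¹) := by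
    rw [reverse_prod, map_prod, ← Finset.prod_mul_distrib]
    exact Finset.prod_congr rfl fun k hk => by
      rw [reverse_X_sub_C (hu k (Finset.mem_range.1 hk))]
  have h2 := congrArg (fun p => p.coeff r) h1
  simp only [coeff_reverse, coeff_C_mul, natDegree_finsetProd_X_sub_C_eq_card,
    Finset.card_range, revAt_le hr] at h2
  rw [h2, inv_mul_cancel_left₀ hP]

variable {B : Type*} (M : CoxeterMatrix B) (t : B → B → ℕ → ℂ)

/-- The polynomial relation between `i` and `j`. -/
def relPoly (i j : B) : ℂ[X] := ∏ k ∈ Finset.range (M i j), (X - C (t i j k))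

/-- The coefficients of the polynomial relation between `i` and `j`; at odd positions of a word
the roles of `i` and `j` are interchanged. -/
def coeffs (o : ℕ) (i j : B) (r : ℕ) : ℂ :=
  (if Even o then relPoly M t i j else relPoly M t j i).coeff r

variable {M t}

theorem relPoly_natDegree (i j : B) : (relPoly M t i j).natDegree = M i j := by
  rw [relPoly, natDegree_finsetProd_X_sub_C_eq_card, Finset.card_range]

theorem relPoly_coeff_last (i j : B) : (relPoly M t i j).coeff (M i j) = 1 := by
  have h : (relPoly M t i j).Monic := monic_prod_X_sub_C _ _
  have := h.coeff_natDegree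
  rwa [relPoly_natDegree] at this

variable (ht0 : ∀ i j k, i ≠ j → M i j ≠ 0 → k < M i j → t i j k ≠ 0)
  (htinv : ∀ i j k, i ≠ j → M i j ≠ 0 → k < M i j → t j i k = (t i j ((M i j - k) % M i j))⁻¹)

include ht0 in
theorem relPoly_coeff_zero {i j : B} (hij : i ≠ j) (hm : M i j ≠ 0) :
    (relPoly M t i j).coeff 0 ≠ 0 := by
  rw [relPoly, coeff_zero_prod]
  exact Finset.prod_ne_zero_iff.2 fun k hk => by
    simpa using ht0 i j k hij hm (Finset.mem_range.1 hk)

include htinv in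
theorem relPoly_swap {i j : B} (hij : i ≠ j) (hm : M i j ≠ 0) :
    relPoly M t j i = ∏ k ∈ Finset.range (M i j), (X - C (t i j k)⁻¹) := by
  rw [relPoly, M.symmetric j i]
  have hinv : ∀ k < M i j, (M i j - (M i j - k) % M i j) % M i j = k := by
    intro k hk
    rcases Nat.eq_zero_or_pos k with rfl | hk0
    · simp
    · rw [Nat.mod_eq_of_lt (by omega : M i j - k < M i j), Nat.sub_sub_self hk.le,
        Nat.mod_eq_of_lt hk]
  refine Finset.prod_bij' (fun k _ => (M i j - k) % M i j) (fun k _ => (M i j - k) % M i j)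
    ?_ ?_ ?_ ?_ ?_
  · exact fun k _ => Finset.mem_range.2 (Nat.mod_lt _ (Nat.pos_of_ne_zero hm))
  · exact fun k _ => Finset.mem_range.2 (Nat.mod_lt _ (Nat.pos_of_ne_zero hm))
  · exact fun k hk => hinv k (Finset.mem_range.1 hk)
  · exact fun k hk => hinv k (Finset.mem_range.1 hk)
  · intro k hk
    rw [htinv i j k hij hm (Finset.mem_range.1 hk)]

include ht0 htinv in
theorem isCoeff_coeffs : IsCoeff M (coeffs M t) where
  shift o i j r := by
    unfold coeffs
    by_cases h : Even o
    · rw [if_pos h, if_neg (by simpa [Nat.even_add_one] using h)]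
    · rw [if_neg h, if_pos (by simpa [Nat.even_add_one] using h)]
  last o i j _ _ := by
    unfold coeffs
    split_ifs
    · rw [relPoly_coeff_last]; exact one_ne_zero
    · rw [M.symmetric i j, relPoly_coeff_last]; exact one_ne_zero
  zero o i j hij hm := by
    unfold coeffs
    split_ifs
    · exact relPoly_coeff_zero ht0 hij hm
    · exact relPoly_coeff_zero ht0 hij.symm (by rwa [M.symmetric])
  swap o i j hij hm := by
    have key : ∀ i j, i ≠ j → M i j ≠ 0 → ∃ a : ℂ, ∀ r ≤ M i j,
        (relPoly M t j i).coeff r = a * (relPoly M t i j).coeff (M i j - r) := by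
      intro i j hij hm
      rw [relPoly_swap htinv hij hm]
      exact coeff_prod_inv fun k hk => ht0 i j k hij hm hk
    unfold coeffs
    split_ifs
    · exact key i j hij hm
    · have := key j i hij.symm (by rwa [M.symmetric])
      rwa [M.symmetric j i] at this

end Coeffs

section Words
variable {B : Type*} {X : Type*}

/-- Invariance under cancellation of double letters. -/
def CancelInv (f : List B → X) : Prop := ∀ u i v, f (u ++ i :: i :: v) = f (u ++ v)

variable {f : List B → X} (hf : CancelInv f)

include hf in
theorem CancelInv.reverse (l : List B) : ∀ u v, f (u ++ (l ++ (l.reverse ++ v))) = f (u ++ v) := by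
  induction l with
  | nil => simp
  | cons i l ih =>
    intro u v
    have := ih (u ++ [i]) (i :: v)
    simp only [List.append_assoc, List.singleton_append] at this
    simp only [List.reverse_cons, List.cons_append, List.append_assoc, List.nil_append]
    rw [this, hf]

variable (M : CoxeterMatrix B)

include hf in
theorem CancelInv.dw_succ (i j : B) {r : ℕ} (u v : List B) :
    f (u ++ (dw M i j (r + 1) ++ v)) = f (u ++ i :: j :: (dw M i j r ++ v)) := by
  unfold dw
  rcases Nat.lt_or_ge (2 * r) (M i j) with h | h
  · rw [if_neg (not_le.2 h)]
    rcases Nat.lt_or_ge (2 * r + 1) (M i j) with h' | h'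
    · have e1 : M i j - 2 * r = (M i j - 2 * (r + 1)) + 1 + 1 := by omega
      rw [e1, altL_succ, altL_succ]
      have e2 : f (u ++ i :: j :: (j :: i :: altL j i (M i j - 2 * (r + 1)) ++ v)) =
          f (u ++ (altL j i (M i j - 2 * (r + 1)) ++ v)) := by
        have := hf (u ++ [i]) j (i :: (altL j i (M i j - 2 * (r + 1)) ++ v))
        simp only [List.append_assoc, List.cons_append, List.nil_append] at this ⊢
        rw [this, hf]
      rw [e2]
      split_ifs with h2
      · rw [show 2 * (r + 1) - M i j = 0 by omega, show M i j - 2 * (r + 1) = 0 by omega]; rfl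
      · rfl
    · rw [if_pos (by omega), show 2 * (r + 1) - M i j = 0 + 1 by omega,
        show M i j - 2 * r = 0 + 1 by omega, altL_succ, altL_succ]
      have := hf (u ++ [i]) j v
      simp only [List.append_assoc, List.cons_append, List.nil_append, altL_zero] at this ⊢
      exact this.symm
  · rw [if_pos h, if_pos (by omega), show 2 * (r + 1) - M i j = 2 * r - M i j + 1 + 1 by omega,
      altL_succ, altL_succ]
    rfl

include hf in
/-- Up to cancellation, `w_r` is `(ij)^r w_0`. -/
theorem CancelInv.dw_eq (i j : B) (r : ℕ) : ∀ u v,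
    f (u ++ (dw M i j r ++ v)) = f (u ++ (altL i j (2 * r) ++ (dw M i j 0 ++ v))) := by
  induction r with
  | zero => intro u v; rfl
  | succ r ih =>
    intro u v
    rw [CancelInv.dw_succ hf, show 2 * (r + 1) = 2 * r + 1 + 1 by ring, altL_succ, altL_succ]
    have := ih (u ++ [i, j]) v
    simpa using this

end Words
end CoxAlg

/-! ### Functionals on the algebra are solutions -/

namespace CoxAlg
open Stmt0 Polynomial

section AlgSec
variable {B : Type*} [DecidableEq B] (M : CoxeterMatrix B) (t : B → B → ℕ → ℂ)

/-- The generator `a_{ij}` of `A_{u+}`, extended by `a_{ii} = 1`. -/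
def al (i j : B) : Alg M t := if h : i ≠ j then mk M t (gen i j h) else 1

variable {M t}

theorem al_self (i : B) : al M t i i = 1 := by simp [al]

theorem al_of_ne {i j : B} (h : i ≠ j) : al M t i j = mk M t (gen i j h) := dif_pos h

theorem mk_eq_of_rel {x y : FreeAlgebra ℂ (Gens B)} (h : Rel M t x y) : mk M t x = mk M t y :=
  RingQuot.mkAlgHom_rel ℂ h

theorem al_mul_symm (i j : B) : al M t i j * al M t j i = 1 := by
  by_cases h : i = j
  · subst h; rw [al_self, one_mul]
  · rw [al_of_ne h, al_of_ne (Ne.symm h), ← map_mul, mk_eq_of_rel (Rel.inv i j h), map_one]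

theorem al_mul (i j k : B) : al M t i j * al M t j k = al M t i k := by
  by_cases hij : i = j
  · subst hij; rw [al_self, one_mul]
  by_cases hjk : j = k
  · subst hjk; rw [al_self, mul_one]
  by_cases hki : k = i
  · subst hki; rw [al_mul_symm, al_self]
  have h : al M t i j * al M t j k * al M t k i = 1 := by
    rw [al_of_ne hij, al_of_ne hjk, al_of_ne hki, ← map_mul, ← map_mul,
      mk_eq_of_rel (Rel.triangle i j k hij hjk hki), map_one]
  calc al M t i j * al M t j k = al M t i j * al M t j k * (al M t k i * al M t i k) := by
        rw [al_mul_symm, mul_one]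
    _ = al M t i k := by rw [← mul_assoc, h, one_mul]

theorem aeval_al {i j : B} (h : i ≠ j) (hm : M i j ≠ 0) :
    aeval (al M t i j) (relPoly M t i j) = 0 := by
  rw [al_of_ne h, relPoly, aeval_algHom_apply, mk_eq_of_rel (Rel.poly i j h hm), map_zero]

theorem sum_coeff_al {i j : B} (h : i ≠ j) (hm : M i j ≠ 0) :
    ∑ r ∈ Finset.range (M i j + 1), (relPoly M t i j).coeff r • al M t i j ^ r = 0 := by
  rw [← aeval_al h hm, aeval_eq_sum_range' (n := M i j + 1) (by rw [relPoly_natDegree]; omega)]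

variable (M t) in
/-- The product of the generators `a_{ij}` over consecutive pairs of letters, with `a_{ii} = 1`
(junk value `0` on words of odd length). -/
def evalWord : List B → Alg M t
  | [] => 1
  | [_] => 0
  | i :: j :: l => al M t i j * evalWord l

variable (M t) in
/-- The product over all letters `i` of a word of `a_{ip}` at even and `a_{pi}` at odd
positions, where `p` is a fixed base point and the position of the first letter is `o`. -/
def basedWord (p : B) : ℕ → List B → Alg M t
  | _, [] => 1
  | o, i :: l => (if Even o then al M t i p else al M t p i) * basedWord p (o + 1) l

theorem basedWord_append (p : B) (u v : List B) (o : ℕ) :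
    basedWord M t p o (u ++ v) = basedWord M t p o u * basedWord M t p (o + u.length) v := by
  induction u generalizing o with
  | nil => simp [basedWord]
  | cons i u ih =>
    rw [List.cons_append, basedWord, basedWord, ih, mul_assoc, List.length_cons, add_assoc,
      add_comm 1]

theorem basedWord_congr (p : B) (l : List B) {o o' : ℕ} (h : Even o ↔ Even o') :
    basedWord M t p o l = basedWord M t p o' l := by
  induction l generalizing o o' with
  | nil => simp [basedWord]
  | cons i l ih =>
    rw [basedWord, basedWord, ih (o := o + 1) (o' := o' + 1) (by simp [Nat.even_add_one, h])]
    simp only [h]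

theorem basedWord_pair (p i j : B) (o : ℕ) (l : List B) :
    basedWord M t p o (i :: j :: l) =
      (if Even o then al M t i j else al M t p i * al M t j p) * basedWord M t p o l := by
  rw [basedWord, basedWord, basedWord_congr (o := o + 1 + 1) (o' := o) p l
    (by simp [Nat.even_add_one]), ← mul_assoc]
  by_cases h : Even o
  · rw [if_pos h, if_pos h, if_neg (by simpa [Nat.even_add_one] using h), al_mul]
  · rw [if_neg h, if_neg h, if_pos (by simpa [Nat.even_add_one] using h)]

theorem basedWord_cancelInv (p : B) (o : ℕ) : CancelInv (basedWord M t p o) := by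
  intro u i v
  rw [basedWord_append, basedWord_append, basedWord_pair]
  split_ifs
  · rw [al_self, one_mul]
  · rw [al_mul, al_self, one_mul]

theorem evalWord_eq_basedWord (p : B) : ∀ l : List B, Even l.length →
    evalWord M t l = basedWord M t p 0 l
  | [], _ => rfl
  | [_], h => by simp at h
  | i :: j :: l, h => by
    rw [evalWord, basedWord_pair, if_pos Even.zero, evalWord_eq_basedWord p l
      (by simpa [Nat.even_add_one] using h)]

theorem basedWord_altL (p i j : B) (o r : ℕ) :
    basedWord M t p o (altL i j (2 * r)) =
      (if Even o then al M t i j else al M t p i * al M t j p) ^ r := by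
  induction r with
  | zero => rw [pow_zero]; rfl
  | succ r ih =>
    rw [show 2 * (r + 1) = 2 * r + 1 + 1 by ring, altL_succ, altL_succ, basedWord_pair, ih,
      pow_succ']

/-- The polynomial relation, in front of a word `v` and behind a word `u`. -/
theorem basedWord_braid {i j : B} (hij : i ≠ j) (hm : M i j ≠ 0) (u v : List B)
    {o : ℕ} (ho : Even o ↔ Even u.length) :
    ∑ r ∈ Finset.range (M i j + 1), coeffs M t o i j r •
      basedWord M t i 0 (u ++ (dw M i j r ++ v)) = 0 := by
  have h : ∀ r, basedWord M t i 0 (u ++ (dw M i j r ++ v)) =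
      basedWord M t i 0 u * ((if Even o then al M t i j else al M t j i) ^ r *
        basedWord M t i u.length (dw M i j 0 ++ v)) := by
    intro r
    rw [CancelInv.dw_eq (basedWord_cancelInv i 0) M, basedWord_append, basedWord_append, zero_add,
      basedWord_altL, al_self, one_mul]
    simp only [ho]
    congr 2
    exact basedWord_congr _ _ (by simp [length_altL, Nat.even_add])
  have hs : ∀ r, coeffs M t o i j r • basedWord M t i 0 (u ++ (dw M i j r ++ v)) =
      basedWord M t i 0 u * ((coeffs M t o i j r • (if Even o then al M t i j else al M t j i) ^ r) *
        basedWord M t i u.length (dw M i j 0 ++ v)) := by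
    intro r
    rw [h, smul_mul_assoc, mul_smul_comm]
  rw [Finset.sum_congr rfl fun r _ => hs r, ← Finset.mul_sum, ← Finset.sum_mul]
  have h0 : ∑ r ∈ Finset.range (M i j + 1), coeffs M t o i j r •
      (if Even o then al M t i j else al M t j i) ^ r = 0 := by
    unfold coeffs
    split_ifs
    · exact sum_coeff_al hij hm
    · have := sum_coeff_al (M := M) (t := t) hij.symm (by rwa [M.symmetric])
      rwa [M.symmetric j i] at this
  rw [h0, zero_mul, mul_zero]

variable (M t) in
/-- Functions on words that satisfy all conditions and are supported on words of even length. -/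
def SolInf : Submodule ℂ (List B → ℂ) where
  carrier := {f | (∀ n, f ∈ Sol M (coeffs M t) n) ∧ ∀ l, ¬ Even l.length → f l = 0}
  add_mem' := fun h h' => ⟨fun n => add_mem (h.1 n) (h'.1 n), fun l hl => by
    simp [h.2 l hl, h'.2 l hl]⟩
  zero_mem' := ⟨fun _ => zero_mem _, fun _ _ => rfl⟩
  smul_mem' := fun a _ h => ⟨fun n => Submodule.smul_mem _ a (h.1 n), fun l hl => by
    simp [h.2 l hl]⟩

theorem SolInf.nil {f : List B → ℂ} (hf : f ∈ SolInf M t) : CancelInv f :=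
  fun u i v => Sol.nil (hf.1 _) u i v le_rfl

/-- A functional on the algebra gives a solution. -/
theorem functional_mem (L : Alg M t →ₗ[ℂ] ℂ) :
    (fun l => if Even l.length then L (evalWord M t l) else 0) ∈ SolInf M t := by
  refine ⟨fun n => ⟨fun u i v _ => ?_, fun u i j v hij hm _ => ?_⟩, fun l hl => if_neg hl⟩
  · have hpar : Even (u ++ i :: i :: v).length ↔ Even (u ++ v).length := by
      simp [Nat.even_add, Nat.even_add_one]
    dsimp only
    by_cases h : Even (u ++ v).length
    · rw [if_pos h, if_pos (hpar.2 h), evalWord_eq_basedWord i _ h,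
        evalWord_eq_basedWord i _ (hpar.2 h), basedWord_cancelInv]
    · rw [if_neg h, if_neg (mt hpar.1 h)]
  · unfold braidSum
    have hpar : ∀ r, Even (u ++ (dw M i j r ++ v)).length ↔ Even (u.length + (M i j + v.length)) := by
      intro r
      have := length_dw_mod_two M i j r
      simp only [List.length_append, Nat.even_iff]
      omega
    simp only [hpar]
    by_cases h : Even (u.length + (M i j + v.length))
    · simp only [if_pos h]
      have h' := basedWord_braid (t := t) hij hm u v (o := M i j + v.length)
        (by rw [Nat.even_add] at h; exact h.symm)
      have h'' := congrArg L h'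
      rw [map_sum, map_zero] at h''
      rw [← h'']
      refine Finset.sum_congr rfl fun r _ => ?_
      rw [map_smul, smul_eq_mul, evalWord_eq_basedWord i _ ((hpar r).2 h)]
    · simp [h]

/-- Left translation of solutions by a pair of letters. -/
def translate (i j : B) : Module.End ℂ (SolInf M t) where
  toFun f := ⟨fun l => f.1 (i :: j :: l), fun n => Sol.prefix (f.2.1 (n + 2)) [i, j]
    (by simp; omega), fun l hl => f.2.2 _ (by simpa [Nat.even_add_one] using hl)⟩
  map_add' _ _ := rfl
  map_smul' _ _ := rfl

theorem translate_pow (i j : B) (r : ℕ) (f : SolInf M t) (l : List B) :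
    ((translate i j ^ r) f).1 l = f.1 (altL i j (2 * r) ++ l) := by
  induction r generalizing f with
  | zero => rfl
  | succ r ih =>
    rw [pow_succ, Module.End.mul_apply, ih, show 2 * (r + 1) = 2 * r + 1 + 1 by ring, altL_succ,
      altL_succ]
    rfl

theorem aeval_translate {i j : B} (hij : i ≠ j) (hm : M i j ≠ 0) :
    aeval (translate (M := M) (t := t) i j) (relPoly M t i j) = 0 := by
  rw [aeval_eq_sum_range' (n := M i j + 1) (by rw [relPoly_natDegree]; omega)]
  refine LinearMap.ext fun f => Subtype.ext (funext fun l => ?_)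
  have hsum : ((∑ r ∈ Finset.range (M i j + 1),
      (relPoly M t i j).coeff r • translate (M := M) (t := t) i j ^ r) f).1 l =
      ∑ r ∈ Finset.range (M i j + 1), (relPoly M t i j).coeff r *
        f.1 (altL i j (2 * r) ++ l) := by
    simp only [LinearMap.sum_apply, LinearMap.smul_apply, Submodule.coe_sum, Finset.sum_apply,
      Submodule.coe_smul, Pi.smul_apply, smul_eq_mul, translate_pow]
  rw [hsum]
  change _ = (0 : ℂ)
  by_cases hl : Even l.length
  · have hb := Sol.braid (f.2.1 _) [] ((dw M i j 0).reverse ++ l) hij hm le_rfl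
    rw [← hb, braidSum]
    refine Finset.sum_congr rfl fun r _ => ?_
    have hc : Even (M i j + ((dw M i j 0).reverse ++ l).length) := by
      simp [dw_zero, Nat.even_add, hl]
    rw [coeffs, if_pos hc]
    congr 1
    have e1 := CancelInv.dw_eq (SolInf.nil f.2) M i j r [] ((dw M i j 0).reverse ++ l)
    have e2 := CancelInv.reverse (SolInf.nil f.2) (dw M i j 0) (altL i j (2 * r)) l
    exact (e1.trans e2).symm
  · refine Finset.sum_eq_zero fun r _ => ?_
    rw [f.2.2, mul_zero]
    simpa [Nat.even_add] using hl

variable (M t) in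
/-- The algebra acts from the right on the solutions by translations. -/
def action : Alg M t →ₐ[ℂ] (Module.End ℂ (SolInf M t))ᵐᵒᵖ :=
  RingQuot.liftAlgHom ℂ
    ⟨FreeAlgebra.lift ℂ fun p : Gens B => MulOpposite.op (translate p.1.1 p.1.2), by
      intro x y h
      induction h with
      | inv i j h =>
        simp only [gen, map_mul, FreeAlgebra.lift_ι_apply, map_one]
        rw [← MulOpposite.op_mul, ← MulOpposite.op_one]
        congr 1
        refine LinearMap.ext fun f => Subtype.ext (funext fun l => ?_)
        change f.1 (i :: j :: j :: i :: l) = f.1 l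
        exact (SolInf.nil f.2 [i] j (i :: l)).trans (SolInf.nil f.2 [] i l)
      | triangle i j p hij hjp hpi =>
        simp only [gen, map_mul, FreeAlgebra.lift_ι_apply, map_one]
        rw [← MulOpposite.op_mul, ← MulOpposite.op_mul, ← MulOpposite.op_one]
        congr 1
        refine LinearMap.ext fun f => Subtype.ext (funext fun l => ?_)
        change f.1 (i :: j :: j :: p :: p :: i :: l) = f.1 l
        exact (SolInf.nil f.2 [i] j _).trans ((SolInf.nil f.2 [i] p _).trans
          (SolInf.nil f.2 [] i l))
      | poly i j h hm =>
        rw [map_zero, ← aeval_algHom_apply, gen, FreeAlgebra.lift_ι_apply]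
        have := aeval_translate (t := t) h hm
        rw [aeval_eq_sum_range] at this ⊢
        rw [← MulOpposite.op_zero, ← this, Finset.op_sum]
        rfl⟩

theorem action_al (i j : B) : action M t (al M t i j) = MulOpposite.op (translate i j) := by
  by_cases h : i = j
  · subst h
    rw [al_self, map_one, ← MulOpposite.op_one]
    congr 1
    refine LinearMap.ext fun f => Subtype.ext (funext fun l => ?_)
    exact (SolInf.nil f.2 [] i l).symm
  · rw [al_of_ne h, action, mk, RingQuot.liftAlgHom_mkAlgHom_apply, gen,
      FreeAlgebra.lift_ι_apply]

theorem action_evalWord : ∀ (l : List B), Even l.length → ∀ (f : SolInf M t) (l' : List B),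
    ((action M t (evalWord M t l)).unop f).1 l' = f.1 (l ++ l')
  | [], _, f, l' => by rw [evalWord, map_one]; rfl
  | [_], h, _, _ => by simp at h
  | i :: j :: l, h, f, l' => by
    rw [evalWord, map_mul, action_al, MulOpposite.unop_mul, Module.End.mul_apply,
      action_evalWord l (by simpa [Nat.even_add_one] using h)]
    rfl

/-- A solution gives a functional on the algebra. -/
theorem exists_functional {f : List B → ℂ} (hf : f ∈ SolInf M t) :
    ∃ L : Alg M t →ₗ[ℂ] ℂ, ∀ l, Even l.length → L (evalWord M t l) = f l := by
  refine ⟨⟨⟨fun a => ((action M t a).unop ⟨f, hf⟩).1 [], fun a b => ?_⟩, fun s a => ?_⟩,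
    fun l hl => ?_⟩
  · simp
  · simp
  · have := action_evalWord l hl ⟨f, hf⟩ []
    simpa using this

theorem span_evalWord :
    Submodule.span ℂ (evalWord M t '' {l | Even l.length}) = ⊤ := by
  set N := Submodule.span ℂ (evalWord M t '' {l | Even l.length}) with hN
  have hmul : ∀ b : FreeAlgebra ℂ (Gens B), ∀ x ∈ N, mk M t b * x ∈ N := by
    intro b
    induction b using FreeAlgebra.induction with
    | grade0 a =>
      intro x hx
      rw [AlgHom.commutes, ← Algebra.smul_def]
      exact Submodule.smul_mem _ _ hx
    | grade1 p =>
      obtain ⟨⟨i, j⟩, h⟩ := p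
      intro x hx
      induction hx using Submodule.span_induction with
      | mem x hx =>
        obtain ⟨l, hl, rfl⟩ := hx
        refine Submodule.subset_span ⟨i :: j :: l, ?_, ?_⟩
        · simpa [Nat.even_add_one] using hl
        · rw [evalWord, al_of_ne h]; rfl
      | zero => simp
      | add x y _ _ hx hy => rw [mul_add]; exact add_mem hx hy
      | smul a x _ hx => rw [mul_smul_comm]; exact Submodule.smul_mem _ _ hx
    | mul a b ha hb => intro x hx; rw [map_mul, mul_assoc]; exact ha _ (hb _ hx)
    | add a b ha hb => intro x hx; rw [map_add, add_mul]; exact add_mem (ha _ hx) (hb _ hx)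
  rw [eq_top_iff]
  rintro a -
  obtain ⟨b, rfl⟩ := RingQuot.mkAlgHom_surjective ℂ (Rel M t) a
  have h1 : (1 : Alg M t) ∈ N := Submodule.subset_span ⟨[], Even.zero, rfl⟩
  have := hmul b 1 h1
  rwa [mul_one] at this

end AlgSec

end CoxAlg

/-! ### Bases and prescribed values -/

namespace CoxAlg

section Transport
variable {B W : Type*} [Group W] {M : CoxeterMatrix B} (cs : CoxeterSystem M W)
  {c : ℕ → B → B → ℕ → ℂ} (hc : IsCoeff M c)

include hc in
theorem Sol.eq_zero_of_lt {n k : ℕ} {f : List B → ℂ} (hf : f ∈ Sol M c n) (hk : k ≤ n)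
    {r : W → List B} (hr : IsChoice cs r) (h : ∀ w, cs.length w < k → f (r w) = 0) :
    ∀ l, l.length < k → f l = 0 := by
  intro l hl
  obtain ⟨k, rfl⟩ := Nat.exists_eq_succ_of_ne_zero (by omega : k ≠ 0)
  exact Sol.eq_zero cs hc hf (k := k) (by omega)
    (fun w hw => ⟨r w, (hr w).1, (hr w).2, h w (by omega)⟩) l (by omega)

include hc in
/-- The change between two choices of reduced words is triangular with respect to the length. -/
theorem Presc.of_choice {n : ℕ} {r₀ : W → List B} (hr₀ : IsChoice cs r₀)
    (h : ∀ y : W → ℂ, ∃ f ∈ Sol M c n, ∀ w, cs.length w ≤ n → f (r₀ w) = y w) :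
    Presc cs c n := by
  classical
  intro r hr y
  have key : ∀ k ≤ n + 1, ∃ f ∈ Sol M c n, ∀ w, cs.length w < k → f (r w) = y w := by
    intro k
    induction k with
    | zero => exact fun _ => ⟨0, zero_mem _, fun w hw => absurd hw (Nat.not_lt_zero _)⟩
    | succ k ih =>
      intro hk
      obtain ⟨f, hf, hfv⟩ := ih (by omega)
      obtain ⟨h₀, hh₀, hv₀⟩ := h fun w => if cs.length w = k then 1 else 0
      obtain ⟨h₁, hh₁, hv₁⟩ := h fun w => if cs.length w = k then (y w - f (r w)) / h₀ (r w) else 0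
      have hs₀ := Sol.eq_zero_of_lt cs hc hh₀ (by omega : k ≤ n) hr₀
        (fun w hw => by rw [hv₀ w (by omega), if_neg (by omega)])
      have hs₁ := Sol.eq_zero_of_lt cs hc hh₁ (by omega : k ≤ n) hr₀
        (fun w hw => by rw [hv₁ w (by omega), if_neg (by omega)])
      refine ⟨f + h₁, add_mem hf hh₁, fun w hw => ?_⟩
      rcases Nat.lt_or_ge (cs.length w) k with h' | h'
      · rw [Pi.add_apply, hfv w h', hs₁ _ (by rwa [hr.length]), add_zero]
      have hwk : cs.length w = k := by omega
      have hne : h₀ (r w) ≠ 0 := by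
        intro h0
        have := (Sol.vanish cs hc k hh₀ (by omega) hs₀).2 (r w) (r₀ w)
          (by rw [hr.length, hwk]) (by rw [hr₀.length, hwk]) (hr w).1 (hr₀ w).1
          ((hr w).2.trans (hr₀ w).2.symm) h0
        rw [hv₀ w (by omega), if_pos hwk] at this
        exact one_ne_zero this
      set a := (y w - f (r w)) / h₀ (r w) with ha
      have hz := (Sol.vanish cs hc k (sub_mem hh₁ (Submodule.smul_mem _ a hh₀)) (by omega)
        (fun l hl => by simp [hs₀ l hl, hs₁ l hl])).2 (r₀ w) (r w)
          (by rw [hr₀.length, hwk]) (by rw [hr.length, hwk]) (hr₀ w).1 (hr w).1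
          ((hr₀ w).2.trans (hr w).2.symm) (by
            simp [hv₀ w (by omega), hv₁ w (by omega), hwk, ha])
      have hz' : h₁ (r w) = a * h₀ (r w) := by simpa [sub_eq_zero] using hz
      rw [Pi.add_apply, hz', ha, div_mul_cancel₀ _ hne]
      ring
  obtain ⟨f, hf, hfv⟩ := key (n + 1) le_rfl
  exact ⟨f, hf, fun w hw => hfv w (by omega)⟩

open Classical in
/-- The conditions on functions on words do not mix words of even and of odd length. -/
theorem Sol.filter_parity {n : ℕ} {f : List B → ℂ} (hf : f ∈ Sol M c n) (e : Prop) :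
    (fun l : List B => if (Even l.length ↔ e) then f l else 0) ∈ Sol M c n := by
  refine ⟨fun u i v h => ?_, fun u i j v hij hm h => ?_⟩
  · have : Even (u ++ i :: i :: v).length ↔ Even (u ++ v).length := by
      simp [Nat.even_add, Nat.even_add_one]
    dsimp only
    rw [Sol.nil hf u i v h]
    simp only [this]
  · have hpar : ∀ r, Even (u ++ (dw M i j r ++ v)).length ↔
        Even (u.length + (M i j + v.length)) := by
      intro r
      have := length_dw_mod_two M i j r
      simp only [List.length_append, Nat.even_iff]
      omega
    have hb := Sol.braid hf u v hij hm h
    unfold braidSum at hb ⊢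
    simp only [hpar]
    split_ifs
    · exact hb
    · simp

include hc in
/-- Right multiplication by a simple reflection interchanges the two parities of positions. -/
theorem Presc.shift (j₀ : B) {n : ℕ} (hP : Presc cs c (n + 1)) :
    Presc cs (fun o => c (o + 1)) n := by
  obtain ⟨r, hr⟩ := exists_isChoice cs
  have hS := startWith_isChoice cs j₀ hr
  set R : W → List B := fun w => (startWith cs j₀ r w⁻¹).reverse with hR
  have hRc : IsChoice cs R := fun w =>
    ⟨(cs.isReduced_reverse_iff _).2 (hS _).1, by rw [hR, cs.wordProd_reverse, (hS _).2, inv_inv]⟩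
  refine Presc.of_choice cs (hc.add 1) hRc fun y => ?_
  obtain ⟨f, hf, hfv⟩ := hP R hRc fun z => y (z * cs.simple j₀)
  refine ⟨fun l => f (l ++ [j₀]), ?_, fun w hw => ?_⟩
  · have := Sol.pullback (φ := (id : B → B)) Function.injective_id (fun _ _ => rfl) (k := n) hf
      [j₀] le_rfl
    simpa using this
  have hlen : cs.length (w * cs.simple j₀) ≤ n + 1 := by
    have := cs.length_mul_le w (cs.simple j₀)
    rw [cs.length_simple] at this
    omega
  have hval := hfv (w * cs.simple j₀) hlen
  rw [cs.simple_mul_simple_cancel_right] at hval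
  rw [← hval]
  have hinv : (w * cs.simple j₀)⁻¹ = cs.simple j₀ * w⁻¹ := by simp
  change f ((startWith cs j₀ r w⁻¹).reverse ++ [j₀]) =
    f (startWith cs j₀ r (w * cs.simple j₀)⁻¹).reverse
  rw [hinv]
  by_cases hd : cs.IsLeftDescent w⁻¹ j₀
  · have hl := cs.isLeftDescent_iff.1 hd
    rw [startWith, if_pos hd, startWith, if_neg (not_isLeftDescent_simple_mul cs hd),
      List.reverse_cons, List.append_assoc]
    have := Sol.nil hf (r (cs.simple j₀ * w⁻¹)).reverse j₀ [] (by
      rw [List.length_reverse, hr.length, List.length_nil]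
      rw [cs.length_inv] at hl
      omega)
    simpa using this
  · rw [startWith, if_neg hd, startWith, if_pos (isLeftDescent_simple_mul cs hd),
      cs.simple_mul_simple_cancel_left, List.reverse_cons]

end Transport

section Bases
open Stmt0
variable {B W : Type*} [DecidableEq B] [Group W] {M : CoxeterMatrix B} (cs : CoxeterSystem M W)
  {t : B → B → ℕ → ℂ} (hc : IsCoeff M (coeffs M t))

variable (t) in
/-- Solutions with arbitrary values at the chosen words of the even elements exist. -/
def PrescEven (r : W → List B) : Prop :=
  ∀ y : W → ℂ, ∃ f ∈ SolInf M t, ∀ w, Even (cs.length w) → f (r w) = y w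

theorem pairProd_eq_evalWord : ∀ l : List B, cs.IsReduced l → pairProd M t l = evalWord M t l
  | [], _ => rfl
  | [_], _ => rfl
  | i :: j :: l, h => by
    obtain ⟨h1, h2⟩ := (isReduced_cons_iff cs).1 h
    have hij : i ≠ j := by
      rintro rfl
      exact h2 (isLeftDescent_of_cons h1)
    rw [pairProd, dif_pos hij, evalWord, al_of_ne hij,
      pairProd_eq_evalWord l ((isReduced_cons_iff cs).1 h1).1]

theorem prescEven_of_linearIndependent {r : W → List B} (hr : IsChoice cs r)
    (h : LinearIndependent ℂ (fun x : {x : W // Even (cs.length x)} => pairProd M t (r x))) :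
    PrescEven cs t r := by
  intro y
  obtain ⟨L, hL⟩ := ((Module.Basis.span h).constr ℂ
    fun x : {x : W // Even (cs.length x)} => y x).exists_extend
  refine ⟨_, functional_mem L, fun w hw => ?_⟩
  rw [if_pos (by rwa [hr.length]), ← pairProd_eq_evalWord cs _ (hr w).1]
  have h1 := LinearMap.congr_fun hL (Module.Basis.span h ⟨w, hw⟩)
  rw [Module.Basis.constr_basis, LinearMap.comp_apply, Submodule.subtype_apply,
    Module.Basis.span_apply] at h1
  exact h1

include hc in
/-- A solution prescribed to be the delta function at one element separates the term of maximal
length in a linear relation. -/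
theorem linearIndependent_of_prescEven {r r' : W → List B} (hr : IsChoice cs r)
    (hr' : IsChoice cs r') (h : PrescEven cs t r) :
    LinearIndependent ℂ (fun x : {x : W // Even (cs.length x)} => pairProd M t (r' x)) := by
  classical
  rw [linearIndependent_iff']
  intro s g hsum
  by_contra! hne
  obtain ⟨x₀, hx₀, hg₀⟩ := hne
  obtain ⟨x, hx, hmax⟩ := (s.filter fun x => g x ≠ 0).exists_max_image
    (fun x => cs.length x.1) ⟨x₀, Finset.mem_filter.2 ⟨hx₀, hg₀⟩⟩
  obtain ⟨hxs, hgx⟩ := Finset.mem_filter.1 hx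
  obtain ⟨f, hf, hfv⟩ := h fun w => if w = x.1 then 1 else 0
  have hshort := Sol.eq_zero_of_lt cs hc (hf.1 (cs.length x.1)) le_rfl hr (fun w hw => by
    by_cases hw' : Even (cs.length w)
    · rw [hfv w hw', if_neg]
      rintro rfl
      exact lt_irrefl _ hw
    · exact hf.2 _ (by rwa [hr.length]))
  have hvan := (Sol.vanish cs hc _ (hf.1 (cs.length x.1)) le_rfl hshort).2
  have hfx : f (r' x) ≠ 0 := by
    intro h0
    have := hvan (r' x) (r x) (hr'.length _) (hr.length _) (hr' _).1 (hr _).1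
      ((hr' _).2.trans (hr _).2.symm) h0
    rw [hfv _ x.2, if_pos rfl] at this
    exact one_ne_zero this
  obtain ⟨L, hL⟩ := exists_functional hf
  have hLv : ∀ x' : {x : W // Even (cs.length x)}, L (pairProd M t (r' x')) = f (r' x') := by
    intro x'
    rw [pairProd_eq_evalWord cs _ (hr' _).1, hL _ (by rw [hr'.length]; exact x'.2)]
  have h1 := congrArg L hsum
  rw [map_sum, map_zero, Finset.sum_eq_single x] at h1
  · rw [map_smul, hLv, smul_eq_mul] at h1
    exact (mul_ne_zero hgx hfx) h1
  · intro x' hx' hne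
    rw [map_smul, hLv, smul_eq_mul]
    by_cases hg' : g x' = 0
    · rw [hg', zero_mul]
    have hle := hmax x' (Finset.mem_filter.2 ⟨hx', hg'⟩)
    rcases hle.lt_or_eq with hlt | heq
    · rw [hshort _ (by rwa [hr'.length]), mul_zero]
    · rw [hvan (r x') (r' x') ((hr.length _).trans heq) ((hr'.length _).trans heq) (hr _).1
        (hr' _).1 ((hr _).2.trans (hr' _).2.symm) (by
          rw [hfv _ x'.2, if_neg fun h => hne (Subtype.ext h)]), mul_zero]
  · exact fun h => absurd hxs h

include hc in
/-- The elements `T_x` always span the algebra: a functional vanishing on them is a solution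
vanishing at one reduced word of each element. -/
theorem span_pairProd {r : W → List B} (hr : IsChoice cs r) :
    Submodule.span ℂ
      (Set.range fun x : {x : W // Even (cs.length x)} => pairProd M t (r x)) = ⊤ := by
  by_contra hne
  obtain ⟨L, hL0, hL⟩ := Submodule.exists_le_ker_of_lt_top _ (lt_top_iff_ne_top.2 hne)
  refine hL0 (LinearMap.ext_on span_evalWord ?_)
  rintro _ ⟨l, hl, rfl⟩
  have hf := functional_mem L
  have := Sol.eq_zero cs hc (hf.1 l.length) le_rfl (fun w _ => ⟨r w, (hr w).1, (hr w).2, ?_⟩) l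
    le_rfl
  · exact (if_pos hl).symm.trans this
  · split_ifs with he
    · rw [← pairProd_eq_evalWord cs _ (hr w).1]
      exact hL (Submodule.subset_span ⟨⟨w, by rwa [hr.length] at he⟩, rfl⟩)
    · rfl

include hc in
/-- The elements `T_x` form a basis if and only if solutions with prescribed values at even
elements exist; both properties are independent of the choice of reduced words. -/
theorem isFlatAt_iff {r r' : W → List B} (hr : IsChoice cs r) (hr' : IsChoice cs r') :
    IsFlatAt M cs t r ↔ PrescEven cs t r' := by
  constructor
  · intro h
    exact prescEven_of_linearIndependent cs hr' (linearIndependent_of_prescEven cs hc hr hr'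
      (prescEven_of_linearIndependent cs hr h.1))
  · intro h
    exact ⟨linearIndependent_of_prescEven cs hc hr' hr h, span_pairProd cs hc hr⟩

include hc in
/-- Solutions prescribed at even elements give, by translation, solutions prescribed at all
elements. -/
theorem presc_of_prescEven (j₀ : B) (h : ∀ r, IsChoice cs r → PrescEven cs t r) (n : ℕ) :
    Presc cs (coeffs M t) n := by
  classical
  obtain ⟨r, hr⟩ := exists_isChoice cs
  set R := startWith cs j₀ r with hR
  have hRc : IsChoice cs R := startWith_isChoice cs j₀ hr
  refine Presc.of_choice cs hc hRc fun y => ?_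
  obtain ⟨f, hf, hfv⟩ := h R hRc y
  obtain ⟨g, hg, hgv⟩ := h R hRc fun z => y (cs.simple j₀ * z)
  refine ⟨_, add_mem (hf.1 n) (Sol.filter_parity (Sol.cons (hg.1 (n + 1)) j₀ le_rfl) False),
    fun w _ => ?_⟩
  rw [Pi.add_apply]
  rw [hRc.length]
  by_cases hw : Even (cs.length w)
  · rw [hfv w hw, if_neg (by simpa using hw), add_zero]
  · rw [hf.2 _ (by rwa [hRc.length]), if_pos (by simpa using hw), zero_add]
    have hev : Even (cs.length (cs.simple j₀ * w)) := by
      rcases cs.length_simple_mul w j₀ with h' | h'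
      · rw [h']; simpa [Nat.even_add_one] using hw
      · rw [← h'] at hw; simpa [Nat.even_add_one] using hw
    have := hgv (cs.simple j₀ * w) hev
    rw [cs.simple_mul_simple_cancel_left] at this
    rw [← this, hR]
    by_cases hd : cs.IsLeftDescent w j₀
    · rw [startWith, if_pos hd, startWith, if_neg (not_isLeftDescent_simple_mul cs hd)]
      exact SolInf.nil hg [] j₀ _
    · rw [startWith, if_neg hd, startWith, if_pos (isLeftDescent_simple_mul cs hd),
        cs.simple_mul_simple_cancel_left]

include hc in
theorem presc_shift_of_prescEven (j₀ : B) (h : ∀ r, IsChoice cs r → PrescEven cs t r)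
    (o n : ℕ) : Presc cs (fun o' => coeffs M t (o' + o)) n := by
  rcases Nat.even_or_odd o with he | ho
  · have : (fun o' => coeffs M t (o' + o)) = coeffs M t :=
      funext fun o' => hc.congr_mod (by have := Nat.even_iff.1 he; omega)
    rw [this]
    exact presc_of_prescEven cs hc j₀ h n
  · have : (fun o' => coeffs M t (o' + o)) = fun o' => coeffs M t (o' + 1) :=
      funext fun o' => hc.congr_mod (by have := Nat.odd_iff.1 ho; omega)
    rw [this]
    exact Presc.shift cs hc j₀ (presc_of_prescEven cs hc j₀ h (n + 1))

include hc in
theorem prescEven_of_rank_three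
    (hJ : ∀ i j k : B, i ≠ j → i ≠ k → j ≠ k → ∀ o n,
      Presc (Stmt0.restrict M ({i, j, k} : Set B)).toCoxeterSystem
        (fun o' a b r => coeffs M t (o' + o) a b r) n) {r : W → List B} (hr : IsChoice cs r) :
    PrescEven cs t r := by
  classical
  intro y
  obtain ⟨f, hf, hfv⟩ := exists_sol_of_rank_three cs hc hJ hr y
  refine ⟨_, ⟨fun n => Sol.filter_parity (hf n) True, fun l hl => if_neg (by simpa using hl)⟩,
    fun w hw => ?_⟩
  rw [if_pos (by simpa [hr.length] using hw), hfv]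

/-- Restriction of solutions to a parabolic subgroup. -/
theorem prescEven_parabolic {J W' : Type*} [Group W'] {M' : CoxeterMatrix J}
    (cs' : CoxeterSystem M' W') {φ : J → B} (hφ : Function.Injective φ)
    (hM : ∀ a b, M' a b = M (φ a) (φ b)) (h : ∀ r, IsChoice cs r → PrescEven cs t r)
    {r' : W' → List J} (hr' : IsChoice cs' r') :
    PrescEven cs' (fun a b k => t (φ a) (φ b) k) r' := by
  classical
  -- a choice of reduced words that extends the given one
  obtain ⟨r₀, hr₀⟩ := exists_isChoice cs
  set e : W' → W := fun u => cs.wordProd ((r' u).map φ) with he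
  have hinj : Function.Injective e := by
    intro u u' huu
    have := parabolic_wordProd_injective cs cs' hφ hM (hr' u).1 (hr' u').1 huu
    rwa [(hr' u).2, (hr' u').2] at this
  set r : W → List B := fun w => if hw : ∃ u, e u = w then (r' hw.choose).map φ else r₀ w with hr
  have hrc : IsChoice cs r := by
    intro w
    by_cases hw : ∃ u, e u = w
    · simp only [hr, dif_pos hw]
      exact ⟨parabolic_isReduced_map cs cs' hφ hM (hr' _).1, hw.choose_spec⟩
    · simp only [hr, dif_neg hw]
      exact hr₀ w
  have hre : ∀ u, r (e u) = (r' u).map φ := by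
    intro u
    have hw : ∃ u', e u' = e u := ⟨u, rfl⟩
    simp only [hr, dif_pos hw]
    rw [hinj hw.choose_spec]
  intro y
  obtain ⟨f, hf, hfv⟩ := h r hrc fun w => if hw : ∃ u, e u = w then y hw.choose else 0
  have hcoef : coeffs M' (fun a b k => t (φ a) (φ b) k) =
      fun o a b r => coeffs M t o (φ a) (φ b) r := by
    funext o a b s
    simp only [coeffs, relPoly, hM]
  refine ⟨fun l => f (l.map φ), ⟨fun n => ?_, fun l hl => hf.2 _ (by simpa using hl)⟩,
    fun u hu => ?_⟩
  · have := Sol.pullback hφ hM (k := n) (hf.1 n) [] (by simp)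
    rw [hcoef]
    simpa using this
  · have hev : Even (cs.length (e u)) := by
      have : cs.length (e u) = cs'.length u := by
        rw [← hrc.length, hre, List.length_map, hr'.length]
      rwa [this]
    have hw : ∃ u', e u' = e u := ⟨u, rfl⟩
    dsimp only
    rw [← hre, hfv _ hev, dif_pos hw, hinj hw.choose_spec]

end Bases
end CoxAlg

open CoxAlg in
open Stmt0 in
/-- Theorem 1.1 of Etingof–Rains, "New deformations of group algebras of Coxeter groups,
II": `(T_x)_{x ∈ W₊}` is a basis of `A_{u+}` iff for every 3-element subset
`Δ = {i,j,p} ⊆ I`, the analogous family is a basis of the rank-3 algebra `A_{u+}^Δ`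
(for any choice of reduced expressions in the Coxeter group `W_Δ` of the restricted
Coxeter matrix). -/
theorem main_theorem {I : Type*} [Fintype I] [DecidableEq I]
    {W : Type*} [Group W] (M : CoxeterMatrix I) (cs : CoxeterSystem M W)
    (t : I → I → ℕ → ℂ)
    (ht0 : ∀ i j k, i ≠ j → M i j ≠ 0 → k < M i j → t i j k ≠ 0)
    (htinv : ∀ i j k, i ≠ j → M i j ≠ 0 → k < M i j →
      t j i k = (t i j ((M i j - k) % M i j))⁻¹)
    (w : W → List I)
    (hw : ∀ x : W, cs.wordProd (w x) = x ∧ cs.IsReduced (w x)) :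
    IsFlatAt M cs t w ↔
    (∀ i j p : I, i ≠ j → j ≠ p → p ≠ i →
      ∀ wΔ : (restrict M ({i, j, p} : Set I)).Group → List (({i, j, p} : Set I) : Type _),
        (∀ x, (restrict M ({i, j, p} : Set I)).toCoxeterSystem.wordProd (wΔ x) = x ∧
              (restrict M ({i, j, p} : Set I)).toCoxeterSystem.IsReduced (wΔ x)) →
        IsFlatAt (restrict M ({i, j, p} : Set I))
          (restrict M ({i, j, p} : Set I)).toCoxeterSystem
          (fun a b k => t a b k) wΔ) := by
  have hc : IsCoeff M (coeffs M t) := isCoeff_coeffs ht0 htinv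
  have hcJ : ∀ S : Set I, IsCoeff (restrict M S) (coeffs (restrict M S) fun a b k => t a b k) :=
    fun S => isCoeff_coeffs
      (fun i j k hij hm hk => ht0 i j k (fun h => hij (Subtype.ext h)) hm hk)
      (fun i j k hij hm hk => htinv i j k (fun h => hij (Subtype.ext h)) hm hk)
  have hwc : IsChoice cs w := fun x => (hw x).symm
  constructor
  · intro hflat i j p _ _ _ wΔ hwΔ
    have hwΔc : IsChoice (restrict M ({i, j, p} : Set I)).toCoxeterSystem wΔ :=
      fun x => (hwΔ x).symm
    refine (isFlatAt_iff _ (hcJ _) hwΔc hwΔc).2 ?_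
    exact prescEven_parabolic cs _ Subtype.val_injective (fun _ _ => rfl)
      (fun r hr => (isFlatAt_iff cs hc hwc hr).1 hflat) hwΔc
  · intro hJ
    refine (isFlatAt_iff cs hc hwc hwc).2 (prescEven_of_rank_three cs hc ?_ hwc)
    intro i j p hij hip hjp o n
    refine presc_shift_of_prescEven (restrict M ({i, j, p} : Set I)).toCoxeterSystem (hcJ _)
      ⟨i, by simp⟩ (fun r hr => ?_) o n
    exact (isFlatAt_iff _ (hcJ _) hr hr).1 (hJ i j p hij hjp hip.symm r fun x => (hr x).symm)
end
end

section
/- Lemma 4.1, case $(2,2,n)$ with $n$ even: Let $n\ge2$ be even. If the nonzero complex parameters satisfy $t_{12,2}t_{23,2}=t_{13,n}$, $t_{12,1}t_{23,1}=t_{13,n}$, $t_{12,2}t_{23,1}=t_{13,n/2}$, $t_{12,1}t_{23,2}=t_{13,n/2}$, and $t_{12,1}t_{12,2}t_{23,1}t_{23,2}=t_{13,i}\,t_{13,n-i}$ for all integers $1\le i<n/2$, then $\dim_{\mathbb{C}}A_+(2,2,n;t)=2n$, i.e., the algebra $A_{u+}$ is flat at these parameters. -/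
/-!
Let `B` be the algebra on two generators `α, β` with `α² = β² = δ`. The element `z = αβ + βα` is
central and `B` is free over `ℂ[z]` on `1, α, β, αβ`. Write `x = t₁₂₁`, `y = t₂₃₁`, `n = 2m`.
The hypotheses force `t₁₂₂ = ε x` and `t₂₃₂ = ε y` with the same sign `ε = ±1`, so the algebra with
only the relations on `a` and on `b` is `B`: for `ε = 1` with `δ = 0`, `a = x + α`, `b = y + β`,
and for `ε = -1` with `δ = 1`, `a = xα`, `b = yβ`.

Put `u = ab` and let `u'` be the element with `u u' = u' u = (xy)²`; then `w = u + u'` is an affine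
function of `z`. Since `t₁₃ᵢ t₁₃₍ₙ₋ᵢ₎ = (xy)²` for `1 ≤ i < m`, each pair of factors of the
polynomial of `u` equals `(w - t₁₃ᵢ - t₁₃₍ₙ₋ᵢ₎) u`, and the last relation becomes, up to the unit
`u ^ m` and nonzero scalars (`aeval_unipotent`, `aeval_involutive`):

* for `ε = 1`: `G(z) = 0` with `deg G = m`, and `B/(G)` has dimension `4m = 2n`;
* for `ε = -1`: `G(z)(αβ - z/2) = 0` with `deg G = m - 1`. In the basis
  `1, α, β - zα/2, αβ - z/2` the two-sided ideal generated by this element is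
  `(F) ⊕ (F) ⊕ (G) ⊕ (G)` with `F = (1 - z²/4) G`, so the quotient has dimension
  `2(m + 1) + 2(m - 1) = 2n`.

Both cases are instances of `finrank_of_model`, which compares the algebra with the `ℂ[X]`-module
`ℂ[X]⁴ / ((F) ⊕ (F) ⊕ (G) ⊕ (G))`. Left multiplication by `α` and `β` is given there by explicit
operators, so the presented algebra acts on it. The coordinate map from `ℂ[X]⁴` to the algebra is
onto because its range is stable under left multiplication by the generators; its kernel contains
`(F) ⊕ (F) ⊕ (G) ⊕ (G)` by the relations and is contained in it because applying the image of a
vector to the first basis vector returns the class of that vector.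
-/


/-!
Lemma 4.1, case `(2,2,n)` with `n` even. We define `A_+(p,q,r;t)` as the quotient of the free
unital associative `ℂ`-algebra on two generators `a, b` by the two-sided ideal generated by
`∏_{k=1}^{p} (a - t₁₂ₖ)`, `∏_{k=1}^{q} (b - t₂₃ₖ)` and `∏_{k=1}^{r} (ab - t₁₃ₖ)`.
Flatness at these parameters means `dim_ℂ A_+(2,2,n;t) = 2n`.
-/

noncomputable section

open Polynomial

namespace Rank3

/-- The generator `a`. -/
def a : FreeAlgebra ℂ (Fin 2) := FreeAlgebra.ι ℂ 0

/-- The generator `b`. -/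
def b : FreeAlgebra ℂ (Fin 2) := FreeAlgebra.ι ℂ 1

/-- The relations of `A_+(p,q,r;t)`: the minimal polynomial relations for `a`, `b` and `ab`. -/
inductive Rel (p q r : ℕ) (t12 t23 t13 : ℕ → ℂ) :
    FreeAlgebra ℂ (Fin 2) → FreeAlgebra ℂ (Fin 2) → Prop
  | ra : Rel p q r t12 t23 t13
      (aeval a (∏ k ∈ Finset.Icc 1 p, (X - C (t12 k)))) 0
  | rb : Rel p q r t12 t23 t13
      (aeval b (∏ k ∈ Finset.Icc 1 q, (X - C (t23 k)))) 0
  | rab : Rel p q r t12 t23 t13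
      (aeval (a * b) (∏ k ∈ Finset.Icc 1 r, (X - C (t13 k)))) 0

/-- The algebra `A_+(p,q,r;t)`. -/
abbrev Aplus (p q r : ℕ) (t12 t23 t13 : ℕ → ℂ) : Type :=
  RingQuot (Rel p q r t12 t23 t13)

end Rank3

namespace Rank3

/-! ### The model module -/

/-- Left multiplication by `α` in the rank-four `ℂ[z]`-algebra `⟨α, β ∣ α² = β² = δ⟩`, where
`z = αβ + βα`, on the basis `1, α, β - λzα, αβ - λδz`. The scalar `λ` is arbitrary and does not
enter this operator. -/
def opA (δ : ℂ) : (Fin 4 → ℂ[X]) →ₗ[ℂ[X]] (Fin 4 → ℂ[X]) where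
  toFun v := ![C δ * v 1, v 0, C δ * v 3, v 2]
  map_add' u v := by ext1 i; fin_cases i <;> simp <;> ring
  map_smul' c v := by ext1 i; fin_cases i <;> simp <;> ring

/-- Left multiplication by `β` on the same basis, with `λ` written `l`. The argument `μ` stands for
`1 - λδ`, a condition assumed only where it is needed. -/
def opB (δ l μ : ℂ) : (Fin 4 → ℂ[X]) →ₗ[ℂ[X]] (Fin 4 → ℂ[X]) where
  toFun v := ![C μ * X * v 1 + (C δ - C (l * μ) * X ^ 2) * v 2,
    C l * X * v 0 + (C (l * μ) * X ^ 2 - C δ) * v 3,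
    v 0 + C μ * X * v 3, - v 1 + C l * X * v 2]
  map_add' u v := by ext1 i; fin_cases i <;> simp <;> ring
  map_smul' c v := by ext1 i; fin_cases i <;> simp <;> ring

section Coordinates

variable (δ l μ : ℂ) (v : Fin 4 → ℂ[X])

lemma opA_zero : opA δ v 0 = C δ * v 1 := rfl
lemma opA_one : opA δ v 1 = v 0 := rfl
lemma opA_two : opA δ v 2 = C δ * v 3 := rfl
lemma opA_three : opA δ v 3 = v 2 := rfl
lemma opB_zero : opB δ l μ v 0 =
    C μ * X * v 1 + (C δ - C (l * μ) * X ^ 2) * v 2 := rfl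
lemma opB_one : opB δ l μ v 1 = C l * X * v 0 + (C (l * μ) * X ^ 2 - C δ) * v 3 := rfl
lemma opB_two : opB δ l μ v 2 = v 0 + C μ * X * v 3 := rfl
lemma opB_three : opB δ l μ v 3 = - v 1 + C l * X * v 2 := rfl

end Coordinates

lemma vec_ext {u v : Fin 4 → ℂ[X]} (h0 : u 0 = v 0) (h1 : u 1 = v 1) (h2 : u 2 = v 2)
    (h3 : u 3 = v 3) : u = v := by
  funext i
  fin_cases i <;> assumption

/-- The submodule `(F) ⊕ (F) ⊕ (G) ⊕ (G)` of `ℂ[X]⁴`. -/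
def relMod (F G : ℂ[X]) : Submodule ℂ[X] (Fin 4 → ℂ[X]) :=
  Submodule.pi Set.univ fun i => Ideal.span {(![F, F, G, G] : Fin 4 → ℂ[X]) i}

lemma mem_relMod {F G : ℂ[X]} {v : Fin 4 → ℂ[X]} :
    v ∈ relMod F G ↔ F ∣ v 0 ∧ F ∣ v 1 ∧ G ∣ v 2 ∧ G ∣ v 3 := by
  simp [relMod, Submodule.mem_pi, Fin.forall_fin_succ, Ideal.mem_span_singleton]

lemma finrank_relMod (F G : ℂ[X]) (hF : F ≠ 0) (hG : G ≠ 0) :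
    Module.finrank ℂ ((Fin 4 → ℂ[X]) ⧸ relMod F G) = 2 * (F.natDegree + G.natDegree) := by
  have e := (Submodule.quotientPi (R := ℂ[X]) (Ms := fun _ : Fin 4 => ℂ[X])
    fun i => Ideal.span {(![F, F, G, G] : Fin 4 → ℂ[X]) i}).restrictScalars ℂ
  have h0 : ∀ i, (![F, F, G, G] : Fin 4 → ℂ[X]) i ≠ 0 := by
    intro i; fin_cases i <;> simp [hF, hG]
  have : ∀ i, Module.Finite ℂ (ℂ[X] ⧸ Ideal.span {(![F, F, G, G] : Fin 4 → ℂ[X]) i}) :=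
    fun i => (AdjoinRoot.powerBasis (h0 i)).finite
  refine e.finrank_eq.trans ?_
  rw [Module.finrank_pi_fintype]
  simp only [finrank_quotient_span_eq_natDegree]
  simp [Fin.sum_univ_succ]
  ring

/-- Every vector is the combination of the images of the first basis vector under
`1, α, β - λzα, αβ - λδz` with its own coordinates as coefficients. -/
lemma basis_expansion (δ l μ : ℂ) (v : Fin 4 → ℂ[X]) :
    v 0 • ![1, 0, 0, 0] + v 1 • opA δ ![1, 0, 0, 0] +
      v 2 • (opB δ l μ ![1, 0, 0, 0] - l • (X : ℂ[X]) • opA δ ![1, 0, 0, 0]) +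
      v 3 • (opA δ (opB δ l μ ![1, 0, 0, 0]) - (l * δ) • (X : ℂ[X]) • ![1, 0, 0, 0]) = v := by
  refine vec_ext ?_ ?_ ?_ ?_ <;>
    simp only [Pi.add_apply, Pi.sub_apply, Pi.smul_apply, opA_zero, opA_one, opA_two, opA_three,
      opB_zero, opB_one, opB_two, opB_three, Matrix.cons_val, smul_eq_C_mul, smul_eq_mul,
      C_mul] <;>
    ring

section Quotient

variable {δ l μ : ℂ} {F G : ℂ[X]}

lemma opA_mem (v : Fin 4 → ℂ[X]) (hv : v ∈ relMod F G) : opA δ v ∈ relMod F G := by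
  rw [mem_relMod] at hv ⊢
  obtain ⟨h0, h1, h2, h3⟩ := hv
  exact ⟨h1.mul_left _, h0, h3.mul_left _, h2⟩

/-- The two divisibility conditions are what is needed for `opB` to preserve `relMod F G`. -/
lemma opB_mem (hGF : G ∣ F) (hFG : F ∣ G * (C δ - C (l * μ) * X ^ 2))
    (v : Fin 4 → ℂ[X]) (hv : v ∈ relMod F G) : opB δ l μ v ∈ relMod F G := by
  rw [mem_relMod] at hv ⊢
  obtain ⟨h0, h1, ⟨c, hc⟩, ⟨d, hd⟩⟩ := hv
  refine ⟨dvd_add (h1.mul_left _) ?_, dvd_add (h0.mul_left _) ?_,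
    dvd_add (hGF.trans h0) ((Dvd.intro d hd.symm).mul_left _),
    dvd_add ((hGF.trans h1).neg_right) ((Dvd.intro c hc.symm).mul_left _)⟩
  · rw [hc]; convert hFG.mul_right c using 1; ring
  · rw [hd]; convert hFG.mul_right (-d) using 1; ring

/-- The operator induced by `opA` on the model module. -/
def barA (δ : ℂ) (F G : ℂ[X]) : Module.End ℂ[X] ((Fin 4 → ℂ[X]) ⧸ relMod F G) :=
  Submodule.mapQ _ _ (opA δ) fun v hv => opA_mem v hv

/-- The operator induced by `opB` on the model module. -/
def barB (hGF : G ∣ F) (hFG : F ∣ G * (C δ - C (l * μ) * X ^ 2)) :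
    Module.End ℂ[X] ((Fin 4 → ℂ[X]) ⧸ relMod F G) :=
  Submodule.mapQ _ _ (opB δ l μ) fun v hv => opB_mem hGF hFG v hv

lemma barA_mk (v : Fin 4 → ℂ[X]) :
    barA δ F G (Submodule.Quotient.mk v) = Submodule.Quotient.mk (opA δ v) := rfl

lemma barB_mk (hGF : G ∣ F) (hFG : F ∣ G * (C δ - C (l * μ) * X ^ 2)) (v : Fin 4 → ℂ[X]) :
    barB hGF hFG (Submodule.Quotient.mk v) = Submodule.Quotient.mk (opB δ l μ v) := rfl

lemma barA_sq : barA δ F G * barA δ F G = algebraMap ℂ _ δ := by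
  refine LinearMap.ext fun x => ?_
  induction x using Submodule.Quotient.induction_on with | _ v => ?_
  rw [Module.End.mul_apply, barA_mk, barA_mk, Module.algebraMap_end_apply,
    ← Submodule.Quotient.mk_smul]
  congr 1
  ext1 i
  fin_cases i <;> simp [opA, smul_eq_C_mul]

lemma barB_sq (hGF : G ∣ F) (hFG : F ∣ G * (C δ - C (l * μ) * X ^ 2)) :
    barB hGF hFG * barB hGF hFG = algebraMap ℂ _ δ := by
  refine LinearMap.ext fun x => ?_
  induction x using Submodule.Quotient.induction_on with | _ v => ?_
  rw [Module.End.mul_apply, barB_mk, barB_mk, Module.algebraMap_end_apply,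
    ← Submodule.Quotient.mk_smul]
  congr 1
  refine vec_ext ?_ ?_ ?_ ?_ <;>
    simp [opB_zero, opB_one, opB_two, opB_three, smul_eq_C_mul] <;> ring

/-- On the model module `αβ + βα` is multiplication by the polynomial variable. -/
lemma barZ (hμ : μ = 1 - l * δ) (hGF : G ∣ F) (hFG : F ∣ G * (C δ - C (l * μ) * X ^ 2)) :
    barA δ F G * barB hGF hFG + barB hGF hFG * barA δ F G = algebraMap ℂ[X] _ X := by
  refine LinearMap.ext fun x => ?_
  induction x using Submodule.Quotient.induction_on with | _ v => ?_
  rw [LinearMap.add_apply, Module.End.mul_apply, Module.End.mul_apply, barA_mk, barB_mk, barB_mk,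
    barA_mk, Module.algebraMap_end_apply, ← Submodule.Quotient.mk_smul,
    ← Submodule.Quotient.mk_add]
  congr 1
  refine vec_ext ?_ ?_ ?_ ?_ <;>
    simp [opA_zero, opA_one, opA_two, opA_three, opB_zero, opB_one, opB_two, opB_three, hμ] <;>
    ring

/-! ### The dimension criterion -/

/-- An algebra generated by `α, β` with `α² = β² = δ` which acts on the model module, and in which
the defining relations of the model module hold for the basis `1, α, β - λzα, αβ - λδz`, is
isomorphic as a vector space to the model module. -/
theorem finrank_of_model {R : Type*} [Ring R] [Algebra ℂ R] (α β : R)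
    (hμ : μ = 1 - l * δ) (hGF : G ∣ F) (hFG : F ∣ G * (C δ - C (l * μ) * X ^ 2))
    (hF0 : F ≠ 0) (hG0 : G ≠ 0)
    (hα : α * α = algebraMap ℂ R δ) (hβ : β * β = algebraMap ℂ R δ)
    (hgen : Algebra.adjoin ℂ {α, β} = ⊤)
    (hF : aeval (α * β + β * α) F = 0)
    (hG2 : aeval (α * β + β * α) G * (β - l • ((α * β + β * α) * α)) = 0)
    (hG3 : aeval (α * β + β * α) G * (α * β - (l * δ) • (α * β + β * α)) = 0)
    (ρ : R →ₐ[ℂ] Module.End ℂ[X] ((Fin 4 → ℂ[X]) ⧸ relMod F G))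
    (hρα : ρ α = barA δ F G) (hρβ : ρ β = barB hGF hFG) :
    Module.finrank ℂ R = 2 * (F.natDegree + G.natDegree) := by
  set z := α * β + β * α with hz
  rw [Algebra.algebraMap_eq_smul_one] at hα hβ
  have hzα : α * z = z * α := by
    rw [hz, mul_add, add_mul, ← mul_assoc, hα, mul_assoc β α α, hα, mul_assoc, add_comm]
    simp
  have hzβ : β * z = z * β := by
    rw [hz, mul_add, add_mul, ← mul_assoc β β α, hβ, mul_assoc α β β, hβ, mul_assoc, add_comm]
    simp
  have hcα : ∀ f : ℂ[X], α * aeval z f = aeval z f * α := by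
    intro f
    have h := Algebra.commute_of_mem_adjoin_singleton_of_commute
      (aeval_mem_adjoin_singleton ℂ z (p := f)) (show Commute α z from hzα)
    exact h
  have hcβ : ∀ f : ℂ[X], β * aeval z f = aeval z f * β := by
    intro f
    have h := Algebra.commute_of_mem_adjoin_singleton_of_commute
      (aeval_mem_adjoin_singleton ℂ z (p := f)) (show Commute β z from hzβ)
    exact h
  have hcz : ∀ f : ℂ[X], aeval z f * z = z * aeval z f := by
    intro f
    have h : aeval z (f * X) = aeval z (X * f) := by rw [mul_comm]
    simpa using h
  set E2 := β - l • (z * α) with hE2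
  set E3 := α * β - (l * δ) • z with hE3
  -- The coordinate map sends a vector of polynomials to the corresponding combination.
  let ψ : (Fin 4 → ℂ[X]) →ₗ[ℂ] R :=
    { toFun := fun v => aeval z (v 0) + aeval z (v 1) * α + aeval z (v 2) * E2 + aeval z (v 3) * E3
      map_add' := fun u v => by simp [add_mul]; abel
      map_smul' := fun c v => by simp [smul_add] }
  have hψ : ∀ v, ψ v =
    aeval z (v 0) + aeval z (v 1) * α + aeval z (v 2) * E2 + aeval z (v 3) * E3 := fun v => rfl
  have haE2 : α * E2 = E3 := by
    rw [hE2, hE3, mul_sub, mul_smul_comm, ← mul_assoc, hzα, mul_assoc, hα]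
    simp [smul_smul]
  have haE3 : α * E3 = δ • E2 := by
    rw [← haE2, ← mul_assoc, hα]; simp
  have hβα : β * α = μ • z - E3 := by
    rw [hE3, hμ, hz, sub_smul]; simp
  have hβ' : β = E2 + l • (z * α) := by rw [hE2]; abel
  have hbE2 : β * E2 = δ • 1 - (l * μ) • (z * z) + l • (z * E3) := by
    rw [hE2, mul_sub, hβ, mul_smul_comm, ← mul_assoc, hzβ, mul_assoc, hβα, mul_sub, smul_sub,
      mul_smul_comm, smul_smul]
    abel
  have hbE3 : β * E3 = μ • (z * E2) + (l * μ) • (z * z * α) - δ • α := by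
    have h1 : β * (α * β) = z * β - δ • α := by
      rw [hz, add_mul, mul_assoc α β β, hβ, mul_assoc]; simp
    rw [hE3, mul_sub, h1, mul_smul_comm, hzβ]
    have h2 : z * β = z * E2 + l • (z * z * α) := by
      conv_lhs => rw [hβ']
      rw [mul_add, mul_smul_comm, mul_assoc]
    rw [h2, hμ]
    module
  have hψA : ∀ v, ψ (opA δ v) = α * ψ v := by
    intro v
    simp only [hψ, opA, LinearMap.coe_mk, AddHom.coe_mk, mul_add, ← mul_assoc, hcα]
    simp only [mul_assoc, hα, haE2, haE3]
    simp [Algebra.algebraMap_eq_smul_one]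
    abel
  have hψB : ∀ v, ψ (opB δ l μ v) = β * ψ v := by
    intro v
    simp only [hψ, opB, LinearMap.coe_mk, AddHom.coe_mk, mul_add, ← mul_assoc, hcβ]
    simp only [mul_assoc, hbE2, hbE3, hβα]
    rw [hβ']
    have hp : ∀ (f : ℂ[X]) (y : R), aeval z f * (z * y) = z * (aeval z f * y) := by
      intro f y
      rw [← mul_assoc, ← mul_assoc, hcz]
    simp only [Matrix.cons_val, map_add, map_mul, map_sub, map_neg, aeval_X, aeval_C,
      Algebra.algebraMap_eq_smul_one, mul_add, mul_sub, add_mul, sub_mul, neg_mul,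
      smul_mul_assoc, mul_smul_comm, mul_assoc, one_mul, mul_one, hp, hcz, pow_two]
    module
  have hsurj : Function.Surjective ψ := by
    have key : ∀ r : R, ∀ v, ∃ w, ψ w = r * ψ v := by
      intro r
      have hr : r ∈ Algebra.adjoin ℂ {α, β} := hgen ▸ Algebra.mem_top
      induction hr using Algebra.adjoin_induction with
      | mem x hx =>
        rcases hx with rfl | rfl
        · exact fun v => ⟨_, hψA v⟩
        · exact fun v => ⟨_, hψB v⟩
      | algebraMap c => exact fun v => ⟨c • v, by rw [map_smul, Algebra.smul_def]⟩
      | add x y _ _ hx hy =>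
        intro v
        obtain ⟨w, hw⟩ := hx v
        obtain ⟨w', hw'⟩ := hy v
        exact ⟨w + w', by rw [map_add, hw, hw', add_mul]⟩
      | mul x y _ _ hx hy =>
        intro v
        obtain ⟨w, hw⟩ := hy v
        obtain ⟨w', hw'⟩ := hx w
        exact ⟨w', by rw [hw', hw, mul_assoc]⟩
    intro r
    obtain ⟨w, hw⟩ := key r ![1, 0, 0, 0]
    exact ⟨w, by rw [hw, hψ]; simp⟩
  have hρz : ρ z = algebraMap ℂ[X] _ X := by
    rw [hz, map_add, map_mul, map_mul, hρα, hρβ, barZ hμ]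
  have hρf : ∀ f : ℂ[X], ρ (aeval z f) = algebraMap ℂ[X] _ f := by
    intro f
    rw [← aeval_algHom_apply, hρz, Polynomial.aeval_algebraMap_apply, aeval_X_left_apply]
  -- Acting with `ψ v` on the first basis vector recovers the class of `v`.
  have hinv : ∀ v, ρ (ψ v) (Submodule.Quotient.mk ![1, 0, 0, 0]) = Submodule.Quotient.mk v := by
    intro v
    simp only [hψ, hE2, hE3, map_add, map_mul, map_sub, map_smul, hρf, hρz, hρα, hρβ]
    simp only [LinearMap.add_apply, LinearMap.sub_apply, LinearMap.smul_apply,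
      Module.End.mul_apply, Module.algebraMap_end_apply, barA_mk, barB_mk,
      ← Submodule.Quotient.mk_smul, ← Submodule.Quotient.mk_add, ← Submodule.Quotient.mk_sub]
    rw [basis_expansion]
  have hker : LinearMap.ker ψ = (relMod F G).restrictScalars ℂ := by
    ext v
    rw [LinearMap.mem_ker, Submodule.restrictScalars_mem]
    constructor
    · intro h
      rw [← Submodule.Quotient.mk_eq_zero, ← hinv, h]; simp
    · intro h
      obtain ⟨⟨f0, h0⟩, ⟨f1, h1⟩, ⟨f2, h2⟩, ⟨f3, h3⟩⟩ := mem_relMod.1 h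
      rw [hψ, h0, h1, mul_comm F, mul_comm F, h2, h3, mul_comm G, mul_comm G]
      simp only [map_mul, mul_assoc, hF, hG2, hG3]
      simp
  rw [← finrank_relMod F G hF0 hG0,
    ← (LinearMap.quotKerEquivOfSurjective ψ hsurj).finrank_eq, hker]
  exact (Submodule.Quotient.restrictScalarsEquiv ℂ (relMod F G)).finrank_eq

end Quotient
end Rank3

namespace Rank3

/-! ### The polynomial of `ab` -/

/-- For `n = 2 (j + 1)`, the indices `1, …, n` are grouped into the pairs `i, n - i` and the two
remaining ones `n / 2` and `n`. -/
lemma prod_split {M : Type*} [CommMonoid M] (f : ℕ → M) (j : ℕ) :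
    ∏ k ∈ Finset.Icc 1 (2 * (j + 1)), f k =
      (∏ i ∈ Finset.range j, f (i + 1) * f (2 * (j + 1) - (i + 1))) *
        (f (2 * (j + 1)) * f (j + 1)) := by
  have h1 : ∏ k ∈ Finset.Icc 1 (2 * (j + 1)), f k =
      ∏ k ∈ Finset.range (2 * (j + 1)), f (k + 1) := by
    rw [Finset.range_eq_Ico, Finset.prod_Ico_add' f 0 (2 * (j + 1)) 1]
    rfl
  have h2 : ∏ i ∈ Finset.range j, f (2 * (j + 1) - (i + 1)) =
      ∏ i ∈ Finset.range j, f (j + 1 + i + 1) := by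
    rw [← Finset.prod_range_reflect]
    refine Finset.prod_congr rfl fun i hi => ?_
    have := Finset.mem_range.1 hi
    congr 1
    omega
  rw [h1, Finset.prod_mul_distrib, h2, show 2 * (j + 1) = (j + 1) + j + 1 by ring,
    Finset.prod_range_succ, Finset.prod_range_add, Finset.prod_range_succ]
  simp only [mul_assoc, mul_comm, mul_left_comm]

/-- The product of the factors `X - (t i + t (n - i))` over `1 ≤ i < n / 2`, for `n = 2 (j + 1)`. -/
def pairPoly (j : ℕ) (t : ℕ → ℂ) : ℂ[X] :=
  ∏ i ∈ Finset.range j, (X - C (t (i + 1) + t (2 * (j + 1) - (i + 1))))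

lemma natDegree_pairPoly (j : ℕ) (t : ℕ → ℂ) : (pairPoly j t).natDegree = j := by
  rw [pairPoly, natDegree_prod_of_monic _ _ fun i _ => monic_X_sub_C _]
  simp only [natDegree_X_sub_C, Finset.sum_const, Finset.card_range, smul_eq_mul, mul_one]

section Pairs

variable {R : Type*} [Ring R] [Algebra ℂ R]

/-- If `u u' = u' u = D` and `w = u + u'`, then a product of quadratic polynomials with constant
term `D` evaluates at `u` to a polynomial in `w` times a power of `u`. -/
lemma aeval_pairs {u u' w : R} {D : ℂ} (h1 : u * u' = algebraMap ℂ R D)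
    (h2 : u' * u = algebraMap ℂ R D) (hw : w = u + u') (j : ℕ) (t s : ℕ → ℂ)
    (h : ∀ i < j, t i * s i = D) :
    aeval u (∏ i ∈ Finset.range j, (X - C (t i)) * (X - C (s i))) =
      aeval w (∏ i ∈ Finset.range j, (X - C (t i + s i))) * u ^ j := by
  have hc : Commute u w := by
    rw [hw]; exact (Commute.refl u).add_right (h1.trans h2.symm)
  induction j with
  | zero => simp
  | succ j ih =>
    rw [Finset.prod_range_succ, Finset.prod_range_succ, map_mul (aeval w), map_mul (aeval u) _ (_ * _),
      ih fun i hi => h i (by omega)]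
    have hq : aeval u ((X - C (t j)) * (X - C (s j))) = aeval w (X - C (t j + s j)) * u := by
      have h3 : u' * u = algebraMap ℂ R (t j * s j) := by rw [h j (by omega), h2]
      have h4 := Algebra.commutes (s j) u
      simp only [map_mul, map_sub, aeval_X, aeval_C, map_add, hw] at h3 ⊢
      simp only [sub_mul, mul_sub, add_mul, h3, ← h4]
      abel
    have hc' : Commute (u ^ j) (aeval w (X - C (t j + s j))) := by
      simp only [map_sub, aeval_X, aeval_C]
      exact (hc.pow_left j).sub_right (Algebra.commute_algebraMap_right _ _)
    rw [hq, pow_succ, mul_assoc, ← mul_assoc (u ^ j), hc'.eq]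
    simp only [mul_assoc]

lemma aeval_prod_split {u u' w : R} {D : ℂ} (h1 : u * u' = algebraMap ℂ R D)
    (h2 : u' * u = algebraMap ℂ R D) (hw : w = u + u') (j : ℕ) (t : ℕ → ℂ)
    (h : ∀ i < j, t (i + 1) * t (2 * (j + 1) - (i + 1)) = D) :
    aeval u (∏ k ∈ Finset.Icc 1 (2 * (j + 1)), (X - C (t k))) =
      aeval w (pairPoly j t) * u ^ j * ((u - algebraMap ℂ R (t (2 * (j + 1)))) *
        (u - algebraMap ℂ R (t (j + 1)))) := by
  rw [prod_split, map_mul, aeval_pairs h1 h2 hw j (fun i => t (i + 1))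
    (fun i => t (2 * (j + 1) - (i + 1))) h, pairPoly]
  simp

lemma isUnit_of_mul_algebraMap {u u' : R} {D : ℂ} (hD : D ≠ 0)
    (h1 : u * u' = algebraMap ℂ R D) (h2 : u' * u = algebraMap ℂ R D) : IsUnit u := by
  rw [Algebra.algebraMap_eq_smul_one] at h1 h2
  refine ⟨⟨u, D⁻¹ • u', ?_, ?_⟩, rfl⟩
  · rw [mul_smul_comm, h1, smul_smul, inv_mul_cancel₀ hD, one_smul]
  · rw [smul_mul_assoc, h2, smul_smul, inv_mul_cancel₀ hD, one_smul]

/-- For `α² = β² = 0`, the polynomial relation on `(x + α)(y + β)` is, up to a unit, a polynomial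
relation on `αβ + βα`. -/
lemma aeval_unipotent {α β : R} {x y : ℂ} (hx : x ≠ 0) (hy : y ≠ 0) (hα : α * α = 0)
    (hβ : β * β = 0) (j : ℕ) (t : ℕ → ℂ)
    (h : ∀ i < j, t (i + 1) * t (2 * (j + 1) - (i + 1)) = (x * y) ^ 2)
    (hn : t (2 * (j + 1)) = x * y) (hm : t (j + 1) = x * y) :
    ∃ v : R, IsUnit v ∧ aeval ((algebraMap ℂ R x + α) * (algebraMap ℂ R y + β))
      (∏ k ∈ Finset.Icc 1 (2 * (j + 1)), (X - C (t k))) =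
      aeval (α * β + β * α) ((pairPoly j t).comp (X + C (2 * (x * y))) * X) * v := by
  set u := (algebraMap ℂ R x + α) * (algebraMap ℂ R y + β) with hu
  set u' := (algebraMap ℂ R y - β) * (algebraMap ℂ R x - α) with hu'
  have hb : (algebraMap ℂ R y + β) * (algebraMap ℂ R y - β) = algebraMap ℂ R (y ^ 2) := by
    simp only [Algebra.algebraMap_eq_smul_one]
    simp only [add_mul, mul_sub, smul_mul_assoc, mul_smul_comm, one_mul, mul_one, hβ]
    module
  have hb' : (algebraMap ℂ R y - β) * (algebraMap ℂ R y + β) = algebraMap ℂ R (y ^ 2) := by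
    simp only [Algebra.algebraMap_eq_smul_one]
    simp only [mul_add, sub_mul, smul_mul_assoc, mul_smul_comm, one_mul, mul_one, hβ]
    module
  have ha : (algebraMap ℂ R x + α) * (algebraMap ℂ R x - α) = algebraMap ℂ R (x ^ 2) := by
    simp only [Algebra.algebraMap_eq_smul_one]
    simp only [add_mul, mul_sub, smul_mul_assoc, mul_smul_comm, one_mul, mul_one, hα]
    module
  have ha' : (algebraMap ℂ R x - α) * (algebraMap ℂ R x + α) = algebraMap ℂ R (x ^ 2) := by
    simp only [Algebra.algebraMap_eq_smul_one]
    simp only [mul_add, sub_mul, smul_mul_assoc, mul_smul_comm, one_mul, mul_one, hα]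
    module
  have h1 : u * u' = algebraMap ℂ R ((x * y) ^ 2) := by
    rw [hu, hu', mul_assoc, ← mul_assoc (algebraMap ℂ R y + β), hb, Algebra.commutes, ← mul_assoc,
      ha, ← map_mul, mul_pow]
  have h2 : u' * u = algebraMap ℂ R ((x * y) ^ 2) := by
    rw [hu, hu', mul_assoc, ← mul_assoc (algebraMap ℂ R x - α), ha', Algebra.commutes, ← mul_assoc,
      hb', ← map_mul, mul_pow, mul_comm]
  have hw : α * β + β * α + algebraMap ℂ R (2 * (x * y)) = u + u' := by
    simp only [hu, hu', Algebra.algebraMap_eq_smul_one]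
    simp only [add_mul, mul_add, sub_mul, mul_sub, smul_mul_assoc, mul_smul_comm, one_mul, mul_one]
    module
  have hunit := isUnit_of_mul_algebraMap (pow_ne_zero 2 (mul_ne_zero hx hy)) h1 h2
  refine ⟨u ^ (j + 1), hunit.pow _, ?_⟩
  rw [aeval_prod_split h1 h2 hw j t h, hn, hm, map_mul (aeval _) (comp _ _), aeval_comp]
  -- The two remaining factors both equal `u - xy`, and `(u - xy)² = z u`.
  have hq : (u - algebraMap ℂ R (x * y)) * (u - algebraMap ℂ R (x * y)) =
      (α * β + β * α) * u := by
    rw [eq_sub_of_add_eq hw]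
    simp only [sub_mul, mul_sub, add_mul, h2]
    simp only [Algebra.algebraMap_eq_smul_one, smul_mul_assoc, mul_smul_comm, one_mul, mul_one]
    module
  have hcz : Commute (u ^ j) (α * β + β * α) := by
    rw [eq_sub_of_add_eq hw]
    exact (((Commute.refl u).add_right (h1.trans h2.symm)).sub_right
      (Algebra.commute_algebraMap_right _ _)).pow_left j
  rw [hq, mul_assoc, ← mul_assoc (u ^ j), hcz.eq]
  simp [mul_assoc, pow_succ]

/-- For `α² = β² = 1`, the polynomial relation on `(xα)(yβ)` is, up to a unit, `αβ - z/2` times a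
polynomial in `z = αβ + βα`. -/
lemma aeval_involutive {α β : R} {x y : ℂ} (hx : x ≠ 0) (hy : y ≠ 0) (hα : α * α = 1)
    (hβ : β * β = 1) (j : ℕ) (t : ℕ → ℂ)
    (h : ∀ i < j, t (i + 1) * t (2 * (j + 1) - (i + 1)) = (x * y) ^ 2)
    (hn : t (2 * (j + 1)) = x * y) (hm : t (j + 1) = -(x * y)) :
    ∃ v : R, IsUnit v ∧ aeval ((x • α) * (y • β))
      (∏ k ∈ Finset.Icc 1 (2 * (j + 1)), (X - C (t k))) =
      aeval (α * β + β * α) ((pairPoly j t).comp (C (x * y) * X)) *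
        (α * β - (1 / 2 : ℂ) • (α * β + β * α)) * v := by
  set u := (x • α) * (y • β) with hu
  set u' := (y • β) * (x • α) with hu'
  have h1 : u * u' = algebraMap ℂ R ((x * y) ^ 2) := by
    simp only [hu, hu', smul_mul_assoc, mul_smul_comm]
    rw [mul_assoc, ← mul_assoc β, hβ, one_mul, hα, Algebra.algebraMap_eq_smul_one]
    module
  have h2 : u' * u = algebraMap ℂ R ((x * y) ^ 2) := by
    simp only [hu, hu', smul_mul_assoc, mul_smul_comm]
    rw [mul_assoc, ← mul_assoc α, hα, one_mul, hβ, Algebra.algebraMap_eq_smul_one]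
    module
  have hw : algebraMap ℂ R (x * y) * (α * β + β * α) = u + u' := by
    simp only [hu, hu', smul_mul_assoc, mul_smul_comm, Algebra.algebraMap_eq_smul_one, one_mul]
    module
  have hunit := isUnit_of_mul_algebraMap (pow_ne_zero 2 (mul_ne_zero hx hy)) h1 h2
  have h2xy : (2 * (x * y) : ℂ) ≠ 0 := mul_ne_zero two_ne_zero (mul_ne_zero hx hy)
  refine ⟨algebraMap ℂ R (2 * (x * y)) * u ^ (j + 1),
    ((IsUnit.mk0 _ h2xy).map (algebraMap ℂ R)).mul (hunit.pow _), ?_⟩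
  rw [aeval_prod_split h1 h2 hw j t h, hn, hm, aeval_comp]
  -- The two remaining factors give `u² - (xy)² = (u - u') u`.
  have hq : (u - algebraMap ℂ R (x * y)) * (u - algebraMap ℂ R (-(x * y))) = (u - u') * u := by
    simp only [sub_mul, mul_sub, h2]
    simp only [Algebra.algebraMap_eq_smul_one, smul_mul_assoc, mul_smul_comm, one_mul, mul_one]
    module
  have hd : u - u' =
      (α * β - (1 / 2 : ℂ) • (α * β + β * α)) * algebraMap ℂ R (2 * (x * y)) := by
    simp only [hu, hu', smul_mul_assoc, mul_smul_comm, Algebra.algebraMap_eq_smul_one, mul_one]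
    module
  have hcz : Commute (u ^ j) (u - u') :=
    ((Commute.refl u).sub_right (h1.trans h2.symm)).pow_left j
  rw [hq, mul_assoc, ← mul_assoc (u ^ j), hcz.eq, hd]
  simp [mul_assoc, pow_succ]

end Pairs

/-! ### The presented algebra -/

section Presentation

variable {p q r : ℕ} {t12 t23 t13 : ℕ → ℂ}

/-- The image of the generator `a` in the quotient. -/
def qa (p q r : ℕ) (t12 t23 t13 : ℕ → ℂ) : Aplus p q r t12 t23 t13 :=
  RingQuot.mkAlgHom ℂ (Rel p q r t12 t23 t13) a

/-- The image of the generator `b` in the quotient. -/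
def qb (p q r : ℕ) (t12 t23 t13 : ℕ → ℂ) : Aplus p q r t12 t23 t13 :=
  RingQuot.mkAlgHom ℂ (Rel p q r t12 t23 t13) b

lemma qa_rel : aeval (qa p q r t12 t23 t13) (∏ k ∈ Finset.Icc 1 p, (X - C (t12 k))) = 0 := by
  rw [qa, aeval_algHom_apply, RingQuot.mkAlgHom_rel ℂ Rel.ra, map_zero]

lemma qb_rel : aeval (qb p q r t12 t23 t13) (∏ k ∈ Finset.Icc 1 q, (X - C (t23 k))) = 0 := by
  rw [qb, aeval_algHom_apply, RingQuot.mkAlgHom_rel ℂ Rel.rb, map_zero]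

lemma qab_rel : aeval (qa p q r t12 t23 t13 * qb p q r t12 t23 t13)
    (∏ k ∈ Finset.Icc 1 r, (X - C (t13 k))) = 0 := by
  rw [qa, qb, ← map_mul, aeval_algHom_apply, RingQuot.mkAlgHom_rel ℂ Rel.rab, map_zero]

lemma adjoin_qa_qb :
    Algebra.adjoin ℂ {qa p q r t12 t23 t13, qb p q r t12 t23 t13} = ⊤ := by
  have h : Set.range (FreeAlgebra.ι ℂ : Fin 2 → FreeAlgebra ℂ (Fin 2)) = {a, b} := by
    ext x
    simp [Fin.exists_fin_two, a, b, eq_comm]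
  have := congrArg (Subalgebra.map (RingQuot.mkAlgHom ℂ (Rel p q r t12 t23 t13)))
    (FreeAlgebra.adjoin_range_ι (R := ℂ) (X := Fin 2))
  rw [h, AlgHom.map_adjoin, Set.image_pair, Algebra.map_top] at this
  rw [qa, qb, this]
  exact (AlgHom.range_eq_top _).2 (RingQuot.mkAlgHom_surjective ℂ _)

/-- The universal property of the presentation. -/
lemma exists_lift {B : Type*} [Ring B] [Algebra ℂ B] (a' b' : B)
    (h1 : aeval a' (∏ k ∈ Finset.Icc 1 p, (X - C (t12 k))) = 0)
    (h2 : aeval b' (∏ k ∈ Finset.Icc 1 q, (X - C (t23 k))) = 0)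
    (h3 : aeval (a' * b') (∏ k ∈ Finset.Icc 1 r, (X - C (t13 k))) = 0) :
    ∃ ρ : Aplus p q r t12 t23 t13 →ₐ[ℂ] B,
      ρ (qa p q r t12 t23 t13) = a' ∧ ρ (qb p q r t12 t23 t13) = b' := by
  let f : FreeAlgebra ℂ (Fin 2) →ₐ[ℂ] B := FreeAlgebra.lift ℂ ![a', b']
  have fa : f a = a' := by simp [f, a]
  have fb : f b = b' := by simp [f, b]
  refine ⟨RingQuot.liftAlgHom ℂ ⟨f, ?_⟩, ?_, ?_⟩
  · intro x y hxy
    induction hxy with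
    | ra => rw [← aeval_algHom_apply, fa, h1, map_zero]
    | rb => rw [← aeval_algHom_apply, fb, h2, map_zero]
    | rab => rw [← aeval_algHom_apply, map_mul, fa, fb, h3, map_zero]
  · rw [qa, RingQuot.liftAlgHom_mkAlgHom_apply, fa]
  · rw [qb, RingQuot.liftAlgHom_mkAlgHom_apply, fb]

lemma aeval_quadratic {B : Type*} [Ring B] [Algebra ℂ B] (u : B) (t : ℕ → ℂ) :
    aeval u (∏ k ∈ Finset.Icc 1 2, (X - C (t k))) =
      (u - algebraMap ℂ B (t 1)) * (u - algebraMap ℂ B (t 2)) := by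
  rw [show Finset.Icc 1 2 = {1, 2} from rfl, Finset.prod_pair (by norm_num)]
  simp

end Presentation

end Rank3

namespace Rank3

/-! ### The two families of parameters -/

section Cases

variable {j : ℕ} {t12 t23 t13 : ℕ → ℂ}

/-- Double roots: `a - x` and `b - y` square to zero, and `δ = λ = 0`, `F = G` in the model. -/
lemma finrank_unipotent {x y : ℂ} (hx : x ≠ 0) (hy : y ≠ 0)
    (hx1 : t12 1 = x) (hx2 : t12 2 = x) (hy1 : t23 1 = y) (hy2 : t23 2 = y)
    (hn : t13 (2 * (j + 1)) = x * y) (hm : t13 (j + 1) = x * y)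
    (h : ∀ i < j, t13 (i + 1) * t13 (2 * (j + 1) - (i + 1)) = (x * y) ^ 2) :
    Module.finrank ℂ (Aplus 2 2 (2 * (j + 1)) t12 t23 t13) = 2 * (2 * (j + 1)) := by
  set G : ℂ[X] := (pairPoly j t13).comp (X + C (2 * (x * y))) * X with hG
  have hcomp : ((pairPoly j t13).comp (X + C (2 * (x * y)))).natDegree = j := by
    rw [natDegree_comp, natDegree_X_add_C, mul_one, natDegree_pairPoly]
  have hmonic : ((pairPoly j t13).comp (X + C (2 * (x * y)))).Monic :=
    (monic_prod_of_monic _ _ fun i _ => monic_X_sub_C _).comp_X_add_C _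
  have hGdeg : G.natDegree = j + 1 := by
    rw [hG, natDegree_mul_X hmonic.ne_zero, hcomp]
  have hG0 : G ≠ 0 := mul_ne_zero hmonic.ne_zero X_ne_zero
  have hFG : G ∣ G * (C (0 : ℂ) - C ((0 : ℂ) * 1) * X ^ 2) := Dvd.intro _ rfl
  set A := barA 0 G G with hA
  set B := barB (dvd_refl G) hFG with hB
  have hA2 : A * A = 0 := by rw [hA, barA_sq, map_zero]
  have hB2 : B * B = 0 := by rw [hB, barB_sq, map_zero]
  have hZ : A * B + B * A = algebraMap ℂ[X] _ X := barZ (by simp) (dvd_refl G) hFG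
  have hGz : aeval (A * B + B * A) G = 0 := by
    rw [hZ, Polynomial.aeval_algebraMap_apply, aeval_X_left_apply]
    refine LinearMap.ext fun w => ?_
    induction w using Submodule.Quotient.induction_on with | _ v => ?_
    rw [Module.algebraMap_end_apply, ← Submodule.Quotient.mk_smul, LinearMap.zero_apply,
      Submodule.Quotient.mk_eq_zero, mem_relMod]
    exact ⟨Dvd.intro _ rfl, Dvd.intro _ rfl, Dvd.intro _ rfl, Dvd.intro _ rfl⟩
  obtain ⟨ρ, hρa, hρb⟩ := exists_lift (p := 2) (q := 2) (r := 2 * (j + 1)) (t12 := t12)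
    (t23 := t23) (t13 := t13) (algebraMap ℂ _ x + A) (algebraMap ℂ _ y + B)
    (by rw [aeval_quadratic, hx1, hx2]; simpa using hA2)
    (by rw [aeval_quadratic, hy1, hy2]; simpa using hB2)
    (by
      obtain ⟨v, -, hv⟩ := aeval_unipotent hx hy hA2 hB2 j t13 h hn hm
      rw [hv, hGz, zero_mul])
  set a' := qa 2 2 (2 * (j + 1)) t12 t23 t13 with ha'
  set b' := qb 2 2 (2 * (j + 1)) t12 t23 t13 with hb'
  obtain ⟨α, hα⟩ : ∃ α, α = a' - algebraMap ℂ _ x := ⟨_, rfl⟩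
  obtain ⟨β, hβ⟩ : ∃ β, β = b' - algebraMap ℂ _ y := ⟨_, rfl⟩
  have hα2 : α * α = 0 := by
    have := qa_rel (p := 2) (q := 2) (r := 2 * (j + 1)) (t12 := t12) (t23 := t23) (t13 := t13)
    rwa [aeval_quadratic, hx1, hx2, ← ha', ← hα] at this
  have hβ2 : β * β = 0 := by
    have := qb_rel (p := 2) (q := 2) (r := 2 * (j + 1)) (t12 := t12) (t23 := t23) (t13 := t13)
    rwa [aeval_quadratic, hy1, hy2, ← hb', ← hβ] at this
  have haα : a' = algebraMap ℂ _ x + α := by rw [hα]; abel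
  have hbβ : b' = algebraMap ℂ _ y + β := by rw [hβ]; abel
  have hGA : aeval (α * β + β * α) G = 0 := by
    obtain ⟨v, hv, hv'⟩ := aeval_unipotent hx hy hα2 hβ2 j t13 h hn hm
    have := qab_rel (p := 2) (q := 2) (r := 2 * (j + 1)) (t12 := t12) (t23 := t23) (t13 := t13)
    rw [← ha', ← hb', haα, hbβ, hv'] at this
    exact hv.mul_left_eq_zero.1 this
  have hgen : Algebra.adjoin ℂ {α, β} = ⊤ := by
    rw [eq_top_iff, ← adjoin_qa_qb, Algebra.adjoin_le_iff]
    rintro w (rfl | rfl)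
    · rw [← ha', haα]
      exact add_mem (algebraMap_mem _ _) (Algebra.subset_adjoin (by simp))
    · rw [← hb', hbβ]
      exact add_mem (algebraMap_mem _ _) (Algebra.subset_adjoin (by simp))
  rw [finrank_of_model (l := 0) (μ := 1) α β (by simp) (dvd_refl G) hFG hG0 hG0
    (by rw [hα2, map_zero]) (by rw [hβ2, map_zero]) hgen hGA (by rw [hGA, zero_mul])
    (by rw [hGA, zero_mul]) ρ (by rw [hα, map_sub, hρa, AlgHom.commutes]; simp [hA])
    (by rw [hβ, map_sub, hρb, AlgHom.commutes]; simp [hB]), hGdeg]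
  ring

/-- Opposite roots: `x⁻¹ a` and `y⁻¹ b` are involutions, and `δ = 1`, `λ = 1 / 2`,
`F = (1 - X² / 4) G` in the model. -/
lemma finrank_involutive {x y : ℂ} (hx : x ≠ 0) (hy : y ≠ 0)
    (hx1 : t12 1 = x) (hx2 : t12 2 = -x) (hy1 : t23 1 = y) (hy2 : t23 2 = -y)
    (hn : t13 (2 * (j + 1)) = x * y) (hm : t13 (j + 1) = -(x * y))
    (h : ∀ i < j, t13 (i + 1) * t13 (2 * (j + 1) - (i + 1)) = (x * y) ^ 2) :
    Module.finrank ℂ (Aplus 2 2 (2 * (j + 1)) t12 t23 t13) = 2 * (2 * (j + 1)) := by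
  have hxy := mul_ne_zero hx hy
  set G : ℂ[X] := (pairPoly j t13).comp (C (x * y) * X) with hG
  have hlin : (C (x * y) * X : ℂ[X]).natDegree = 1 := natDegree_C_mul_X _ hxy
  have hGdeg : G.natDegree = j := by
    rw [hG, natDegree_comp, hlin, mul_one, natDegree_pairPoly]
  have hG0 : G ≠ 0 := by
    rw [hG, Ne, comp_eq_zero_iff]
    rintro (h0 | ⟨-, h0⟩)
    · exact (monic_prod_of_monic _ _ fun i _ => monic_X_sub_C _).ne_zero h0
    · rw [h0, natDegree_C] at hlin
      omega
  set Q : ℂ[X] := C (1 : ℂ) - C ((1 / 2 : ℂ) * (1 / 2)) * X ^ 2 with hQ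
  have hQdeg : Q.natDegree = 2 := by
    rw [hQ]
    compute_degree!
  have hQ0 : Q ≠ 0 := by
    rintro h0
    rw [h0, natDegree_zero] at hQdeg
    omega
  have hGF : G ∣ G * Q := Dvd.intro _ rfl
  have hFG : G * Q ∣ G * (C (1 : ℂ) - C ((1 / 2 : ℂ) * (1 / 2)) * X ^ 2) := dvd_refl _
  set A := barA 1 (G * Q) G with hA
  set B := barB hGF hFG with hB
  have hA2 : A * A = 1 := by rw [hA, barA_sq, map_one]
  have hB2 : B * B = 1 := by rw [hB, barB_sq, map_one]
  have hZ : A * B + B * A = algebraMap ℂ[X] _ X := barZ (by norm_num) hGF hFG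
  have hGz : aeval (A * B + B * A) G * (A * B - (1 / 2 : ℂ) • (A * B + B * A)) = 0 := by
    rw [hZ, Polynomial.aeval_algebraMap_apply, aeval_X_left_apply]
    refine LinearMap.ext fun w => ?_
    induction w using Submodule.Quotient.induction_on with | _ v => ?_
    rw [Module.End.mul_apply, Module.algebraMap_end_apply, LinearMap.sub_apply,
      LinearMap.smul_apply, Module.algebraMap_end_apply, Module.End.mul_apply, hA, hB, barB_mk,
      barA_mk, ← Submodule.Quotient.mk_smul, ← Submodule.Quotient.mk_smul,
      ← Submodule.Quotient.mk_sub, ← Submodule.Quotient.mk_smul, LinearMap.zero_apply,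
      Submodule.Quotient.mk_eq_zero, mem_relMod]
    refine ⟨Dvd.intro (-v 3) ?_, Dvd.intro (v 2) ?_, Dvd.intro _ rfl, Dvd.intro _ rfl⟩
    · simp only [Pi.smul_apply, Pi.sub_apply, opA_zero, opB_one, smul_eq_mul, smul_eq_C_mul, hQ,
        C_1]
      ring
    · simp only [Pi.smul_apply, Pi.sub_apply, opA_one, opB_zero, smul_eq_mul, smul_eq_C_mul, hQ,
        C_1]
      ring
  obtain ⟨ρ, hρa, hρb⟩ := exists_lift (p := 2) (q := 2) (r := 2 * (j + 1)) (t12 := t12)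
    (t23 := t23) (t13 := t13) (x • A) (y • B)
    (by
      rw [aeval_quadratic, hx1, hx2]
      simp only [Algebra.algebraMap_eq_smul_one, mul_sub, sub_mul, smul_mul_assoc, mul_smul_comm,
        hA2, one_mul, mul_one]
      module)
    (by
      rw [aeval_quadratic, hy1, hy2]
      simp only [Algebra.algebraMap_eq_smul_one, mul_sub, sub_mul, smul_mul_assoc, mul_smul_comm,
        hB2, one_mul, mul_one]
      module)
    (by
      obtain ⟨v, -, hv⟩ := aeval_involutive hx hy hA2 hB2 j t13 h hn hm
      rw [hv, hGz, zero_mul])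
  set a' := qa 2 2 (2 * (j + 1)) t12 t23 t13 with ha'
  set b' := qb 2 2 (2 * (j + 1)) t12 t23 t13 with hb'
  obtain ⟨α, hα⟩ : ∃ α, α = x⁻¹ • a' := ⟨_, rfl⟩
  obtain ⟨β, hβ⟩ : ∃ β, β = y⁻¹ • b' := ⟨_, rfl⟩
  have haα : a' = x • α := by rw [hα, smul_inv_smul₀ hx]
  have hbβ : b' = y • β := by rw [hβ, smul_inv_smul₀ hy]
  have hα2 : α * α = 1 := by
    have := qa_rel (p := 2) (q := 2) (r := 2 * (j + 1)) (t12 := t12) (t23 := t23) (t13 := t13)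
    rw [aeval_quadratic, hx1, hx2, ← ha', haα] at this
    have h2 : (x * x) • (α * α - 1) = 0 := by
      rw [← this]
      simp only [Algebra.algebraMap_eq_smul_one, mul_sub, sub_mul, smul_mul_assoc, mul_smul_comm,
        one_mul, mul_one]
      module
    exact sub_eq_zero.1 ((smul_eq_zero_iff_right (mul_ne_zero hx hx)).1 h2)
  have hβ2 : β * β = 1 := by
    have := qb_rel (p := 2) (q := 2) (r := 2 * (j + 1)) (t12 := t12) (t23 := t23) (t13 := t13)
    rw [aeval_quadratic, hy1, hy2, ← hb', hbβ] at this
    have h2 : (y * y) • (β * β - 1) = 0 := by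
      rw [← this]
      simp only [Algebra.algebraMap_eq_smul_one, mul_sub, sub_mul, smul_mul_assoc, mul_smul_comm,
        one_mul, mul_one]
      module
    exact sub_eq_zero.1 ((smul_eq_zero_iff_right (mul_ne_zero hy hy)).1 h2)
  have hG3 : aeval (α * β + β * α) G * (α * β - (1 / 2 : ℂ) • (α * β + β * α)) = 0 := by
    obtain ⟨v, hv, hv'⟩ := aeval_involutive hx hy hα2 hβ2 j t13 h hn hm
    have := qab_rel (p := 2) (q := 2) (r := 2 * (j + 1)) (t12 := t12) (t23 := t23) (t13 := t13)
    rw [← ha', ← hb', haα, hbβ, hv'] at this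
    exact hv.mul_left_eq_zero.1 this
  have hgen : Algebra.adjoin ℂ {α, β} = ⊤ := by
    rw [eq_top_iff, ← adjoin_qa_qb, Algebra.adjoin_le_iff]
    rintro w (rfl | rfl)
    · rw [← ha', haα]
      exact Subalgebra.smul_mem _ (Algebra.subset_adjoin (by simp)) _
    · rw [← hb', hbβ]
      exact Subalgebra.smul_mem _ (Algebra.subset_adjoin (by simp)) _
  have hαα : ∀ w, α * (α * w) = w := fun w => by rw [← mul_assoc, hα2, one_mul]
  have hββ : ∀ w, β * (β * w) = w := fun w => by rw [← mul_assoc, hβ2, one_mul]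
  -- `1 - z²/4` is minus the square of `αβ - z/2 = (αβ - βα)/2`.
  have hF : aeval (α * β + β * α) (G * Q) = 0 := by
    have hsq : aeval (α * β + β * α) Q =
        ((-1 : ℂ) • (α * β - (1 / 2 : ℂ) • (α * β + β * α))) *
          (α * β - (1 / 2 : ℂ) • (α * β + β * α)) := by
      simp only [hQ, map_sub, map_mul, aeval_X, aeval_C, Algebra.algebraMap_eq_smul_one,
        pow_two, mul_sub, sub_mul, mul_add, add_mul, smul_add, smul_mul_assoc, mul_smul_comm,
        one_mul, mul_one, mul_assoc, hαα, hββ, hα2, hβ2]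
      module
    rw [map_mul, hsq, ← mul_assoc, mul_smul_comm, hG3, smul_zero, zero_mul]
  have hG2 : aeval (α * β + β * α) G * (β - (1 / 2 : ℂ) • ((α * β + β * α) * α)) = 0 := by
    have hc : Commute (aeval (α * β + β * α) G) α :=
      (Algebra.commute_of_mem_adjoin_singleton_of_commute
        (aeval_mem_adjoin_singleton ℂ (α * β + β * α) (p := G))
        (show α * (α * β + β * α) = (α * β + β * α) * α by
          simp only [mul_add, add_mul, mul_assoc, hαα, hα2, mul_one, add_comm])).symm
    have hE : β - (1 / 2 : ℂ) • ((α * β + β * α) * α) =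
        α * (α * β - (1 / 2 : ℂ) • (α * β + β * α)) := by
      simp only [mul_sub, mul_smul_comm, mul_add, add_mul, mul_assoc, hαα, hα2, mul_one]
      module
    rw [hE, ← mul_assoc, hc.eq, mul_assoc, hG3, mul_zero]
  rw [finrank_of_model (δ := 1) (l := 1 / 2) (μ := 1 / 2) α β (by norm_num) hGF hFG
    (mul_ne_zero hG0 hQ0) hG0 (by rw [hα2, map_one]) (by rw [hβ2, map_one]) hgen hF hG2
    (by rw [mul_one]; exact hG3) ρ (by rw [hα, map_smul, hρa, inv_smul_smul₀ hx])
    (by rw [hβ, map_smul, hρb, inv_smul_smul₀ hy]), natDegree_mul hG0 hQ0, hGdeg, hQdeg]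
  ring

end Cases

end Rank3

/-- Lemma 4.1, case `(2,2,n)`, `n ≥ 2` even. -/
theorem lemma_4_1_22n_even (n : ℕ) (hn2 : 2 ≤ n) (hneven : Even n)
    (t12 t23 t13 : ℕ → ℂ)
    (h12 : ∀ k ∈ Finset.Icc 1 2, t12 k ≠ 0)
    (h23 : ∀ k ∈ Finset.Icc 1 2, t23 k ≠ 0)
    (h13 : ∀ k ∈ Finset.Icc 1 n, t13 k ≠ 0)
    (e1 : t12 2 * t23 2 = t13 n)
    (e2 : t12 1 * t23 1 = t13 n)
    (e3 : t12 2 * t23 1 = t13 (n / 2))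
    (e4 : t12 1 * t23 2 = t13 (n / 2))
    (e5 : ∀ i : ℕ, 1 ≤ i → i < n / 2 →
      t12 1 * t12 2 * t23 1 * t23 2 = t13 i * t13 (n - i)) :
    Module.finrank ℂ (Rank3.Aplus 2 2 n t12 t23 t13) = 2 * n := by
  obtain ⟨m, rfl⟩ := hneven
  obtain ⟨j, rfl⟩ : ∃ j, m = j + 1 := ⟨m - 1, by omega⟩
  have hhalf : (j + 1 + (j + 1)) / 2 = j + 1 := by omega
  rw [hhalf] at e3 e4 e5
  rw [← two_mul] at *
  have hx : t12 1 ≠ 0 := h12 1 (by simp)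
  have hx2 : t12 2 ≠ 0 := h12 2 (by simp)
  have hy : t23 1 ≠ 0 := h23 1 (by simp)
  have hy2 : t23 2 ≠ 0 := h23 2 (by simp)
  -- Multiplying the four relations in pairs gives `t12 1 = ± t12 2`.
  have hsq : t12 2 ^ 2 = t12 1 ^ 2 := by
    refine mul_right_cancel₀ (mul_ne_zero hy hy2) ?_
    linear_combination t12 2 * t23 1 * (e1 - e2) + t12 1 * t23 1 * (e3 - e4)
  have hD : t12 1 * t12 2 * t23 1 * t23 2 = (t12 1 * t23 1) ^ 2 := by
    linear_combination t12 1 * t23 1 * (e1 - e2)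
  have h : ∀ i < j, t13 (i + 1) * t13 (2 * (j + 1) - (i + 1)) = (t12 1 * t23 1) ^ 2 :=
    fun i hi => by rw [← e5 (i + 1) (by omega) (by omega), hD]
  rcases sq_eq_sq_iff_eq_or_eq_neg.1 hsq with hp | hp
  · have hq : t23 2 = t23 1 := by
      refine mul_left_cancel₀ hx2 ?_
      rw [e1, ← e2, hp]
    exact Rank3.finrank_unipotent hx hy rfl hp rfl hq e2.symm (by rw [← e3, hp]) h
  · have hq : t23 2 = -t23 1 := by
      refine mul_left_cancel₀ hx2 ?_
      rw [e1, ← e2, hp]; ring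
    exact Rank3.finrank_involutive hx hy rfl hp rfl hq e2.symm (by rw [← e3, hp]; ring) h
end
end
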